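/- Case F3: Let l be a prime with l ≡ 3 (mod 4) and l > 3, let r ≥ 1, and let N = 4 l^r. Suppose p ≡ 3 (mod 4), the multiplicative order of p modulo l^r is φ(l^r)/2, and f = φ(N)/2 (so f = φ(l^r)). Set h = h(Q(√-l)). If l ≡ 7 (mod 8), then G(χ) = (-1)^{(p+1)/4} p^{f/2}. If l ≡ 3 (mod 8), then there exist integers a, b with 4p^h = a² + l b² and a ≡ -2 p^{(l-1+2h)/4} (mod l) such that G(χ) = (-1)^{(p+1)/4} · p^{f/2 - h} · ((a + b √-l)/2)². -/

import Mathlib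

open Complex Polynomial IntermediateField

/-- The complex primitive `p`-th root of unity `exp(2πi/p)`. -/
noncomputable def zetaP (p : ℕ) : ℂ := Complex.exp (2 * Real.pi * Complex.I / p)

/-- The Gauss sum `G(χ^λ) = ∑_{x ∈ F, x ≠ 0} χ^λ(x) ζ_p^{T(x)}`, where
`T` is the trace map from `F` down to `ZMod p`. -/
noncomputable def gaussSumN (p : ℕ) {F : Type} [Field F] [Fintype F] [Algebra (ZMod p) F]
    (χ : MulChar F ℂ) (lam : ℕ) : ℂ :=
  letI : DecidableEq F := Classical.decEq F
  ∑ x ∈ Finset.univ.filter (fun x : F => x ≠ 0),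
    (χ ^ lam) x * zetaP p ^ (Algebra.trace (ZMod p) F x).val

/-- `√-m = i√m ∈ ℂ`. -/
noncomputable def sqrtNeg (m : ℕ) : ℂ := Real.sqrt m * Complex.I

theorem sqrtNeg_sq (m : ℕ) : sqrtNeg m ^ 2 = -(m : ℂ) := by
  have h : ((Real.sqrt m : ℝ) : ℂ) ^ 2 = ((m : ℝ) : ℂ) := by
    rw [← Complex.ofReal_pow, Real.sq_sqrt (by positivity)]
  simp only [sqrtNeg, mul_pow, Complex.I_sq, h]
  push_cast
  ring

theorem isIntegral_sqrtNeg (m : ℕ) : IsIntegral ℚ (sqrtNeg m) := by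
  refine ⟨X ^ 2 + C (m : ℚ), monic_X_pow_add_C _ (by norm_num), ?_⟩
  simp [sqrtNeg_sq]

/-- The class number `h(ℚ(√-m))` of the quadratic field `ℚ(√-m) ⊆ ℂ`. -/
noncomputable def classNumSqrtNeg (m : ℕ) : ℕ :=
  haveI : FiniteDimensional ℚ ℚ⟮sqrtNeg m⟯ :=
    IntermediateField.adjoin.finiteDimensional (isIntegral_sqrtNeg m)
  haveI : CharZero ℚ⟮sqrtNeg m⟯ :=
    charZero_of_injective_algebraMap (algebraMap ℚ ℚ⟮sqrtNeg m⟯).injective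
  haveI : NumberField ℚ⟮sqrtNeg m⟯ := ⟨⟩
  NumberField.classNumber ℚ⟮sqrtNeg m⟯

/-- `√p* = √p` if `p ≡ 1 (mod 4)` and `i√p` if `p ≡ 3 (mod 4)`. -/
noncomputable def sqrtPStar (p : ℕ) : ℂ :=
  if p % 4 = 1 then (Real.sqrt p : ℂ) else (Real.sqrt p : ℂ) * Complex.I

set_option linter.style.haveILetI false
set_option linter.unusedSectionVars false

section gs
variable (p : ℕ) [hpf : Fact p.Prime] (F : Type) [Field F] [Fintype F] [Algebra (ZMod p) F]

/-- The additive character of `F` given by the trace. -/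
noncomputable def trChar : AddChar F ℂ :=
  (ZMod.stdAddChar (N := p)).compAddMonoidHom (Algebra.trace (ZMod p) F).toAddMonoidHom

theorem trChar_apply (x : F) : trChar p F x = zetaP p ^ (Algebra.trace (ZMod p) F x).val := by
  have h : trChar p F x = ZMod.stdAddChar (Algebra.trace (ZMod p) F x) := rfl
  rw [h]
  have h2 : ((((Algebra.trace (ZMod p) F x).val : ℕ) : ℤ) : ZMod p) = Algebra.trace (ZMod p) F x := by
    simp
  conv_lhs => rw [← h2]
  rw [ZMod.stdAddChar_coe, zetaP, ← Complex.exp_nat_mul]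
  congr 1
  push_cast
  ring

variable {F}

theorem gaussSumN_eq (χ : MulChar F ℂ) (k : ℕ) :
    gaussSumN p χ k = gaussSum (χ ^ k) (trChar p F) := by
  classical
  unfold gaussSumN gaussSum
  simp only [trChar_apply]
  rw [Finset.sum_filter]
  refine Finset.sum_congr rfl fun x _ => ?_
  split_ifs with h
  · rfl
  · push Not at h
    subst h
    rw [MulChar.map_zero, zero_mul]

variable (F)

theorem ringChar_F : ringChar F = p := by
  haveI : CharP F p := charP_of_injective_algebraMap (algebraMap (ZMod p) F).injective p
  exact ringChar.eq F p ▸ rfl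

theorem trChar_ne_one : trChar p F ≠ 1 := by
  have hne : ∃ b : F, Algebra.trace (ZMod p) F b ≠ 0 := by
    by_contra! hf
    have := (traceForm_nondegenerate (ZMod p) F).1 1 (by
      intro y
      simp [Algebra.traceForm_apply, hf])
    exact one_ne_zero this
  obtain ⟨b, hb⟩ := hne
  intro h
  have h1 : trChar p F b = 1 := by rw [h]; rfl
  have h2 : ZMod.stdAddChar (Algebra.trace (ZMod p) F b) = 1 := h1
  rw [← (ZMod.stdAddChar (N := p)).map_zero_eq_one, ZMod.injective_stdAddChar.eq_iff] at h2
  exact hb h2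

theorem trChar_prim : (trChar p F).IsPrimitive := AddChar.IsPrimitive.of_ne_one (trChar_ne_one p F)

variable {F}

theorem trChar_frob (x : F) : trChar p F (x ^ p) = trChar p F x := by
  rw [trChar_apply, trChar_apply]
  have := Algebra.trace_eq_of_algEquiv (FiniteField.frobeniusAlgEquivOfAlgebraic (ZMod p) F) x
  rw [FiniteField.coe_frobeniusAlgEquivOfAlgebraic, ZMod.card] at this
  rw [this]

theorem frob_bij : Function.Bijective (fun x : F => x ^ p) := by
  have := (FiniteField.frobeniusAlgEquivOfAlgebraic (ZMod p) F).bijective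
  rwa [FiniteField.coe_frobeniusAlgEquivOfAlgebraic, ZMod.card] at this

theorem gauss_frob (χ : MulChar F ℂ) :
    gaussSum (χ ^ p) (trChar p F) = gaussSum χ (trChar p F) := by
  unfold gaussSum
  rw [← (frob_bij p (F := F)).sum_comp (fun x => χ x * trChar p F x)]
  refine Finset.sum_congr rfl fun x _ => ?_
  rw [trChar_frob, MulChar.pow_apply' _ hpf.out.ne_zero, map_pow]

theorem gauss_frob_pow (χ : MulChar F ℂ) (i : ℕ) :
    gaussSum (χ ^ (p ^ i)) (trChar p F) = gaussSum χ (trChar p F) := by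
  induction i with
  | zero => simp
  | succ i ih => rw [pow_succ, pow_mul, gauss_frob, ih]

theorem gauss_conj (χ : MulChar F ℂ) (h1 : χ (-1) = 1) :
    (starRingEnd ℂ) (gaussSum χ (trChar p F)) = gaussSum χ⁻¹ (trChar p F) := by
  have := star_gaussSum_eq χ (trChar p F)
  rw [starRingEnd_apply, this, ← mul_gaussSum_inv_eq_gaussSum χ⁻¹ (trChar p F),
    MulChar.inv_apply_eq_inv', h1]
  simp

theorem gauss_norm (χ : MulChar F ℂ) (h0 : χ ≠ 1) :
    gaussSum χ (trChar p F) * (starRingEnd ℂ) (gaussSum χ (trChar p F)) = Fintype.card F := by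
  rw [starRingEnd_apply, star_gaussSum_eq]
  exact gaussSum_mul_gaussSum_eq_card h0 (trChar_prim p F)

end gs

theorem exists_valSubring (p : ℕ) (hp : p.Prime) :
    ∃ A : ValuationSubring ℂ, A.valuation (p : ℂ) < 1 := by
  have hne : Ideal.span {((p : ℤ) : (Int.castRingHom ℂ).range)} ≠ ⊤ := by
    intro h
    rw [Ideal.span_singleton_eq_top] at h
    obtain ⟨u, hu⟩ := h.exists_right_inv
    obtain ⟨m, hm⟩ := u.2
    have h2 := congrArg (Subring.subtype _) hu
    simp only [map_mul, map_one, map_intCast] at h2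
    rw [Subring.subtype_apply, ← hm] at h2
    have h3 : ((p : ℤ)) * m = 1 := by
      have : (((p : ℤ) * m : ℤ) : ℂ) = ((1 : ℤ) : ℂ) := by push_cast; simpa using h2
      exact_mod_cast this
    have h4 : IsUnit (p : ℤ) := IsUnit.of_mul_eq_one _ h3
    exact (Nat.prime_iff_prime_int.mp hp).not_isUnit h4
  obtain ⟨B, _, hB⟩ := Ideal.image_subset_nonunits_valuationSubring _ hne
  refine ⟨B, ?_⟩
  have : (p : ℂ) ∈ B.nonunits := hB ⟨_, Ideal.mem_span_singleton_self _, by simp⟩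
  rwa [ValuationSubring.mem_nonunits_iff] at this

section val
variable (A : ValuationSubring ℂ)

theorem val_le_one_of_integral {x : ℂ} (hx : IsIntegral ℤ x) : A.valuation x ≤ 1 := by
  rw [ValuationSubring.valuation_le_one_iff]
  have h1 : IsIntegral A x := hx.tower_top
  obtain ⟨y, hy⟩ := IsIntegrallyClosed.isIntegral_iff.mp h1
  rw [← hy]; exact y.2

theorem val_root_unity {x : ℂ} {n : ℕ} (hn : n ≠ 0) (hx : x ^ n = 1) : A.valuation x = 1 := by
  have : A.valuation x ^ n = 1 := by rw [← map_pow, hx, map_one]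
  exact (pow_eq_one_iff.mp this).resolve_right hn

/-- The valuation of `p` is the `(p-1)`-th power of that of `ζ - 1`. -/
theorem val_p (p : ℕ) (hp : p.Prime) {ζ : ℂ} (hζ : IsPrimitiveRoot ζ p) :
    A.valuation (p : ℂ) = A.valuation (ζ - 1) ^ (p - 1) := by
  haveI : NeZero p := ⟨hp.ne_zero⟩
  have key : ∀ μ ν : ℂ, IsPrimitiveRoot μ p → IsPrimitiveRoot ν p →
      A.valuation (ν - 1) ≤ A.valuation (μ - 1) := by
    intro μ ν hμ hν
    obtain ⟨i, _, hi⟩ := hμ.eq_pow_of_pow_eq_one hν.pow_eq_one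
    rw [← hi, ← geom_sum_mul, map_mul]
    refine mul_le_of_le_one_left' (val_le_one_of_integral A ?_)
    refine IsIntegral.sum _ fun j _ => ?_
    exact (hμ.isIntegral hp.pos).pow j
  have h1 : (cyclotomic p ℂ).eval 1 = (p : ℂ) := by
    haveI := Fact.mk hp
    simp
  rw [cyclotomic_eq_prod_X_sub_primitiveRoots hζ, eval_prod] at h1
  rw [← h1, map_prod]
  have : ∀ μ ∈ primitiveRoots p ℂ, A.valuation ((X - C μ).eval 1) = A.valuation (ζ - 1) := by
    intro μ hμ
    rw [mem_primitiveRoots hp.pos] at hμ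
    rw [← (A.valuation).map_neg]
    simp only [eval_sub, eval_X, eval_C, neg_sub]
    exact le_antisymm (key _ _ hζ hμ) (key _ _ hμ hζ)
  rw [Finset.prod_congr rfl this, Finset.prod_const, hζ.card_primitiveRoots, Nat.totient_prime hp]

end val

theorem zetaP_prim (p : ℕ) (hp : p.Prime) : IsPrimitiveRoot (zetaP p) p := by
  have := Complex.isPrimitiveRoot_exp p hp.ne_zero
  exact this

section teich
variable (p : ℕ) [hpf : Fact p.Prime] (F : Type) [Field F] [Fintype F] [Algebra (ZMod p) F]
  (A : ValuationSubring ℂ)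

theorem exists_teich (hA : A.valuation (p : ℂ) < 1) :
    ∃ (E : Type) (_ : Field E) (ρ : A →+* E) (ι : F →+* E) (ω : MulChar F A),
      (∀ x, ρ (ω x) = ι x) ∧ (∀ a, ρ a = 0 ↔ A.valuation (a : ℂ) < 1) := by
  classical
  let k := IsLocalRing.ResidueField A
  let E := AlgebraicClosure k
  let ρ : A →+* E := (algebraMap k E).comp (IsLocalRing.residue A)
  have hρ : ∀ a, ρ a = 0 ↔ A.valuation (a : ℂ) < 1 := by
    intro a
    simp only [ρ, RingHom.comp_apply]
    rw [map_eq_zero_iff _ (algebraMap k E).injective, IsLocalRing.residue_eq_zero_iff,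
      ValuationSubring.valuation_lt_one_iff]
  have hpE : (p : E) = 0 := by
    have := (hρ (p : A)).mpr (by simpa using hA)
    simpa using this
  haveI hch : CharP E p := by
    rcases hpf.out.eq_one_or_self_of_dvd (ringChar E) (ringChar.dvd hpE) with h | h
    · have := ringChar.spec E 1
      rw [h] at this
      simp at this
    · exact ringChar.of_eq h
  letI : Algebra (ZMod p) E := ZMod.algebra E p
  let ι : F →ₐ[ZMod p] E := IsAlgClosed.lift
  -- the order
  obtain ⟨g, hg⟩ := IsCyclic.exists_generator (α := Fˣ)
  set n := Fintype.card Fˣ with hn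
  have hn0 : 0 < n := Fintype.card_pos
  haveI : NeZero n := ⟨hn0.ne'⟩
  have hog : orderOf g = n := orderOf_eq_card_of_forall_mem_zpowers hg |>.trans Nat.card_eq_fintype_card
  have hμ0 := Complex.isPrimitiveRoot_exp n hn0.ne'
  set μ0 := Complex.exp (2 * Real.pi * Complex.I / n)
  have hμA : μ0 ∈ A := by
    rw [← ValuationSubring.valuation_le_one_iff]
    exact (val_root_unity A hn0.ne' hμ0.pow_eq_one).le
  have hμ : IsPrimitiveRoot (⟨μ0, hμA⟩ : A) n :=
    IsPrimitiveRoot.of_map_of_injective (f := A.subtype) hμ0 Subtype.val_injective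
  have hnp : (n : E) ≠ 0 := by
    intro h
    rw [CharP.cast_eq_zero_iff E p] at h
    haveI : CharP F p := charP_of_injective_algebraMap (algebraMap (ZMod p) F).injective p
    have h2 : (n : F) = -1 := by
      rw [hn, Fintype.card_units, Nat.cast_sub Fintype.card_pos, FiniteField.cast_card_eq_zero]
      simp
    have h3 : (n : F) = 0 := by rwa [CharP.cast_eq_zero_iff F p]
    rw [h3] at h2
    simp at h2
  have hρμ : IsPrimitiveRoot (ρ ⟨μ0, hμA⟩) n := by
    refine IsPrimitiveRoot.mk_of_lt _ hn0 (by rw [← map_pow, hμ.pow_eq_one, map_one]) ?_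
    intro j hj hjn h
    set d := Nat.gcd j n
    have hνn : ((⟨μ0, hμA⟩ : A) ^ j) ^ n = 1 := by
      rw [← pow_mul, mul_comm, pow_mul, hμ.pow_eq_one, one_pow]
    have hν1 : ((⟨μ0, hμA⟩ : A) ^ j) ≠ 1 := hμ.pow_ne_one_of_pos_of_lt hj.ne' hjn
    have h0 : ∑ i ∈ Finset.range n, ((⟨μ0, hμA⟩ : A) ^ j) ^ i = 0 := by
      have := geom_sum_mul ((⟨μ0, hμA⟩ : A) ^ j) n
      rw [hνn, sub_self] at this
      exact (mul_eq_zero.mp this).resolve_right (sub_ne_zero.mpr hν1)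
    have h1 := congrArg ρ h0
    rw [map_sum, map_zero] at h1
    simp only [map_pow, h, one_pow] at h1
    simp at h1
    exact hnp h1
  obtain ⟨χ0, hχ0⟩ := MulChar.exists_mulChar_orderOf_eq_card_units F hμ
  -- chi0 of g is primitive
  have hg1 : (χ0 g) ^ n = 1 := by
    rw [← MulChar.pow_apply_coe, hn, χ0.pow_card_eq_one, MulChar.one_apply_coe]
  obtain ⟨i, hi, hi2⟩ := hμ.eq_pow_of_pow_eq_one hg1
  have hgprim : IsPrimitiveRoot (χ0 g) n := by
    refine IsPrimitiveRoot.mk_of_lt _ hn0 hg1 ?_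
    intro j hj hjn h
    have : χ0 ^ j = 1 := by
      rw [MulChar.eq_iff hg, MulChar.pow_apply_coe, h, MulChar.one_apply_coe]
    have := orderOf_dvd_of_pow_eq_one this
    rw [hχ0] at this
    exact absurd (Nat.le_of_dvd hj this) (by omega)
  have hiprim : IsPrimitiveRoot (ρ (χ0 g)) n := by
    rw [← hi2, map_pow]
    refine hρμ.pow_of_coprime i ?_
    rw [← hi2] at hgprim
    exact (hμ.pow_iff_coprime hn0 i).mp hgprim
  have hιg : (ι g) ^ n = 1 := by
    rw [← map_pow, ← Units.val_pow_eq_pow_val, ← hog, pow_orderOf_eq_one]; simp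
  obtain ⟨j, hj, hj2⟩ := hiprim.eq_pow_of_pow_eq_one hιg
  refine ⟨E, inferInstance, ρ, ι.toRingHom, χ0 ^ j, ?_, hρ⟩
  intro x
  by_cases hx : x = 0
  · subst hx; rw [MulChar.map_zero]; simp
  · obtain ⟨m, hm⟩ := (mem_powers_iff_mem_zpowers.mpr (hg (Units.mk0 x hx)))
    have hx2 : x = (g : F) ^ m := by
      rw [← Units.val_pow_eq_pow_val]; simp only at hm; rw [hm]; rfl
    rw [hx2, map_pow, map_pow, MulChar.pow_apply_coe, map_pow, hj2]
    simp

end teich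

section stick
variable (p : ℕ) [hpf : Fact p.Prime] (F : Type) [Field F] [Fintype F] [Algebra (ZMod p) F]

theorem card_F : Fintype.card F = p ^ Module.finrank (ZMod p) F := by
  haveI : Fintype (ZMod p) := inferInstance
  rw [Module.card_eq_pow_finrank (K := ZMod p) (V := F), ZMod.card]

theorem sum_inv_trace : ∑ x : F, x⁻¹ * algebraMap (ZMod p) F (Algebra.trace (ZMod p) F x) = -1 := by
  classical
  simp only [FiniteField.algebraMap_trace_eq_sum_pow, Finset.mul_sum]
  rw [Finset.sum_comm]
  have hf : 0 < Module.finrank (ZMod p) F := Module.finrank_pos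
  rw [← Finset.sum_erase_add _ _ (Finset.mem_range.mpr hf)]
  rw [Finset.sum_eq_zero, zero_add]
  · simp only [pow_zero, pow_one]
    rw [← Finset.sum_erase_add _ _ (Finset.mem_univ (0:F))]
    rw [Finset.sum_congr rfl (g := fun _ => (1:F))]
    · rw [Finset.sum_const, Finset.card_erase_of_mem (Finset.mem_univ _), Finset.card_univ, nsmul_eq_mul,
        Nat.cast_sub Fintype.card_pos, FiniteField.cast_card_eq_zero]
      simp
    · intro x hx
      exact inv_mul_cancel₀ (Finset.ne_of_mem_erase hx)
  · intro i hi
    rw [Finset.mem_erase, Finset.mem_range] at hi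
    have hp1 : 1 < p := hpf.out.one_lt
    have h1 : 1 < p ^ i := Nat.one_lt_pow hi.1 hp1
    have h2 : p ^ i < p ^ Module.finrank (ZMod p) F := Nat.pow_lt_pow_right hp1 hi.2
    rw [← FiniteField.sum_pow_lt_card_sub_one F (p ^ i - 1) (by rw [card_F p F]; omega)]
    refine Finset.sum_congr rfl fun x _ => ?_
    rw [Nat.card_eq_fintype_card, ZMod.card]
    rcases eq_or_ne x 0 with rfl | hx
    · rw [inv_zero, zero_mul, zero_pow (by omega)]
    · rw [show p ^ i = (p ^ i - 1) + 1 by omega, pow_succ]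
      field_simp
      simp

variable {p} {F}
variable {A : ValuationSubring ℂ}

theorem val_pi_lt (hA : A.valuation (p : ℂ) < 1) : A.valuation (zetaP p - 1) < 1 := by
  rw [val_p A p hpf.out (zetaP_prim p hpf.out)] at hA
  by_contra h
  exact absurd hA (not_lt.mpr (one_le_pow₀ (not_lt.mp h)))

theorem exists_phi (hA : A.valuation (p : ℂ) < 1) :
    ∃ φ : MulChar F ℂ, orderOf φ = Fintype.card F - 1 ∧
      (1 < Fintype.card F - 1 →
        A.valuation (zetaP p - 1) ≤ A.valuation (gaussSum φ (trChar p F))) := by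
  classical
  obtain ⟨E, _, ρ, ι, ω, hω, hρ⟩ := exists_teich p F A hA
  have hord : orderOf (ω⁻¹.ringHomComp A.subtype) = Fintype.card F - 1 := by
    obtain ⟨g, hg⟩ := IsCyclic.exists_generator (α := Fˣ)
    have hgo : orderOf g = Fintype.card F - 1 := by
      rw [orderOf_eq_card_of_forall_mem_zpowers hg, Nat.card_eq_fintype_card, Fintype.card_units]
    apply Nat.dvd_antisymm (MulChar.orderOf_dvd_card_sub_one F _)
    rw [← hgo, orderOf_dvd_iff_pow_eq_one]
    set n := orderOf (ω⁻¹.ringHomComp A.subtype)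
    have h1 : (ω⁻¹.ringHomComp A.subtype) ^ n = 1 := pow_orderOf_eq_one _
    have h2 : ((ω⁻¹.ringHomComp A.subtype) ^ n) ((g⁻¹ : Fˣ) : F) = 1 := by
      rw [h1, MulChar.one_apply_coe]
    rw [MulChar.pow_apply_coe, MulChar.ringHomComp_apply, MulChar.inv_apply', ← map_pow] at h2
    have h3 : (ω ((g⁻¹ : Fˣ) : F)⁻¹) ^ n = 1 := Subtype.ext h2
    have h4 := congrArg ρ h3
    rw [map_pow, hω, map_one, ← map_pow, ← map_one ι] at h4
    have h5 := ι.injective h4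
    ext
    simpa using h5
  refine ⟨ω⁻¹.ringHomComp A.subtype, hord, fun hq => ?_⟩
  have hζ := zetaP_prim p hpf.out
  let ζA : A := ⟨zetaP p, by
    rw [← ValuationSubring.valuation_le_one_iff]
    exact (val_root_unity A hpf.out.ne_zero hζ.pow_eq_one).le⟩
  have hρζ : ρ ζA = 1 := by
    have := (hρ (ζA - 1)).mpr (by simpa [ζA] using val_pi_lt hA)
    rwa [map_sub, map_one, sub_eq_zero] at this
  let u : A := ∑ x : F, ω⁻¹ x * ∑ j ∈ Finset.range (Algebra.trace (ZMod p) F x).val, ζA ^ j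
  have hu : ρ u ≠ 0 := by
    have : ρ u = ι (-1) := by
      rw [← sum_inv_trace p F, map_sum, map_sum]
      refine Finset.sum_congr rfl fun x _ => ?_
      rw [map_mul, map_mul, MulChar.inv_apply', hω]
      congr 1
      simp only [map_sum, map_pow, hρζ, one_pow, Finset.sum_const, Finset.card_range, nsmul_eq_mul, mul_one]
      conv_rhs => rw [← ZMod.natCast_zmod_val (Algebra.trace (ZMod p) F x), map_natCast, map_natCast]
    rw [this]; simp
  have huv : 1 ≤ A.valuation (u : ℂ) := by
    by_contra h
    exact hu ((hρ u).mpr (not_le.mp h))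
  have hne : ω⁻¹.ringHomComp A.subtype ≠ 1 := by
    intro h; rw [h, orderOf_one] at hord; omega
  have hg : gaussSum (ω⁻¹.ringHomComp A.subtype) (trChar p F) = (u : ℂ) * (zetaP p - 1) := by
    have h0 := MulChar.sum_eq_zero_of_ne_one hne
    have : gaussSum (ω⁻¹.ringHomComp A.subtype) (trChar p F)
      = ∑ x : F, (ω⁻¹.ringHomComp A.subtype) x * (trChar p F x - 1) := by
      simp only [mul_sub, mul_one, Finset.sum_sub_distrib, h0, sub_zero]
      rfl
    rw [this]
    have hu' : (u : ℂ) = A.subtype u := rfl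
    rw [hu', map_sum, Finset.sum_mul]
    refine Finset.sum_congr rfl fun x _ => ?_
    rw [map_mul, map_sum, mul_assoc, trChar_apply, MulChar.ringHomComp_apply]
    congr 1
    simp only [map_pow]
    exact (geom_sum_mul _ _).symm
  rw [hg, map_mul]
  exact le_mul_of_one_le_left' huv

theorem mulChar_integral (χ : MulChar F ℂ) (x : F) : IsIntegral ℤ (χ x) := by
  rcases eq_or_ne x 0 with rfl | hx
  · rw [MulChar.map_zero]; exact isIntegral_zero
  · refine IsIntegral.of_pow (n := Fintype.card F - 1) (by have := Fintype.one_lt_card (α := F); omega) ?_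
    rw [← map_pow, FiniteField.pow_card_sub_one_eq_one x hx, map_one]
    exact isIntegral_one

theorem trChar_integral (x : F) : IsIntegral ℤ (trChar p F x) := by
  rw [trChar_apply]
  refine IsIntegral.pow ?_ _
  refine IsIntegral.of_pow (n := p) hpf.out.pos ?_
  rw [(zetaP_prim p hpf.out).pow_eq_one]
  exact isIntegral_one

theorem gauss_integral (χ : MulChar F ℂ) : IsIntegral ℤ (gaussSum χ (trChar p F)) :=
  IsIntegral.sum _ fun x _ => (mulChar_integral χ x).mul (trChar_integral x)

theorem gauss_mul_le (χ χ' : MulChar F ℂ) (h : χ * χ' ≠ 1) :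
    A.valuation (gaussSum χ (trChar p F)) * A.valuation (gaussSum χ' (trChar p F)) ≤
      A.valuation (gaussSum (χ * χ') (trChar p F)) := by
  rw [← map_mul, ← jacobiSum_mul_nontrivial h, map_mul]
  refine mul_le_of_le_one_right' ?_
  apply val_le_one_of_integral
  exact IsIntegral.sum _ fun x _ => (mulChar_integral χ x).mul (mulChar_integral χ' _)

theorem digit_rot (p f i n : ℕ) (hp : 1 < p) (hi : i ≤ f) (hn : n < p ^ f - 1) :
    (p ^ (f - i) * n) % (p ^ f - 1) + (p ^ f - 1) * (n / p ^ i) = p ^ (f - i) * n := by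
  have hq : p ^ f = p ^ (f - i) * p ^ i := by rw [← pow_add]; congr 1; omega
  have hpi : 0 < p ^ i := by positivity
  have hpf : 0 < p ^ (f - i) := by positivity
  obtain ⟨Q, hQ⟩ : ∃ Q, Q + 1 = p ^ f := ⟨p ^ f - 1, Nat.sub_add_cancel (Nat.one_le_pow _ _ (by omega))⟩
  have hQ' : p ^ f - 1 = Q := by omega
  rw [hQ'] at hn ⊢
  rw [← hQ] at hq
  generalize p ^ (f - i) = x at *
  generalize p ^ i = y at *
  have hdiv := Nat.div_add_mod n y
  have hb : n % y < y := Nat.mod_lt _ hpi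
  set a := n / y
  set b := n % y
  have e : x * n = (a + x * b) + Q * a := by
    rw [← hdiv]; 
    have : x * (y * a + b) = (x * y) * a + x * b := by ring
    rw [this, ← hq]; ring
  have ha : a < x := by
    by_contra h
    push Not at h
    have : y * x ≤ y * a := Nat.mul_le_mul_left _ h
    have h2 : x * y = y * x := mul_comm _ _
    omega
  have hlt : a + x * b < Q := by
    have h1 : x * (b + 1) ≤ x * y := Nat.mul_le_mul_left _ hb
    rw [mul_add, mul_one] at h1
    by_contra h
    push Not at h
    have h3 : x * y ≤ x * (b + 1) := by rw [mul_add]; omega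
    have h4 : y ≤ b + 1 := Nat.le_of_mul_le_mul_left h3 hpf
    have h5 : b + 1 = y := by omega
    have h6 : a + 1 = x := by
      have : x * (b+1) = x * y := by rw [h5]
      rw [mul_add] at this; omega
    have : y * (a + 1) = y * x := by rw [h6]
    have h2 : x * y = y * x := mul_comm _ _
    rw [mul_add] at this
    omega
  rw [e, Nat.add_mul_mod_self_left, Nat.mod_eq_of_lt hlt]

theorem digit_sum_eq (p f n : ℕ) (hp : 1 < p) (hn : n < p ^ f - 1) :
    (p ^ f - 1) * (p.digits n).sum = (p - 1) * ∑ i ∈ Finset.range f, (p ^ i * n) % (p ^ f - 1) := by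
  have h1 : ∑ i ∈ Finset.range f, (p ^ i * n) % (p ^ f - 1)
      = ∑ i ∈ Finset.range f, (p ^ (f - (i + 1)) * n) % (p ^ f - 1) := by
    rw [← Finset.sum_range_reflect]
    refine Finset.sum_congr rfl fun i _ => ?_
    rw [show f - 1 - i = f - (i + 1) by omega]
  have h2 : ∑ i ∈ Finset.range f, (p ^ i * n) % (p ^ f - 1)
      + (p ^ f - 1) * ∑ i ∈ Finset.range f, n / p ^ (i + 1) = (∑ i ∈ Finset.range f, p ^ i) * n := by
    rw [h1, Finset.mul_sum, ← Finset.sum_add_distrib, ← Finset.sum_range_reflect (fun i => p ^ i),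
      Finset.sum_mul]
    refine Finset.sum_congr rfl fun i hi => ?_
    rw [digit_rot p f (i + 1) n hp (by simpa using hi) hn, show f - 1 - i = f - (i + 1) by omega]
  have h3 : (p - 1) * ∑ i ∈ Finset.range f, p ^ i = p ^ f - 1 := by
    rw [mul_comm]; exact geom_sum_mul_of_one_le hp.le f
  have h4 : (p - 1) * ∑ i ∈ Finset.range f, n / p ^ (i + 1) + (p.digits n).sum = n := by
    have hk := Nat.sub_one_mul_sum_log_div_pow_eq_sub_sum_digits (p := p) n
    have hle := Nat.digit_sum_le p n
    have : ∑ i ∈ Finset.range f, n / p ^ (i + 1) = ∑ i ∈ Finset.range (Nat.log p n).succ, n / p ^ (i+1) := by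
      rcases Nat.eq_zero_or_pos n with rfl | hn0
      · simp
      symm
      apply Finset.sum_subset
      · intro i hi
        rw [Finset.mem_range] at *
        have : p ^ Nat.log p n ≤ n := Nat.pow_log_le_self p hn0.ne'
        have h5 : p ^ Nat.log p n < p ^ f := by omega
        have := (Nat.pow_lt_pow_iff_right hp).mp h5
        omega
      · intro i _ hi
        rw [Finset.mem_range] at hi
        apply Nat.div_eq_of_lt
        exact Nat.lt_pow_of_log_lt hp (by omega)
    rw [this, hk]; omega
  have h5 := congrArg (HMul.hMul (p - 1)) h2
  rw [← mul_assoc, h3] at h5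
  nth_rewrite 3 [← h4] at h5
  rw [mul_add, mul_add] at h5
  have e : (p - 1) * ((p ^ f - 1) * ∑ i ∈ Finset.range f, n / p ^ (i + 1)) =
    (p ^ f - 1) * ((p - 1) * ∑ i ∈ Finset.range f, n / p ^ (i + 1)) := by ring
  omega

theorem stick_ge (φ : MulChar F ℂ) (ho : orderOf φ = Fintype.card F - 1)
    (h1 : A.valuation (zetaP p - 1) ≤ A.valuation (gaussSum φ (trChar p F)))
    (n : ℕ) (hn : n < Fintype.card F - 1) :
    A.valuation (zetaP p - 1) ^ (p.digits n).sum ≤ A.valuation (gaussSum (φ ^ n) (trChar p F)) := by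
  have hp1 : 1 < p := hpf.out.one_lt
  have hne : ∀ m, 0 < m → m < Fintype.card F - 1 → φ ^ m ≠ 1 := by
    intro m hm hm' h
    have := Nat.le_of_dvd hm (orderOf_dvd_of_pow_eq_one h)
    omega
  have key : ∀ m k, k + m < Fintype.card F - 1 →
      A.valuation (zetaP p - 1) ^ k * A.valuation (gaussSum (φ ^ m) (trChar p F)) ≤
      A.valuation (gaussSum (φ ^ (k + m)) (trChar p F)) := by
    intro m k
    induction k with
    | zero => intro _; simp
    | succ k ih =>
      intro hk
      have h2 := ih (by omega)
      have h3 := gauss_mul_le (p := p) (A := A) φ (φ ^ (k + m)) (by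
        rw [← pow_succ']; exact hne _ (by omega) (by omega))
      rw [← pow_succ', show k + m + 1 = k + 1 + m by ring] at h3
      refine le_trans ?_ h3
      rw [pow_succ', mul_assoc]
      exact mul_le_mul' h1 h2
  induction n using Nat.strong_induction_on with
  | _ n ih =>
    rcases Nat.eq_zero_or_pos n with rfl | hn0
    · simp only [Nat.digits_zero, List.sum_nil, pow_zero]
      rw [gaussSum_one_left (trChar_ne_one p F), Valuation.map_neg, map_one]
    · rw [Nat.digits_def' hp1 hn0, List.sum_cons, pow_add]
      have h2 := ih (n / p) (Nat.div_lt_self hn0 hp1) (lt_of_le_of_lt (Nat.div_le_self _ _) hn)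
      have h3 := key (p * (n / p)) (n % p) (by rw [Nat.mod_add_div]; exact hn)
      rw [Nat.mod_add_div] at h3
      refine le_trans ?_ h3
      refine mul_le_mul_right ?_ _
      have h4 := gauss_frob_pow p (φ ^ (n / p)) 1
      rw [pow_one, ← pow_mul, mul_comm] at h4
      rw [h4]; exact h2

theorem stick_eq (φ : MulChar F ℂ)
    (ho : orderOf φ = Fintype.card F - 1)
    (h1 : A.valuation (zetaP p - 1) ≤ A.valuation (gaussSum φ (trChar p F)))
    {f : ℕ} (hf : Fintype.card F = p ^ f)
    (n : ℕ) (hn0 : 0 < n) (hn : n < Fintype.card F - 1) :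
    A.valuation (gaussSum (φ ^ n) (trChar p F)) = A.valuation (zetaP p - 1) ^ (p.digits n).sum := by
  have hp1 : 1 < p := hpf.out.one_lt
  set q := Fintype.card F with hq
  have e1 := stick_ge φ ho h1 n hn
  have e2 := stick_ge φ ho h1 (q - 1 - n) (by omega)
  have hsum : (p.digits n).sum + (p.digits (q - 1 - n)).sum = (p - 1) * f := by
    have d1 := digit_sum_eq p f n hp1 (by omega)
    have d2 := digit_sum_eq p f (q - 1 - n) hp1 (by omega)
    have hs : ∑ i ∈ Finset.range f, (p ^ i * n) % (p ^ f - 1) +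
        ∑ i ∈ Finset.range f, (p ^ i * (q - 1 - n)) % (p ^ f - 1) = f * (p ^ f - 1) := by
      rw [← Finset.sum_add_distrib, Finset.sum_const_nat (m := p ^ f - 1), Finset.card_range]
      intro i _
      rw [← hf]
      have hcop : Nat.Coprime (q - 1) (p ^ i) := by
        apply Nat.Coprime.pow_right
        rw [hf, Nat.coprime_comm, hpf.out.coprime_iff_not_dvd]
        intro hd
        have hf0 : f ≠ 0 := by rintro rfl; simp at hf; omega
        have : p ∣ p ^ f := dvd_pow_self p hf0
        have h3 := Nat.dvd_sub this hd
        rw [Nat.sub_sub_self (Nat.one_le_pow _ _ (by omega))] at h3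
        exact hpf.out.one_lt.ne' (Nat.dvd_one.mp h3)
      have hnz : (p ^ i * n) % (q - 1) ≠ 0 := by
        intro h0
        have h2 := hcop.dvd_of_dvd_mul_left (Nat.dvd_of_mod_eq_zero h0)
        have := Nat.le_of_dvd hn0 h2
        omega
      have hpos : 0 < q - 1 := by omega
      have ha := Nat.mod_lt (p ^ i * n) hpos
      have hb := Nat.mod_lt (p ^ i * (q - 1 - n)) hpos
      have hdvd : (q - 1) ∣ (p ^ i * n) % (q - 1) + (p ^ i * (q - 1 - n)) % (q - 1) := by
        rw [Nat.dvd_iff_mod_eq_zero, ← Nat.add_mod, ← mul_add, Nat.add_sub_cancel' hn.le]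
        simp
      obtain ⟨c, hc⟩ := hdvd
      have hc1 : c = 1 := by
        have hc2 : c < 2 := by
          by_contra h
          have : (q - 1) * 2 ≤ (q - 1) * c := Nat.mul_le_mul_left _ (by omega)
          omega
        interval_cases c <;> omega
      rw [hc, hc1, mul_one]
    have : (p ^ f - 1) * ((p.digits n).sum + (p.digits (q - 1 - n)).sum) = (p ^ f - 1) * ((p - 1) * f) := by
      rw [mul_add, d1, d2, ← mul_add, hs]; ring
    exact Nat.eq_of_mul_eq_mul_left (by omega) this
  have hinv : φ ^ (q - 1 - n) = (φ ^ n)⁻¹ := by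
    rw [eq_inv_iff_mul_eq_one, ← pow_add, Nat.sub_add_cancel hn.le, ← ho, pow_orderOf_eq_one]
  have hne : φ ^ n ≠ 1 := by
    intro h
    have := Nat.le_of_dvd hn0 (orderOf_dvd_of_pow_eq_one h)
    omega
  have hprod : A.valuation (gaussSum (φ ^ n) (trChar p F)) *
      A.valuation (gaussSum (φ ^ (q - 1 - n)) (trChar p F)) =
      A.valuation (zetaP p - 1) ^ (p.digits n).sum * A.valuation (zetaP p - 1) ^ (p.digits (q - 1 - n)).sum := by
    rw [← pow_add, hsum, pow_mul, ← val_p A p hpf.out (zetaP_prim p hpf.out), ← map_mul, ← map_pow, hinv]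
    have h2 := gaussSum_mul_gaussSum_eq_card hne (trChar_prim p F)
    have h3 := mul_gaussSum_inv_eq_gaussSum (φ ^ n)⁻¹ (trChar p F)
    rw [← h3, mul_left_comm, h2, map_mul, ← hq, hf]
    rw [val_root_unity A two_ne_zero (x := (φ ^ n)⁻¹ (-1)) (by rw [← map_pow]; simp), one_mul]
    push_cast
    rfl
  have hp0 : A.valuation (zetaP p - 1) ≠ 0 := by
    rw [Valuation.ne_zero_iff, sub_ne_zero]
    exact (zetaP_prim p hpf.out).ne_one hp1
  refine le_antisymm ?_ e1
  by_contra h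
  push Not at h
  have hpos : 0 < A.valuation (gaussSum (φ ^ (q - 1 - n)) (trChar p F)) :=
    lt_of_lt_of_le (zero_lt_iff.mpr (pow_ne_zero _ hp0)) e2
  have h5 := mul_lt_mul_of_pos_right h hpos
  rw [hprod] at h5
  exact absurd h5 (not_lt.mpr (mul_le_mul_right e2 _))

theorem stickelberger (hA : A.valuation (p : ℂ) < 1) {f : ℕ} (hf : Fintype.card F = p ^ f)
    (χ : MulChar F ℂ) (N : ℕ) (hN : 2 ≤ N) (hχ : orderOf χ = N) :
    ∃ c, Nat.Coprime c N ∧ ∀ s, ∑ i ∈ Finset.range f, (p ^ i * c) % N = N * s →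
      A.valuation (gaussSum χ (trChar p F)) = A.valuation (p : ℂ) ^ s := by
  classical
  have hp1 : 1 < p := hpf.out.one_lt
  obtain ⟨φ, ho, h1⟩ := exists_phi (F := F) hA
  obtain ⟨M, hM⟩ : N ∣ Fintype.card F - 1 := hχ ▸ MulChar.orderOf_dvd_card_sub_one F χ
  have hM0 : 0 < M := by
    rcases Nat.eq_zero_or_pos M with rfl | h
    · have := Fintype.one_lt_card (α := F); omega
    · exact h
  have hq1 : 1 < Fintype.card F - 1 := by
    rw [hM]; calc 1 < N := hN
      _ ≤ N * M := Nat.le_mul_of_pos_right _ hM0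
  have hgen : χ ∈ Subgroup.zpowers φ := by
    haveI : Finite (MulChar F ℂ) := inferInstance
    have hc : Nat.card (MulChar F ℂ) = Fintype.card F - 1 := by
      haveI : HasEnoughRootsOfUnity ℂ (Monoid.exponent Fˣ) := inferInstance
      rw [MulChar.card_eq_card_units_of_hasEnoughRootsOfUnity, Nat.card_eq_fintype_card, Fintype.card_units]
    have : Subgroup.zpowers φ = ⊤ := by
      apply Subgroup.eq_top_of_card_eq
      rw [Nat.card_zpowers, ho, hc]
    rw [this]; trivial
  have hfin : 0 < orderOf φ := by omega
  rw [← mem_powers_iff_mem_zpowers, (orderOf_pos_iff.mp hfin).mem_powers_iff_mem_range_orderOf (x := φ)] at hgen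
  rw [Finset.mem_image] at hgen
  obtain ⟨n, hn, rfl⟩ := hgen
  rw [Finset.mem_range, ho] at hn
  have hn0 : 0 < n := by
    rcases Nat.eq_zero_or_pos n with rfl | h
    · simp at hχ; omega
    · exact h
  have hgcd : Nat.gcd (N * M) n = M := by
    rw [orderOf_pow, ho, hM] at hχ
    have hd := Nat.gcd_dvd_left (N * M) n
    have := Nat.div_mul_cancel hd
    rw [hχ] at this
    exact Nat.eq_of_mul_eq_mul_left (by omega) this
  obtain ⟨c, rfl⟩ : M ∣ n := hgcd ▸ Nat.gcd_dvd_right _ _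
  refine ⟨c, ?_, fun s hs => ?_⟩
  · rw [mul_comm N, Nat.gcd_mul_left] at hgcd
    rw [Nat.coprime_comm]
    exact Nat.eq_of_mul_eq_mul_left hM0 (by rw [hgcd, mul_one])
  · rw [stick_eq φ ho (h1 hq1) hf _ hn0 hn, val_p A p hpf.out (zetaP_prim p hpf.out), ← pow_mul]
    congr 1
    have hd := digit_sum_eq p f (M * c) hp1 (by omega)
    rw [← hf, hM] at hd
    have : ∑ i ∈ Finset.range f, p ^ i * (M * c) % (N * M) = M * (N * s) := by
      rw [← hs, Finset.mul_sum]
      refine Finset.sum_congr rfl fun i _ => ?_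
      rw [← Nat.mul_mod_mul_left]
      congr 1 <;> ring
    rw [this] at hd
    refine Nat.eq_of_mul_eq_mul_left (show 0 < N * M by omega) ?_
    rw [hd]; ring

end stick

/-- Quadratic character mod `l` on integers. -/
noncomputable def lam (l : ℕ) [Fact l.Prime] (b : ℕ) : ℤ := quadraticChar (ZMod l) (b : ZMod l)

/-- First moment of the quadratic character. -/
noncomputable def M1 (l : ℕ) [Fact l.Prime] : ℤ := ∑ a ∈ Finset.range l, lam l a * a

section comb
variable (l : ℕ) [hlf : Fact l.Prime]

theorem lam_mul (a b : ℕ) : lam l (a * b) = lam l a * lam l b := by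
  rw [lam, Nat.cast_mul, map_mul]; rfl

theorem lam_add (a k : ℕ) : lam l (a + l * k) = lam l a := by
  simp [lam]

theorem lam_mod (a n : ℕ) (h : l ∣ n) : lam l (a % n) = lam l a := by
  obtain ⟨k, rfl⟩ := h
  conv_rhs => rw [← Nat.mod_add_div a (l * k), mul_assoc, lam_add]

theorem lam_sum (hl2 : l ≠ 2) : ∑ a ∈ Finset.range l, lam l a = 0 := by
  have h := quadraticChar_sum_zero (F := ZMod l) (by rwa [ZMod.ringChar_zmod_n])
  rw [← h]
  haveI : NeZero l := ⟨hlf.out.ne_zero⟩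
  symm
  refine Finset.sum_nbij' (fun a => a.val) (fun a => (a : ZMod l)) ?_ ?_ ?_ ?_ ?_
  · intro a _; simpa using ZMod.val_lt a
  · intro a _; simp
  · intro a _; simp
  · intro a ha; simpa using ZMod.val_cast_of_lt (Finset.mem_range.mp ha)
  · intro a _; simp [lam]

theorem lam_moment (hl2 : l ≠ 2) (k : ℕ) : ∑ b ∈ Finset.range (l * k), lam l b * b = k * M1 l := by
  induction k with
  | zero => simp
  | succ k ih =>
    rw [mul_add, mul_one, Finset.sum_range_add, ih]
    have : ∑ x ∈ Finset.range l, lam l (l * k + x) * ((l * k + x : ℕ) : ℤ)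
      = M1 l + l * k * ∑ a ∈ Finset.range l, lam l a := by
      rw [M1, Finset.mul_sum, ← Finset.sum_add_distrib]
      refine Finset.sum_congr rfl fun x _ => ?_
      rw [add_comm (l * k), lam_add]; push_cast; ring
    rw [this, lam_sum l hl2]; push_cast; ring

theorem lam_eq_zero (a : ℕ) : lam l a = 0 ↔ l ∣ a := by
  rw [lam, quadraticChar_eq_zero_iff, ZMod.natCast_eq_zero_iff]

theorem lam_pm {a : ℕ} (h : ¬ l ∣ a) : lam l a = 1 ∨ lam l a = -1 := by
  rw [lam]
  apply quadraticChar_dichotomy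
  rwa [Ne, ZMod.natCast_eq_zero_iff]

theorem lam_neg (hl4 : l % 4 = 3) {a n : ℕ} (hn : l ∣ n) (ha : a ≤ n) : lam l (n - a) = - lam l a := by
  rw [lam, lam, Nat.cast_sub ha, (ZMod.natCast_eq_zero_iff n l).mpr hn, zero_sub, neg_eq_neg_one_mul,
    map_mul, quadraticChar_neg_one (by rw [ZMod.ringChar_zmod_n]; omega), ZMod.card,
    ZMod.χ₄_nat_three_mod_four hl4, neg_one_mul]

theorem odd_moment (hl2 : l ≠ 2) (r : ℕ) (hr : 1 ≤ r) :
    ∑ b ∈ (Finset.range (4 * l ^ r)).filter (fun b => Nat.Coprime b (4 * l ^ r)), lam l b * b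
      = 4 * l ^ (r - 1) * M1 l * (1 - lam l 2) := by
  obtain ⟨r, rfl⟩ : ∃ s, r = s + 1 := ⟨r - 1, by omega⟩
  have hl := hlf.out
  have hodd : ∀ b : ℕ, Nat.Coprime b (4 * l ^ (r + 1)) ↔ (¬ Even b ∧ ¬ l ∣ b) := by
    intro b
    rw [Nat.coprime_mul_iff_right, Nat.coprime_pow_right_iff (by omega), show 4 = 2 ^ 2 by norm_num,
      Nat.coprime_pow_right_iff (by omega), Nat.coprime_comm (m := l), hl.coprime_iff_not_dvd,
      Nat.coprime_two_right, Nat.not_even_iff_odd]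
  have h1 : ∑ b ∈ (Finset.range (4 * l ^ (r + 1))).filter (fun b => Nat.Coprime b (4 * l ^ (r + 1))), lam l b * (b : ℤ)
      = ∑ b ∈ (Finset.range (4 * l ^ (r + 1))).filter (fun b => ¬ Even b), lam l b * b := by
    apply Finset.sum_subset
    · intro b; simp only [Finset.mem_filter, hodd]; tauto
    · intro b hb hb2
      simp only [Finset.mem_filter, hodd] at hb hb2
      have : l ∣ b := by tauto
      rw [(lam_eq_zero l b).mpr this, zero_mul]
  have h2 := Finset.sum_filter_add_sum_filter_not (Finset.range (4 * l ^ (r + 1))) (fun b => Even b) (fun b => lam l b * (b : ℤ))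
  have h3 : ∑ b ∈ (Finset.range (4 * l ^ (r + 1))).filter (fun b => Even b), lam l b * (b : ℤ)
     = lam l 2 * 2 * ∑ b ∈ Finset.range (2 * l ^ (r + 1)), lam l b * b := by
    rw [Finset.mul_sum]
    symm
    refine Finset.sum_nbij' (fun b => 2 * b) (fun b => b / 2) ?_ ?_ ?_ ?_ ?_
    · intro b hb; simp at hb ⊢; omega
    · intro b hb; simp at hb ⊢; omega
    · intro b hb; simp
    · intro b hb; simp at hb ⊢; exact Nat.two_mul_div_two_of_even hb.2
    · intro b _; rw [lam_mul]; push_cast; ring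
  have h4 := lam_moment l hl2 (4 * l ^ r)
  have h5 := lam_moment l hl2 (2 * l ^ r)
  rw [show l * (4 * l ^ r) = 4 * l ^ (r + 1) by ring] at h4
  rw [show l * (2 * l ^ r) = 2 * l ^ (r + 1) by ring] at h5
  rw [h4, h3, h5] at h2
  rw [h1]
  push_cast at h2 ⊢
  linear_combination h2

theorem T_formula (hl4 : l % 4 = 3) (r p f : ℕ) (hr : 1 ≤ r) (hcop : Nat.Coprime p (4 * l ^ r))
    (hlp : lam l p = 1) (hord : orderOf (p : ZMod (4 * l ^ r)) = f) (hf : 2 * f = Nat.totient (4 * l ^ r))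
    (c : ℕ) (hc : Nat.Coprime c (4 * l ^ r)) :
    2 * ((∑ i ∈ Finset.range f, (p ^ i * c) % (4 * l ^ r) : ℕ) : ℤ) =
      f * (4 * l ^ r : ℕ) + lam l c * (4 * l ^ (r - 1) * M1 l * (1 - lam l 2)) := by
  have hl := hlf.out
  rw [← odd_moment l (by rintro rfl; omega) r hr]
  set N := 4 * l ^ r with hN
  have hlN : l ∣ N := Dvd.dvd.mul_left (dvd_pow_self l (by omega)) 4
  have hN4 : 4 ∣ N := ⟨_, rfl⟩
  have hN0 : 0 < N := by have := Nat.pow_pos hl.pos (n := r); omega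
  haveI : NeZero N := ⟨hN0.ne'⟩
  have hnl : ∀ b, Nat.Coprime b N → ¬ l ∣ b := by
    intro b hb h
    have := Nat.dvd_gcd h hlN
    rw [hb.gcd_eq_one] at this
    exact hl.one_lt.ne' (Nat.dvd_one.mp this)
  set U := (Finset.range N).filter (fun b => Nat.Coprime b N) with hU
  have hUcard : U.card = 2 * f := by
    rw [hf, Nat.totient_eq_card_coprime]
    congr 1
    ext b; simp [hU, Nat.coprime_comm]
  -- the two classes
  have hmemU : ∀ b, b ∈ U ↔ b < N ∧ Nat.Coprime b N := by intro b; simp [hU]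
  have hflip : ∀ b ∈ U, N - b ∈ U ∧ 0 < b := by
    intro b hb
    rw [hmemU] at *
    have hb0 : 0 < b := by
      rcases Nat.eq_zero_or_pos b with rfl | h
      · have := hb.2; rw [Nat.coprime_zero_left] at this; omega
      · exact h
    refine ⟨⟨by omega, ?_⟩, hb0⟩
    exact (Nat.coprime_self_sub_left hb.1.le).mpr hb.2
  let S : ℤ → Finset ℕ := fun e => U.filter (fun b => lam l b = e)
  have hS : ∀ e b, b ∈ S e ↔ b ∈ U ∧ lam l b = e := by intro e b; simp [S]
  have hSflip : ∀ e b, b ∈ S e → N - b ∈ S (-e) := by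
    intro e b hb
    rw [hS] at *
    exact ⟨(hflip b hb.1).1, by rw [lam_neg l hl4 hlN ((hmemU b).mp hb.1).1.le, hb.2]⟩
  have hScard : ∀ e, (S (-e)).card = (S e).card := by
    intro e
    refine Finset.card_nbij' (fun b => N - b) (fun b => N - b) ?_ ?_ ?_ ?_
    · intro b hb; simpa using hSflip _ _ hb
    · intro b hb; exact hSflip _ _ hb
    · intro b hb; exact Nat.sub_sub_self ((hmemU b).mp ((hS _ b).mp hb).1).1.le
    · intro b hb; exact Nat.sub_sub_self ((hmemU b).mp ((hS _ b).mp hb).1).1.le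
  have hSsum : ∀ e, ∑ b ∈ S (-e), (b : ℤ) = N * (S e).card - ∑ b ∈ S e, (b : ℤ) := by
    intro e
    have : ∑ b ∈ S (-e), (b : ℤ) = ∑ b ∈ S e, ((N : ℤ) - b) := by
      refine Finset.sum_nbij' (fun b => N - b) (fun b => N - b) ?_ ?_ ?_ ?_ ?_
      · intro b hb; simpa using hSflip _ _ hb
      · intro b hb; exact hSflip _ _ hb
      · intro b hb; exact Nat.sub_sub_self ((hmemU b).mp ((hS _ b).mp hb).1).1.le
      · intro b hb; exact Nat.sub_sub_self ((hmemU b).mp ((hS _ b).mp hb).1).1.le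
      · intro b hb
        rw [Nat.cast_sub ((hmemU b).mp ((hS _ b).mp hb).1).1.le]; ring
    rw [this, Finset.sum_sub_distrib, Finset.sum_const, nsmul_eq_mul]; ring
  have hsplit : ∀ g : ℕ → ℤ, ∑ b ∈ U, g b = ∑ b ∈ S 1, g b + ∑ b ∈ S (-1), g b := by
    intro g
    rw [← Finset.sum_filter_add_sum_filter_not U (fun b => lam l b = 1)]
    congr 1
    refine Finset.sum_congr ?_ fun _ _ => rfl
    ext b
    simp only [Finset.mem_filter, S]
    refine and_congr_right fun hb => ?_
    rcases lam_pm l (hnl b ((hmemU b).mp hb).2) with h | h <;> rw [h] <;> decide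
  have hcard1 : (S 1).card = f := by
    have := hsplit (fun _ => 1)
    simp only [Finset.sum_const, nsmul_eq_mul, mul_one, hUcard, hScard 1] at this
    push_cast at this
    omega
  have hpm := lam_pm l (hnl c hc)
  have hcarde : (S (lam l c)).card = f := by
    rcases hpm with h | h <;> rw [h]
    · exact hcard1
    · rw [hScard, hcard1]
  have hT : ∑ i ∈ Finset.range f, (p ^ i * c) % N = ∑ b ∈ S (lam l c), b := by
    have hinj : Set.InjOn (fun i => (p ^ i * c) % N) (Finset.range f : Set ℕ) := by
      intro i hi j hj hij
      have h1 : ((p ^ i * c : ℕ) : ZMod N) = (p ^ j * c : ℕ) := (ZMod.natCast_eq_natCast_iff _ _ _).mpr hij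
      push_cast at h1
      have hcu : IsUnit (c : ZMod N) := (ZMod.isUnit_iff_coprime c N).mpr hc
      have h2 := hcu.mul_right_cancel h1
      refine pow_injOn_Iio_orderOf ?_ ?_ h2
      · simpa [hord] using hi
      · simpa [hord] using hj
    have himg : (Finset.range f).image (fun i => (p ^ i * c) % N) = S (lam l c) := by
      apply Finset.eq_of_subset_of_card_le
      · intro b hb
        rw [Finset.mem_image] at hb
        obtain ⟨i, _, rfl⟩ := hb
        rw [hS, hmemU]
        refine ⟨⟨Nat.mod_lt _ hN0, ?_⟩, ?_⟩
        · rw [Nat.Coprime, ← Nat.gcd_rec, Nat.gcd_comm]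
          exact Nat.Coprime.mul_left (hcop.pow_left i) hc
        · rw [lam_mod l _ _ hlN, lam_mul]
          have : lam l (p ^ i) = 1 := by
            have : lam l (p ^ i) = lam l p ^ i := by rw [lam, Nat.cast_pow, map_pow]; rfl
            rw [this, hlp, one_pow]
          rw [this, one_mul]
      · rw [hcarde, Finset.card_image_of_injOn hinj, Finset.card_range]
    rw [← himg, Finset.sum_image (fun i hi j hj h => hinj hi hj h)]
  rw [hT, hsplit]
  have e1 : ∑ b ∈ S 1, lam l b * (b : ℤ) = ∑ b ∈ S 1, (b : ℤ) :=
    Finset.sum_congr rfl fun b hb => by rw [((hS _ b).mp hb).2, one_mul]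
  have e2 : ∑ b ∈ S (-1), lam l b * (b : ℤ) = - ∑ b ∈ S (-1), (b : ℤ) := by
    rw [← Finset.sum_neg_distrib]
    exact Finset.sum_congr rfl fun b hb => by rw [((hS _ b).mp hb).2, neg_one_mul]
  rw [e1, e2, hSsum 1, hcard1]
  push_cast
  rcases hpm with h | h <;> rw [h]
  · ring
  · rw [hSsum 1, hcard1]; ring

end comb

theorem int_of_fixed {M : ℕ} (hM : 0 < M) {ζ : ℂ} (hζ : IsPrimitiveRoot ζ M) (P : ℤ[X])
    (hP : ∀ k : ℕ, k.Coprime M → aeval (ζ ^ k) P = aeval ζ P) : ∃ n : ℤ, aeval ζ P = n := by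
  classical
  haveI : NeZero M := ⟨hM.ne'⟩
  have hζi : IsIntegral ℤ ζ := hζ.isIntegral hM
  have hζQ : IsIntegral ℚ ζ := hζi.tower_top
  set y : ℂ := aeval ζ P with hy
  have hyi : IsIntegral ℤ y := by
    have : y ∈ Algebra.adjoin ℤ {ζ} := by
      rw [hy]; exact Polynomial.aeval_mem_adjoin_singleton ℤ ζ
    exact IsIntegral.of_mem_of_fg (Algebra.adjoin ℤ {ζ}) hζi.fg_adjoin_singleton _ this
  have hyQ : IsIntegral ℚ y := hyi.tower_top
  let K := ℚ⟮ζ⟯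
  haveI : FiniteDimensional ℚ K := IntermediateField.adjoin.finiteDimensional hζQ
  let ζK : K := IntermediateField.AdjoinSimple.gen ℚ ζ
  let yK : K := aeval ζK P
  have hval : ∀ (σ : K →ₐ[ℚ] ℂ), σ yK = aeval (σ ζK) P := by
    intro σ
    simp only [yK]
    have := Polynomial.aeval_algHom_apply (σ.restrictScalars ℤ) ζK P
    simpa using this.symm
  have hyK : algebraMap K ℂ yK = y := by
    have := hval K.val
    exact this
  have hprim : IsPrimitiveRoot ζK M := by
    refine IsPrimitiveRoot.of_map_of_injective (f := algebraMap K ℂ) ?_ (algebraMap K ℂ).injective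
    exact hζ
  have hrange := Algebra.IsAlgebraic.range_eval_eq_rootSet_minpoly (F := ℚ) (K := K) ℂ yK
  have hconst : ∀ σ : K →ₐ[ℚ] ℂ, σ yK = y := by
    intro σ
    have h1 : IsPrimitiveRoot (σ ζK) M := hprim.map_of_injective σ.injective
    obtain ⟨i, _, hi, he⟩ := (hζ.isPrimitiveRoot_iff).mp h1
    rw [hval, ← he, hP i hi]
  have hmin : minpoly ℚ yK = minpoly ℚ y := by
    rw [← hyK]; exact (minpoly.algebraMap_eq (algebraMap K ℂ).injective yK).symm
  have hroot : (minpoly ℚ y).rootSet ℂ = {y} := by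
    rw [← hmin, ← hrange]
    ext w; constructor
    · rintro ⟨σ, rfl⟩; exact hconst σ
    · rintro rfl; exact ⟨K.val, hconst _⟩
  have hdeg : (minpoly ℚ y).natDegree = 1 := by
    have hsep : (minpoly ℚ y).Separable := (minpoly.irreducible hyQ).separable
    have := Polynomial.card_rootSet_eq_natDegree (K := ℂ) hsep (IsAlgClosed.splits _)
    rw [← this]
    simp [hroot]
  obtain ⟨t, ht⟩ := minpoly.natDegree_eq_one_iff.mp hdeg
  have hti : IsIntegral ℤ t := by
    rw [← ht] at hyi
    exact (isIntegral_algebraMap_iff (algebraMap ℚ ℂ).injective).mp hyi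
  obtain ⟨n, hn⟩ := IsIntegrallyClosed.isIntegral_iff.mp hti
  refine ⟨n, ?_⟩
  rw [← ht, ← hn]; simp

section idx
variable (l : ℕ) [hlf : Fact l.Prime]

theorem index_two (hl4 : l % 4 = 3) (N p f : ℕ) (hN0 : 0 < N) (hlN : l ∣ N) (hcop : Nat.Coprime p N)
    (hlp : lam l p = 1) (hord : orderOf (p : ZMod N) = f) (hf : 2 * f = Nat.totient N)
    (c : ℕ) (hc : Nat.Coprime c N) (hlc : lam l c = 1) : ∃ i : ℕ, ((p ^ i : ℕ) : ZMod N) = c := by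
  haveI : NeZero N := ⟨hN0.ne'⟩
  have hf0 : 0 < f := by have := Nat.totient_pos.mpr hN0; omega
  let π : ZMod N →+* ZMod l := ZMod.castHom hlN (ZMod l)
  let u := ZMod.unitOfCoprime p hcop
  let H := Subgroup.zpowers u
  have hcardH : Nat.card H = f := by
    rw [Nat.card_zpowers, ← hord, ← orderOf_units]; rfl
  have hidx : H.index = 2 := by
    have h1 := H.card_mul_index
    rw [hcardH, Nat.card_eq_fintype_card, ZMod.card_units_eq_totient, ← hf, mul_comm 2] at h1
    exact Nat.eq_of_mul_eq_mul_left hf0 h1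
  have hH : ∀ x ∈ H, quadraticChar (ZMod l) (π (x : ZMod N)) = 1 := by
    intro x hx
    rw [← mem_powers_iff_mem_zpowers] at hx
    obtain ⟨i, rfl⟩ := hx
    have : quadraticChar (ZMod l) (π ((u : (ZMod N)ˣ) : ZMod N)) = 1 := by
      have : π ((u : (ZMod N)ˣ) : ZMod N) = (p : ZMod l) := by simp [u, π]
      rw [this]; exact hlp
    simp only [Units.val_pow_eq_pow_val, map_pow]
    rw [this, one_pow]
  have hneg : quadraticChar (ZMod l) (-1) = -1 := by
    rw [quadraticChar_neg_one (by rw [ZMod.ringChar_zmod_n]; omega), ZMod.card,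
      ZMod.χ₄_nat_three_mod_four hl4]
  have hm1 : (-1 : (ZMod N)ˣ) ∉ H := by
    intro h
    have := hH _ h
    rw [Units.val_neg, Units.val_one, map_neg, map_one, hneg] at this
    norm_num at this
  let w := ZMod.unitOfCoprime c hc
  have hw : π (w : ZMod N) = (c : ZMod l) := by simp [w, π]
  have hwH : w ∈ H := by
    by_contra hcon
    have : (-1) * w ∈ H := by
      rw [Subgroup.mul_mem_iff_of_index_two hidx]; tauto
    have h2 := hH _ this
    rw [Units.val_mul, map_mul, map_mul, hw] at h2
    rw [Units.val_neg, Units.val_one, map_neg, map_one, hneg] at h2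
    change -1 * lam l c = 1 at h2
    rw [hlc] at h2
    norm_num at h2
  rw [← mem_powers_iff_mem_zpowers] at hwH
  obtain ⟨i, hi⟩ := hwH
  refine ⟨i, ?_⟩
  have := congrArg (fun x : (ZMod N)ˣ => (x : ZMod N)) hi
  simpa [u, w] using this

end idx

section inOK
variable (p : ℕ) [hpf : Fact p.Prime] {F : Type} [Field F] [Fintype F] [Algebra (ZMod p) F]

theorem gauss_poly {N M : ℕ} (hN : 0 < N) (hM : M = N * p) {ζ : ℂ} (hζ : IsPrimitiveRoot ζ M)
    (hζp : ζ ^ N = zetaP p)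
    (χ : MulChar F ℂ) (hχ : χ ^ N = 1) (htriv : ∀ a : ZMod p, a ≠ 0 → χ (algebraMap (ZMod p) F a) = 1) :
    ∃ P : ℤ[X], ∀ k : ℕ, k.Coprime M → aeval (ζ ^ k) P = gaussSum (χ ^ k) (trChar p F) := by
  classical
  haveI : NeZero N := ⟨hN.ne'⟩
  have hM0 : 0 < M := hM ▸ Nat.mul_pos hN hpf.out.pos
  have hζN : IsPrimitiveRoot (ζ ^ p) N := hζ.pow hM0 (by rw [hM, mul_comm])
  have hex : ∀ x : F, ∃ e : ℕ, x ≠ 0 → χ x = (ζ ^ p) ^ e := by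
    intro x
    by_cases hx : x = 0
    · exact ⟨0, fun h => absurd hx h⟩
    · obtain ⟨e, _, he⟩ := MulChar.exists_apply_eq_pow hχ hζN hx
      exact ⟨e, fun _ => he⟩
  choose e he using hex
  refine ⟨∑ x ∈ Finset.univ.filter (fun x : F => x ≠ 0), X ^ (p * e x + N * (Algebra.trace (ZMod p) F x).val), ?_⟩
  intro k hk
  have hkp : Nat.Coprime k p := hk.coprime_dvd_right (hM ▸ Dvd.intro_left N rfl)
  have hk0 : (k : ZMod p) ≠ 0 := by
    rw [Ne, ZMod.natCast_eq_zero_iff]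
    intro h
    exact (hpf.out.coprime_iff_not_dvd.mp hkp.symm) h
  have hkF : (k : F) ≠ 0 := by
    have := (map_ne_zero (algebraMap (ZMod p) F)).mpr hk0
    rwa [map_natCast] at this
  have h1 : aeval (ζ ^ k) (∑ x ∈ Finset.univ.filter (fun x : F => x ≠ 0), (X : ℤ[X]) ^ (p * e x + N * (Algebra.trace (ZMod p) F x).val))
      = gaussSum (χ ^ k) ((trChar p F).mulShift (k : F)) := by
    rw [map_sum, gaussSum, Finset.sum_filter]
    refine Finset.sum_congr rfl fun x _ => ?_
    split_ifs with hx
    · have : trChar p F ((k : F) * x) = trChar p F x ^ k := by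
        rw [← nsmul_eq_mul, AddChar.map_nsmul_eq_pow]
      rw [AddChar.mulShift_apply, this, trChar_apply, ← hζp, MulChar.pow_apply' _ (by
        rintro rfl
        simp at hk0), he x hx, map_pow, aeval_X]
      simp only [← pow_mul, ← pow_add]
      congr 1; ring
    · push Not at hx
      rw [hx, MulChar.map_zero, zero_mul]
  rw [h1]
  have h2 := gaussSum_mulShift (χ ^ k) (trChar p F) (Units.mk0 (k : F) hkF)
  rw [Units.val_mk0] at h2
  have h3 : (χ ^ k) (k : F) = 1 := by
    have : χ (k : F) = 1 := by
      have := htriv k hk0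
      rwa [map_natCast] at this
    rw [← Units.val_mk0 hkF, MulChar.pow_apply_coe, Units.val_mk0, this, one_pow]
  rw [h3, one_mul] at h2
  exact h2

end inOK

section quad
variable (l : ℕ) [hlf : Fact l.Prime]

theorem quad_poly (hl4 : l % 4 = 3) {M m : ℕ} (hM0 : 0 < M) (hM : M = m * l) {ζ : ℂ} (hζ : IsPrimitiveRoot ζ M) :
    ∃ (P : ℤ[X]) (g : ℂ), g ^ 2 = -(l : ℂ) ∧
      ∀ k : ℕ, k.Coprime M → aeval (ζ ^ k) P = lam l k * g := by
  classical
  haveI : NeZero l := ⟨hlf.out.ne_zero⟩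
  have hξ : IsPrimitiveRoot (ζ ^ m) l := hζ.pow hM0 hM
  have hξ1 := hξ.pow_eq_one
  let ψ : AddChar (ZMod l) ℂ := AddChar.zmodChar l hξ1
  have hψ : ψ.IsPrimitive := AddChar.zmodChar_primitive_of_primitive_root l hξ
  let Q : MulChar (ZMod l) ℂ := (quadraticChar (ZMod l)).ringHomComp (Int.castRingHom ℂ)
  have hc2 : ringChar (ZMod l) ≠ 2 := by rw [ZMod.ringChar_zmod_n]; rintro rfl; omega
  have hQ1 : Q ≠ 1 := (MulChar.ringHomComp_ne_one_iff (RingHom.injective_int _)).mpr (quadraticChar_ne_one hc2)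
  have hQ2 : Q.IsQuadratic := (quadraticChar_isQuadratic (ZMod l)).comp _
  refine ⟨∑ a : ZMod l, C (quadraticChar (ZMod l) a) * X ^ (m * a.val), gaussSum Q ψ, ?_, ?_⟩
  · rw [gaussSum_sq hQ1 hQ2 hψ]
    have : Q (-1) = -1 := by
      simp only [Q, MulChar.ringHomComp_apply]
      rw [quadraticChar_neg_one hc2, ZMod.card, ZMod.χ₄_nat_three_mod_four hl4]
      simp
    rw [this, ZMod.card]; ring
  · intro k hk
    have hkl : Nat.Coprime k l := hk.coprime_dvd_right (hM ▸ Dvd.intro_left m rfl)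
    let u := ZMod.unitOfCoprime k hkl
    have h2 := gaussSum_mulShift_eq Q ψ u
    have h3 : (u : ZMod l) = k := ZMod.coe_unitOfCoprime k hkl
    rw [hQ2.inv, h3] at h2
    have h4 : Q (k : ZMod l) = lam l k := rfl
    rw [h4] at h2
    rw [← h2, map_sum, gaussSum]
    refine Finset.sum_congr rfl fun a _ => ?_
    rw [map_mul, aeval_C, map_pow, aeval_X, AddChar.mulShift_apply]
    congr 1
    have : (k : ZMod l) * a = ((k * a.val : ℕ) : ZMod l) := by simp
    rw [this, AddChar.zmodChar_apply', ← pow_mul, ← pow_mul]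
    congr 1; ring

end quad

section combine
variable (p : ℕ) [hpf : Fact p.Prime] {F : Type} [Field F] [Fintype F] [Algebra (ZMod p) F]

theorem sqrtNeg_pm (l : ℕ) {g : ℂ} (hg : g ^ 2 = -(l : ℂ)) : g = sqrtNeg l ∨ g = - sqrtNeg l := by
  rw [← sqrtNeg_sq] at hg
  exact sq_eq_sq_iff_eq_or_eq_neg.mp hg

theorem chi_neg_one (χ : MulChar F ℂ) (htriv : ∀ a : ZMod p, a ≠ 0 → χ (algebraMap (ZMod p) F a) = 1) :
    χ (-1) = 1 := by
  have := htriv (-1) (neg_ne_zero.mpr one_ne_zero)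
  simpa using this

theorem gauss_in_OK (l : ℕ) [hlf : Fact l.Prime] (hl4 : l % 4 = 3) {N f f' : ℕ} (hN0 : 0 < N) (hlN : l ∣ N)
    (hcop : Nat.Coprime p N) (hlp : lam l p = 1) (hord : orderOf (p : ZMod N) = f)
    (hf : 2 * f = Nat.totient N) (χ : MulChar F ℂ) (hχ : orderOf χ = N) (hχ1 : χ ≠ 1)
    (hcard : Fintype.card F = p ^ f')
    (htriv : ∀ a : ZMod p, a ≠ 0 → χ (algebraMap (ZMod p) F a) = 1) :
    ∃ a b : ℤ, gaussSum χ (trChar p F) = (a + b * sqrtNeg l) / 2 := by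
  have hl := hlf.out
  have hp := hpf.out
  have hM0 : 0 < N * p := Nat.mul_pos hN0 hp.pos
  obtain ⟨m, hm⟩ := hlN
  have hlN : l ∣ N := ⟨m, hm⟩
  have hζ := Complex.isPrimitiveRoot_exp (N * p) hM0.ne'
  set ζ := Complex.exp (2 * Real.pi * I / ((N * p : ℕ) : ℂ)) with hζd
  have hζp : ζ ^ N = zetaP p := by
    rw [hζd, ← Complex.exp_nat_mul, zetaP]
    congr 1
    have : (N : ℂ) ≠ 0 := by exact_mod_cast hN0.ne'
    push_cast
    field_simp
  have hχN : χ ^ N = 1 := by rw [← hχ]; exact pow_orderOf_eq_one _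
  obtain ⟨P1, hP1⟩ := gauss_poly p hN0 rfl hζ hζp χ hχN htriv
  obtain ⟨P2, hP2⟩ := gauss_poly p hN0 rfl hζ hζp χ⁻¹ (by rw [inv_pow, hχN, inv_one]) (by
    intro a ha
    rw [MulChar.inv_apply', ← map_inv₀]
    exact htriv _ (inv_ne_zero ha))
  obtain ⟨Pg, g, hg2, hPg⟩ := quad_poly l hl4 hM0 (m := m * p) (by rw [hm]; ring) hζ
  set z := gaussSum χ (trChar p F) with hz
  set z' := gaussSum χ⁻¹ (trChar p F) with hz'
  have hconj : (starRingEnd ℂ) z = z' := gauss_conj p χ (chi_neg_one p χ htriv)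
  have hplus : ∀ (c : ℕ), Nat.Coprime c N → lam l c = 1 →
      gaussSum (χ ^ c) (trChar p F) = z ∧ gaussSum (χ⁻¹ ^ c) (trChar p F) = z' := by
    intro c hc hlc
    obtain ⟨i, hi⟩ := index_two l hl4 N p f hN0 hlN hcop hlp hord hf c hc hlc
    rw [ZMod.natCast_eq_natCast_iff] at hi
    have e : χ ^ c = χ ^ (p ^ i) := (pow_eq_pow_of_modEq hi hχN).symm
    rw [inv_pow, e, gauss_frob_pow, ← inv_pow, gauss_frob_pow]
    exact ⟨rfl, rfl⟩
  have hcases : ∀ (c : ℕ), Nat.Coprime c (N * p) →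
      (lam l c = 1 ∧ gaussSum (χ ^ c) (trChar p F) = z ∧ gaussSum (χ⁻¹ ^ c) (trChar p F) = z') ∨
      (lam l c = -1 ∧ gaussSum (χ ^ c) (trChar p F) = z' ∧ gaussSum (χ⁻¹ ^ c) (trChar p F) = z) := by
    intro c hc
    have hcN : Nat.Coprime c N := hc.coprime_dvd_right (Dvd.intro _ rfl)
    have hcl : ¬ l ∣ c := by
      intro h
      have := Nat.dvd_gcd h hlN
      rw [hcN.gcd_eq_one] at this
      exact hl.one_lt.ne' (Nat.dvd_one.mp this)
    rcases lam_pm l hcl with h | h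
    · left; exact ⟨h, hplus c hcN h⟩
    · right
      refine ⟨h, ?_⟩
      have hle : c ≤ N * c := Nat.le_mul_of_pos_left _ hN0
      have h2 := hplus (N * c - c) (by
        rw [← Nat.sub_one_mul]
        refine Nat.Coprime.mul_left ?_ hcN
        exact (Nat.coprime_self_sub_left hN0).mpr (Nat.coprime_one_left N)) (by
        rw [lam_neg l hl4 (Dvd.dvd.mul_right hlN c) hle, h]; norm_num)
      have e : χ ^ (N * c - c) = (χ ^ c)⁻¹ := by
        rw [eq_inv_iff_mul_eq_one, ← pow_add, Nat.sub_add_cancel hle, pow_mul, hχN, one_pow]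
      rw [inv_pow, e, inv_inv] at h2
      rw [inv_pow]
      exact ⟨h2.2, h2.1⟩
  have hone : Nat.Coprime 1 (N * p) := Nat.coprime_one_left _
  have h11 := hP1 1 hone
  have h21 := hP2 1 hone
  have hg1 := hPg 1 hone
  have hl1 : lam l 1 = 1 := by simp [lam]
  rw [pow_one, pow_one] at h11 h21
  rw [pow_one, hl1, Int.cast_one, one_mul] at hg1
  obtain ⟨a, ha⟩ := int_of_fixed hM0 hζ (P1 + P2) (by
    intro k hk
    rw [map_add, map_add, hP1 k hk, hP2 k hk, h11, h21]
    rcases hcases k hk with ⟨_, h1, h2⟩ | ⟨_, h1, h2⟩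
    · rw [h1, h2]
    · rw [h1, h2, add_comm])
  obtain ⟨n, hn⟩ := int_of_fixed hM0 hζ ((P1 - P2) * Pg) (by
    intro k hk
    rw [map_mul, map_mul, map_sub, map_sub, hP1 k hk, hP2 k hk, h11, h21, hg1, hPg k hk]
    rcases hcases k hk with ⟨h0, h1, h2⟩ | ⟨h0, h1, h2⟩
    · rw [h1, h2, h0, Int.cast_one, one_mul]
    · rw [h1, h2, h0]; push_cast; ring)
  rw [map_add, h11, h21, ← hz, ← hz'] at ha
  rw [map_mul, map_sub, h11, h21, hg1, ← hz, ← hz'] at hn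
  have hnorm : z * z' = (p : ℂ) ^ f' := by
    rw [← hconj, hz, gauss_norm p χ hχ1, hcard]; push_cast; rfl
  have hl0 : (l : ℂ) ≠ 0 := by exact_mod_cast hl.ne_zero
  have hsq : (n : ℤ) ^ 2 = -(l : ℤ) * (a ^ 2 - 4 * (p : ℤ) ^ f') := by
    have : ((n : ℤ) : ℂ) ^ 2 = -(l : ℂ) * ((a : ℂ) ^ 2 - 4 * (p : ℂ) ^ f') := by
      rw [← hn, ← ha, mul_pow, hg2, ← hnorm]; ring
    exact_mod_cast this
  have hln : (l : ℤ) ∣ n := by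
    have h1 : (l : ℤ) ∣ n ^ 2 := ⟨-(a ^ 2 - 4 * (p : ℤ) ^ f'), by rw [hsq]; ring⟩
    exact (Nat.prime_iff_prime_int.mp hl).dvd_of_dvd_pow h1
  obtain ⟨b, rfl⟩ := hln
  have hsub : z - z' = -(b : ℂ) * g := by
    have h1 : (z - z') * g * g = (((l : ℤ) * b : ℤ) : ℂ) * g := by rw [hn]
    have h2 : (z - z') * g * g = (z - z') * g ^ 2 := by ring
    rw [h2, hg2] at h1
    push_cast at h1
    have : (l : ℂ) * (z - z') = (l : ℂ) * (-(b : ℂ) * g) := by linear_combination -h1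
    exact mul_left_cancel₀ hl0 this
  rcases sqrtNeg_pm l hg2 with h | h
  · refine ⟨a, -b, ?_⟩
    rw [h] at hsub
    push_cast
    linear_combination (1/2) * ha + (1/2) * hsub
  · refine ⟨a, b, ?_⟩
    rw [h] at hsub
    linear_combination (1/2) * ha + (1/2) * hsub

theorem chi_triv {f N : ℕ} (hcard : Fintype.card F = p ^ f) (χ : MulChar F ℂ) (hχ : χ ^ N = 1)
    (hN : N ∣ ∑ i ∈ Finset.range f, p ^ i) :
    ∀ a : ZMod p, a ≠ 0 → χ (algebraMap (ZMod p) F a) = 1 := by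
  intro a ha
  obtain ⟨u, hu⟩ := FiniteField.unitsMap_norm_surjective (ZMod p) F (Units.mk0 a ha)
  have h1 : Algebra.norm (ZMod p) (u : F) = a := by
    have := congrArg Units.val hu
    simpa using this
  have hfr : Module.finrank (ZMod p) F = f := by
    rw [card_F p F] at hcard
    exact Nat.pow_right_injective hpf.out.two_le hcard
  have h2 := FiniteField.algebraMap_norm_eq_pow_sum (K := ZMod p) (L := F) (x := (u : F))
  obtain ⟨m, hm⟩ := hN
  rw [h1, hfr, Nat.card_eq_fintype_card, ZMod.card, hm] at h2
  rw [h2, pow_mul, map_pow, map_pow, ← MulChar.pow_apply_coe, hχ, MulChar.one_apply_coe, one_pow]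

theorem arith_facts (l r : ℕ) [hlf : Fact l.Prime] (hl4 : l % 4 = 3) (hl3 : 3 < l) (hr : 1 ≤ r)
    (hNp : Nat.gcd (4 * l ^ r) p = 1) (hp4 : p % 4 = 3)
    (hord : orderOf (p : ZMod (l ^ r)) = Nat.totient (l ^ r) / 2) {f : ℕ}
    (hf : orderOf (p : ZMod (4 * l ^ r)) = f) (hind : f = Nat.totient (4 * l ^ r) / 2) :
    lam l p = 1 ∧ 2 * f = Nat.totient (4 * l ^ r) ∧ f = l ^ (r - 1) * (l - 1) ∧ f % 4 = 2 ∧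
      4 * l ^ r ∣ ∑ i ∈ Finset.range f, p ^ i := by
  have hl := hlf.out
  have hp := hpf.out
  obtain ⟨r, rfl⟩ : ∃ s, r = s + 1 := ⟨r - 1, by omega⟩
  have htot : Nat.totient (l ^ (r + 1)) = l ^ r * (l - 1) := by
    rw [Nat.totient_prime_pow hl (by omega)]; simp
  have hcop4 : Nat.Coprime 4 (l ^ (r + 1)) := by
    apply Nat.Coprime.pow_right
    rw [show 4 = 2 ^ 2 by norm_num]
    apply Nat.Coprime.pow_left
    rw [Nat.coprime_primes Nat.prime_two hl]; omega
  have htotN : Nat.totient (4 * l ^ (r + 1)) = 2 * (l ^ r * (l - 1)) := by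
    rw [Nat.totient_mul hcop4, htot]; rfl
  have hfv : f = l ^ r * (l - 1) := by rw [hind, htotN]; simp
  have hlodd : l ^ r % 2 = 1 := by
    rw [← Nat.odd_iff]; apply Odd.pow; rw [Nat.odd_iff]; omega
  obtain ⟨t, ht⟩ : ∃ t, l = 4 * t + 3 := ⟨l / 4, by omega⟩
  have hord' : orderOf (p : ZMod (l ^ (r + 1))) = l ^ r * (2 * t + 1) := by
    rw [hord, htot, show l - 1 = 2 * (2 * t + 1) by omega, mul_left_comm]; simp
  have hfv' : f = 2 * (l ^ r * (2 * t + 1)) := by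
    rw [hfv, show l - 1 = 2 * (2 * t + 1) by omega]; ring
  have hoddm : (l ^ r * (2 * t + 1)) % 2 = 1 := by
    rw [Nat.mul_mod, hlodd]; omega
  have hcopl : Nat.Coprime p l := by
    have : Nat.Coprime (4 * l ^ (r + 1)) p := hNp
    exact (this.coprime_dvd_left (Dvd.dvd.mul_left (dvd_pow_self l (by omega)) 4)).symm
  have hpl : ¬ l ∣ p := by
    intro h; exact (hl.coprime_iff_not_dvd.mp hcopl.symm) h
  have hpm : ((p ^ (l ^ r * (2 * t + 1)) : ℕ) : ZMod (l ^ (r + 1))) = (1 : ℕ) := by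
    push_cast; rw [← hord', pow_orderOf_eq_one]
  have hlam : lam l p = 1 := by
    have h1 : ((p ^ (l ^ r * (2 * t + 1)) : ℕ) : ZMod l) = (1 : ℕ) := by
      rw [ZMod.natCast_eq_natCast_iff] at hpm ⊢
      exact hpm.of_dvd (dvd_pow_self l (by omega))
    have h2 : lam l p ^ (l ^ r * (2 * t + 1)) = 1 := by
      rw [lam, ← map_pow, ← Nat.cast_pow, h1]; simp
    rcases lam_pm l hpl with h | h
    · exact h
    · rw [h, (Nat.odd_iff.mpr hoddm).neg_one_pow] at h2
      norm_num at h2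
  have hf4 : f % 4 = 2 := by omega
  refine ⟨hlam, by rw [htotN, hfv], by rw [hfv]; simp, hf4, ?_⟩
  apply Nat.Coprime.mul_dvd_of_dvd_of_dvd hcop4
  · have : ∀ n, 4 ∣ ∑ i ∈ Finset.range (2 * n), p ^ i := by
      intro n
      induction n with
      | zero => simp
      | succ n ih =>
        rw [show 2 * (n + 1) = 2 * n + 1 + 1 by ring, Finset.sum_range_succ, Finset.sum_range_succ, add_assoc]
        refine Nat.dvd_add ih ?_
        rw [show p ^ (2 * n) + p ^ (2 * n + 1) = p ^ (2 * n) * (p + 1) by ring]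
        exact Dvd.dvd.mul_left (by omega) _
    rw [hfv']; exact this _
  · have h1 : (∑ i ∈ Finset.range f, p ^ i) * (p - 1) = p ^ f - 1 := geom_sum_mul_of_one_le hp.one_lt.le f
    have h2 : l ^ (r + 1) ∣ p ^ f - 1 := by
      rw [← Nat.modEq_iff_dvd' (Nat.one_le_pow _ _ hp.pos), ← ZMod.natCast_eq_natCast_iff]
      rw [hfv', mul_comm 2, pow_mul, Nat.cast_pow, hpm]; simp
    rw [← h1] at h2
    refine Nat.Coprime.dvd_of_dvd_mul_right ?_ h2
    apply Nat.Coprime.pow_left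
    rw [hl.coprime_iff_not_dvd]
    intro hd
    -- p ≡ 1 mod l
    have h3 : ∀ s, l ^ (s + 1) ∣ p ^ (l ^ s) - 1 := by
      intro s
      have h4 : (1 : ℤ) ≡ p [ZMOD l] := by
        have := (Nat.modEq_iff_dvd' hp.one_lt.le).mpr hd
        exact (Int.natCast_modEq_iff).mpr this
      have h5 : ((l : ℤ)) ^ (s + 1) ∣ (p : ℤ) ^ l ^ s - 1 ^ l ^ s :=
        dvd_sub_pow_of_dvd_sub h4.dvd s
      rw [one_pow] at h5
      have : ((l ^ (s + 1) : ℕ) : ℤ) ∣ ((p ^ l ^ s - 1 : ℕ) : ℤ) := by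
        rw [Nat.cast_sub (Nat.one_le_pow _ _ hp.pos)]; push_cast; exact h5
      exact_mod_cast this
    have h6 : orderOf (p : ZMod (l ^ (r + 1))) ∣ l ^ r := by
      rw [orderOf_dvd_iff_pow_eq_one]
      have := (Nat.modEq_iff_dvd' (Nat.one_le_pow _ _ hp.pos)).mpr (h3 r)
      rw [← ZMod.natCast_eq_natCast_iff] at this
      push_cast at this
      exact this.symm
    rw [hord'] at h6
    have h7 := Nat.le_of_dvd (Nat.pow_pos hl.pos) h6
    have h8 : 2 * t + 1 ≤ 1 := by
      refine Nat.le_of_mul_le_mul_left (c := l ^ r) ?_ (Nat.pow_pos hl.pos)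
      rw [mul_one]; exact h7
    omega

end combine

section quartic
variable (p : ℕ) [hpf : Fact p.Prime] {F : Type} [Field F] [Fintype F] [Algebra (ZMod p) F]

theorem trChar_pow_frob (y : F) (m : ℕ) : trChar p F (y ^ p ^ m) = trChar p F y := by
  induction m with
  | zero => simp
  | succ m ih => rw [pow_succ, pow_mul, trChar_frob, ih]

theorem quartic_gauss (hp4 : p % 4 = 3) {m : ℕ} (hm : m % 2 = 1) (hcard : Fintype.card F = p ^ (2 * m))
    (ψ : MulChar F ℂ) (hψ : orderOf ψ = 4) :
    gaussSum ψ (trChar p F) = (-1) ^ ((p + 1) / 4) * (p : ℂ) ^ m := by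
  classical
  have hp := hpf.out
  haveI : CharP F p := charP_of_injective_algebraMap (algebraMap (ZMod p) F).injective p
  set Q := p ^ m with hQ
  have hq : Fintype.card F = Q * Q := by rw [hcard, hQ]; ring
  have hQ8 : Q % 8 = p % 8 := by
    obtain ⟨t, rfl⟩ : ∃ t, m = 2 * t + 1 := ⟨m / 2, by omega⟩
    rw [hQ, pow_succ, pow_mul, Nat.mul_mod, Nat.pow_mod]
    have : p ^ 2 % 8 = 1 := by
      rw [Nat.pow_mod]
      have : p % 8 = 3 ∨ p % 8 = 7 := by omega
      rcases this with h | h <;> rw [h]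
    rw [this]; simp
  have hQ4 : Q % 4 = 3 := by omega
  obtain ⟨w, hw⟩ : ∃ w, Q + 1 = 4 * w := ⟨(Q + 1) / 4, by omega⟩
  have hq1 : Fintype.card F - 1 = (Q - 1) * (4 * w) := by
    rw [hq, ← hw]
    obtain ⟨s, hs⟩ : ∃ s, Q = s + 1 := ⟨Q - 1, by omega⟩
    rw [hs]; simp; ring_nf; omega
  obtain ⟨g, hg⟩ := IsCyclic.exists_generator (α := Fˣ)
  have hgo : orderOf g = (Q - 1) * (4 * w) := by
    rw [orderOf_eq_card_of_forall_mem_zpowers hg, Nat.card_eq_fintype_card, Fintype.card_units, hq1]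
  have hψ4 : ψ ^ 4 = 1 := by rw [← hψ]; exact pow_orderOf_eq_one _
  -- V
  let V : Finset F := Finset.univ.filter (fun c => c ^ Q = c)
  have hV : ∀ c, c ∈ V ↔ c ^ Q = c := by intro c; simp [V]
  have hV0 : (0 : F) ∈ V := by rw [hV]; exact zero_pow (by omega)
  have hVmul : ∀ c, c ∈ V → c ≠ 0 → ∃ y : F, y ≠ 0 ∧ c = y ^ 4 := by
    intro c hc hc0
    rw [hV] at hc
    have : (Units.mk0 c hc0) ∈ Submonoid.powers g := by rw [mem_powers_iff_mem_zpowers]; exact hg _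
    obtain ⟨k, hk⟩ := this
    have h1 : (Units.mk0 c hc0) ^ (Q - 1) = 1 := by
      ext
      rw [Units.val_pow_eq_pow_val, Units.val_mk0, Units.val_one]
      have : c ^ (Q - 1) * c = 1 * c := by rw [← pow_succ, Nat.sub_add_cancel (by omega), hc, one_mul]
      exact mul_right_cancel₀ hc0 this
    change g ^ k = _ at hk
    rw [← hk, ← pow_mul, ← orderOf_dvd_iff_pow_eq_one, hgo, mul_comm k] at h1
    have h2 := Nat.dvd_of_mul_dvd_mul_left (by omega) h1
    obtain ⟨k', rfl⟩ := (Dvd.intro _ rfl : 4 ∣ 4 * w).trans h2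
    refine ⟨(g ^ k' : Fˣ), Units.ne_zero _, ?_⟩
    have := congrArg Units.val hk
    rw [Units.val_mk0] at this
    rw [← this, mul_comm 4, pow_mul]; simp
  have hψV : ∀ c, c ∈ V → c ≠ 0 → ψ c = 1 := by
    intro c hc hc0
    obtain ⟨y, hy, rfl⟩ := hVmul c hc hc0
    rw [map_pow, ← MulChar.pow_apply' _ (by norm_num), hψ4, MulChar.one_apply (isUnit_iff_ne_zero.mpr hy)]
  have hVadd : ∀ c d, c ∈ V → d ∈ V → c + d ∈ V := by
    intro c d hc hd
    rw [hV] at *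
    rw [hQ, add_pow_char_pow, ← hQ, hc, hd]
  have hVneg : ∀ c, c ∈ V → -c ∈ V := by
    intro c hc
    rw [hV] at *
    rw [Odd.neg_pow (Nat.odd_iff.mpr (by omega)), hc]
  -- card V ≥ Q
  have hVcard : Q ≤ V.card := by
    have h1 : (Finset.range (Q - 1)).image (fun j => ((g ^ (4 * w * j) : Fˣ) : F)) ⊆ V.erase 0 := by
      intro c hc
      rw [Finset.mem_image] at hc
      obtain ⟨j, _, rfl⟩ := hc
      rw [Finset.mem_erase, hV]
      refine ⟨Units.ne_zero _, ?_⟩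
      rw [← Units.val_pow_eq_pow_val]
      congr 1
      rw [← pow_mul, pow_eq_pow_iff_modEq, hgo]
      have : 4 * w * j * Q = 4 * w * j + (Q - 1) * (4 * w) * j := by
        conv_lhs => rw [show Q = (Q - 1) + 1 by omega]
        ring
      rw [this]
      simp [Nat.ModEq]
    have h2 := Finset.card_le_card h1
    rw [Finset.card_image_of_injOn, Finset.card_range, Finset.card_erase_of_mem hV0] at h2
    · have : 0 < V.card := Finset.card_pos.mpr ⟨0, hV0⟩
      omega
    · intro i hi j hj hij
      have := Units.val_injective hij
      have hlt : ∀ i, i ∈ (Finset.range (Q - 1) : Set ℕ) → 4 * w * i < orderOf g := by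
        intro i hi
        have : i < Q - 1 := by simpa using hi
        rw [hgo, mul_comm (Q - 1)]
        exact Nat.mul_lt_mul_of_pos_left this (by omega)
      have h3 := pow_injOn_Iio_orderOf (hlt i hi) (hlt j hj) this
      exact Nat.eq_of_mul_eq_mul_left (by omega) h3
  -- T
  let e := trChar p F
  let T : Finset F := Finset.univ.filter (fun x => ∀ c ∈ V, e (c * x) = 1)
  have hT : ∀ x, x ∈ T ↔ ∀ c ∈ V, e (c * x) = 1 := by intro c; simp [T]
  have hsumV : ∀ x, ∑ c ∈ V, e (c * x) = if x ∈ T then (V.card : ℂ) else 0 := by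
    intro x
    split_ifs with h
    · rw [hT] at h
      rw [Finset.sum_congr rfl h]; simp
    · rw [hT] at h
      push Not at h
      obtain ⟨c0, hc0, hne⟩ := h
      have : ∑ c ∈ V, e (c * x) = e (c0 * x) * ∑ c ∈ V, e (c * x) := by
        rw [Finset.mul_sum]
        refine Finset.sum_nbij' (fun c => c - c0) (fun c => c + c0) ?_ ?_ ?_ ?_ ?_
        · intro c hc; rw [sub_eq_add_neg]; exact hVadd _ _ hc (hVneg _ hc0)
        · intro c hc; exact hVadd _ _ hc hc0
        · intro c _; simp
        · intro c _; simp
        · intro c _; rw [← AddChar.map_add_eq_mul]; congr 1; ring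
      have h2 : (e (c0 * x) - 1) * ∑ c ∈ V, e (c * x) = 0 := by linear_combination -this
      exact (mul_eq_zero.mp h2).resolve_left (sub_ne_zero.mpr hne)
  have hTcard : V.card * T.card = Q * Q := by
    have h1 : ∑ x : F, ∑ c ∈ V, e (c * x) = (Q * Q : ℕ) := by
      rw [Finset.sum_comm, ← Finset.sum_erase_add _ _ hV0, Finset.sum_eq_zero]
      · simp [hq]
      · intro c hc
        have hc0 := Finset.ne_of_mem_erase hc
        have := AddChar.sum_mulShift c (trChar_prim p F)
        rw [if_neg hc0] at this
        simpa [e, mul_comm] using this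
    simp_rw [hsumV] at h1
    rw [← Finset.sum_filter, Finset.sum_const, nsmul_eq_mul, Finset.filter_mem_eq_inter, Finset.univ_inter] at h1
    rw [mul_comm]
    exact_mod_cast h1
  -- x0
  let x0 : F := ((g ^ (2 * w) : Fˣ) : F)
  have hx00 : x0 ≠ 0 := Units.ne_zero _
  have hx0 : x0 ^ Q = - x0 := by
    have h1 : x0 ^ (Q - 1) = -1 := by
      have h2 : (x0 ^ (Q - 1)) ^ 2 = 1 := by
        simp only [x0]
        rw [← Units.val_pow_eq_pow_val, ← Units.val_pow_eq_pow_val, ← pow_mul, ← pow_mul,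
          show 2 * w * ((Q - 1) * 2) = (Q - 1) * (4 * w) by ring, ← hgo, pow_orderOf_eq_one, Units.val_one]
      rcases mul_self_eq_one_iff.mp ((pow_two _).symm.trans h2) with h3 | h3
      · exfalso
        simp only [x0] at h3
        rw [← Units.val_pow_eq_pow_val, Units.val_eq_one, ← pow_mul, ← orderOf_dvd_iff_pow_eq_one, hgo] at h3
        have := Nat.le_of_dvd (Nat.mul_pos (by omega) (by omega)) h3
        have h5 : 2 * w * (Q - 1) < (Q - 1) * (4 * w) := by
          rw [mul_comm]
          exact Nat.mul_lt_mul_of_pos_left (by omega) (by omega)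
        omega
      · exact h3
    rw [show Q = (Q - 1) + 1 by omega, pow_succ, h1]; ring
  have hp2 : p ≠ 2 := by rintro rfl; omega
  have hx0T : ∀ c ∈ V, x0 * c ∈ T := by
    intro c hc
    rw [hT]
    intro d hd
    set y := d * (x0 * c)
    have hy : y ^ Q = - y := by
      rw [hV] at hc hd
      simp only [y, mul_pow, hc, hd, hx0]; ring
    have h1 : e y = e (-y) := by rw [← hy]; exact (trChar_pow_frob p y m).symm
    have h2 : e y ^ 2 = 1 := by
      rw [pow_two]; nth_rewrite 2 [h1]; rw [← AddChar.map_add_eq_mul]; simp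
    have h3 : e y ^ p = 1 := by
      rw [← AddChar.map_nsmul_eq_pow, nsmul_eq_mul, CharP.cast_eq_zero, zero_mul, AddChar.map_zero_eq_one]
    have hc2 : Nat.Coprime 2 p := (Nat.coprime_primes Nat.prime_two hp).mpr (Ne.symm hp2)
    have := orderOf_dvd_of_pow_eq_one h2
    have h5 := Nat.dvd_gcd this (orderOf_dvd_of_pow_eq_one h3)
    rw [hc2.gcd_eq_one, Nat.dvd_one, orderOf_eq_one_iff] at h5
    exact h5
  have hsub : V.image (fun c => x0 * c) ⊆ T := by
    intro x hx
    rw [Finset.mem_image] at hx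
    obtain ⟨c, hc, rfl⟩ := hx
    exact hx0T c hc
  have hinj : Function.Injective (fun c : F => x0 * c) := mul_right_injective₀ hx00
  have hle : V.card ≤ T.card := by
    have := Finset.card_le_card hsub
    rwa [Finset.card_image_of_injective _ hinj] at this
  have hVc : V.card = Q := by nlinarith
  have hTc : T.card = Q := by
    rw [hVc] at hTcard; exact Nat.eq_of_mul_eq_mul_left (by omega) hTcard
  have hTeq : V.image (fun c => x0 * c) = T := by
    apply Finset.eq_of_subset_of_card_le hsub
    rw [Finset.card_image_of_injective _ hinj, hVc, hTc]
  have hψ1 : ψ ≠ 1 := by rintro rfl; simp at hψ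
  have hsumT : ∑ x ∈ T, ψ x = ψ x0 * (Q - 1) := by
    rw [← hTeq, Finset.sum_image (fun _ _ _ _ h => hinj h)]
    simp only [map_mul, ← Finset.mul_sum]
    congr 1
    rw [← Finset.sum_erase_add _ _ hV0, MulChar.map_zero, add_zero,
      Finset.sum_congr rfl (g := fun _ => (1:ℂ)), Finset.sum_const, Finset.card_erase_of_mem hV0, hVc,
      nsmul_eq_mul, mul_one, Nat.cast_sub (by omega), Nat.cast_one]
    intro c hc
    exact hψV c (Finset.mem_of_mem_erase hc) (Finset.ne_of_mem_erase hc)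
  have hmain : ((Q : ℂ) - 1) * gaussSum ψ e = Q * ∑ x ∈ T, ψ x := by
    have h1 : ∑ c ∈ V.erase 0, gaussSum ψ e = ((Q : ℂ) - 1) * gaussSum ψ e := by
      rw [Finset.sum_const, Finset.card_erase_of_mem hV0, hVc, nsmul_eq_mul, Nat.cast_sub (by omega), Nat.cast_one]
    have h2 : ∀ c ∈ V.erase 0, gaussSum ψ e = ∑ x, ψ x * e (c * x) := by
      intro c hc
      have hc0 := Finset.ne_of_mem_erase hc
      have := gaussSum_mulShift ψ e (Units.mk0 c hc0)
      rw [Units.val_mk0, hψV c (Finset.mem_of_mem_erase hc) hc0, one_mul] at this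
      rw [← this]; rfl
    rw [← h1, Finset.sum_congr rfl h2, Finset.sum_comm]
    have h3 : ∀ x, ∑ c ∈ V.erase 0, ψ x * e (c * x) = ψ x * (if x ∈ T then (Q : ℂ) else 0) - ψ x := by
      intro x
      rw [← Finset.mul_sum]
      have := hsumV x
      rw [← Finset.sum_erase_add _ _ hV0, zero_mul, AddChar.map_zero_eq_one, hVc] at this
      rw [← this]; ring
    simp_rw [h3]
    rw [Finset.sum_sub_distrib, MulChar.sum_eq_zero_of_ne_one hψ1, sub_zero]
    simp only [mul_ite, mul_zero]
    rw [← Finset.sum_filter, Finset.filter_mem_eq_inter, Finset.univ_inter, Finset.mul_sum]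
    exact Finset.sum_congr rfl fun _ _ => mul_comm _ _
  have hψg : ψ (g : F) ^ 2 = -1 := by
    have h1 : (ψ (g : F) ^ 2) ^ 2 = 1 := by
      rw [← pow_mul, ← MulChar.pow_apply_coe]; norm_num [hψ4]
    rcases mul_self_eq_one_iff.mp ((pow_two _).symm.trans h1) with h3 | h3
    · exfalso
      have : ψ ^ 2 = 1 := by
        rw [MulChar.eq_iff hg, MulChar.pow_apply_coe, h3, MulChar.one_apply_coe]
      have := orderOf_dvd_of_pow_eq_one this
      rw [hψ] at this
      omega
    · exact h3
  have hψx0 : ψ x0 = (-1) ^ ((p + 1) / 4) := by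
    simp only [x0]
    rw [Units.val_pow_eq_pow_val, map_pow, pow_mul, hψg]
    have : w % 2 = ((p + 1) / 4) % 2 := by omega
    rw [neg_one_pow_eq_pow_mod_two, this, ← neg_one_pow_eq_pow_mod_two]
  rw [hsumT, hψx0] at hmain
  have hQ1 : (Q : ℂ) - 1 ≠ 0 := by
    rw [sub_ne_zero]; norm_cast; omega
  have : ((Q : ℂ) - 1) * gaussSum ψ e = ((Q : ℂ) - 1) * ((-1) ^ ((p + 1) / 4) * (p : ℂ) ^ m) := by
    rw [hmain, hQ]; push_cast; ring
  exact mul_left_cancel₀ hQ1 this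

end quartic

theorem val_frob_sum {ι : Type*} (B : ValuationSubring ℂ) (l : ℕ) (hl : l.Prime)
    (hB : B.valuation (l : ℂ) < 1) (s : Finset ι) (y : ι → ℂ) (hy : ∀ i, B.valuation (y i) ≤ 1) (r : ℕ) :
    B.valuation ((∑ i ∈ s, y i) ^ l ^ r - ∑ i ∈ s, y i ^ l ^ r) < 1 := by
  haveI : Fact l.Prime := ⟨hl⟩
  let ρ := IsLocalRing.residue B
  have hker : ∀ x : B, B.valuation (x : ℂ) < 1 ↔ ρ x = 0 := by
    intro x
    rw [IsLocalRing.residue_eq_zero_iff, ValuationSubring.valuation_lt_one_iff]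
  have hl0 : ρ (l : B) = 0 := (hker _).mp (by simpa using hB)
  rw [map_natCast] at hl0
  haveI : CharP (IsLocalRing.ResidueField B) l := by
    rcases hl.eq_one_or_self_of_dvd (ringChar (IsLocalRing.ResidueField B)) (ringChar.dvd hl0) with h | h
    · have := ringChar.spec (IsLocalRing.ResidueField B) 1
      rw [h] at this
      simp at this
    · exact ringChar.of_eq h
  let y' : ι → B := fun i => ⟨y i, (B.valuation_le_one_iff _).mp (hy i)⟩
  have h := (hker ((∑ i ∈ s, y' i) ^ l ^ r - ∑ i ∈ s, y' i ^ l ^ r)).mpr (by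
    rw [map_sub, map_pow, map_sum, map_sum, sum_pow_char_pow]
    simp)
  simpa [y'] using h

theorem val_int_unit (B : ValuationSubring ℂ) (l : ℕ)
    (hB : B.valuation (l : ℂ) < 1) (n : ℤ) (hn : IsCoprime n l) : B.valuation (n : ℂ) = 1 := by
  have hint : ∀ m : ℤ, B.valuation (m : ℂ) ≤ 1 := fun m =>
    val_le_one_of_integral B (by simpa using isIntegral_algebraMap (R := ℤ) (A := ℂ) (x := m))
  refine le_antisymm (hint n) ?_
  by_contra hlt
  push Not at hlt
  obtain ⟨a, b, hab⟩ := hn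
  have h1 : B.valuation ((a : ℂ) * n + b * l) = 1 := by
    have : ((a : ℂ) * n + b * l) = 1 := by exact_mod_cast congrArg (Int.cast : ℤ → ℂ) hab
    rw [this, map_one]
  have h2 : B.valuation ((a : ℂ) * n + b * l) < 1 := by
    refine Valuation.map_add_lt _ ?_ ?_
    · rw [map_mul]; exact (mul_le_of_le_one_left' (hint a)).trans_lt hlt
    · rw [map_mul]; exact (mul_le_of_le_one_left' (hint b)).trans_lt hB
  exact absurd h1 h2.ne

section
variable (p : ℕ) [hpf : Fact p.Prime] {F : Type} [Field F] [Fintype F] [Algebra (ZMod p) F]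

theorem sign_lemma (l r f : ℕ) (hl : l.Prime) (hl2 : l ≠ 2) (hlp : ¬ p = l) (B : ValuationSubring ℂ)
    (hB : B.valuation (l : ℂ) < 1) (hp4 : p % 4 = 3) (hf : f % 4 = 2) (hcard : Fintype.card F = p ^ f)
    (χ : MulChar F ℂ) (hχ : orderOf χ = 4 * l ^ r)
    (htriv : ∀ a : ZMod p, a ≠ 0 → χ (algebraMap (ZMod p) F a) = 1) (δ : ℤ) (hδ : δ = 1 ∨ δ = -1)
    (h : B.valuation (gaussSum χ (trChar p F) - δ * (p : ℂ) ^ (f / 2)) < 1) :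
    δ = (-1) ^ ((p + 1) / 4) := by
  haveI : Fact l.Prime := ⟨hl⟩
  have hlpos : 0 < l ^ r := pow_pos hl.pos r
  have h4 : orderOf (χ ^ l ^ r) = 4 := by
    rw [orderOf_pow_of_dvd hlpos.ne' (by rw [hχ]; exact Dvd.intro_left 4 rfl), hχ]
    exact Nat.mul_div_cancel _ hlpos
  have hq := quartic_gauss p hp4 (m := f / 2) (by omega) (by rw [hcard]; congr 1; omega) (χ ^ l ^ r) h4
  set e := trChar p F
  have hlF : ((l ^ r : ℕ) : ZMod p) ≠ 0 := by
    rw [Ne, ZMod.natCast_eq_zero_iff]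
    intro h1
    have := (Nat.prime_dvd_prime_iff_eq hpf.out hl).mp (hpf.out.dvd_of_dvd_pow h1)
    exact hlp this
  have hlF' : ((l ^ r : ℕ) : F) = algebraMap (ZMod p) F ((l ^ r : ℕ) : ZMod p) := by rw [map_natCast]
  have hlF0 : ((l ^ r : ℕ) : F) ≠ 0 := by
    rw [hlF', Ne, map_eq_zero]; exact hlF
  have h5 : ∑ x : F, (χ x * e x) ^ l ^ r = gaussSum (χ ^ l ^ r) e := by
    rw [← gaussSum_mulShift (χ ^ l ^ r) e (Units.mk0 _ hlF0), Units.val_mk0, MulChar.pow_apply' _ hlpos.ne',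
      hlF', htriv _ hlF, one_pow, one_mul, ← hlF']
    unfold gaussSum
    refine Finset.sum_congr rfl fun x _ => ?_
    rw [mul_pow, MulChar.pow_apply' _ hlpos.ne', AddChar.mulShift_apply, ← nsmul_eq_mul, AddChar.map_nsmul_eq_pow]
  have h6 := val_frob_sum B l hl hB Finset.univ (fun x : F => χ x * e x) (fun x => by
    refine val_le_one_of_integral B ((mulChar_integral χ x).mul (trChar_integral x))) r
  have h7 := val_frob_sum B l hl hB Finset.univ ![gaussSum χ e - δ * (p : ℂ) ^ (f / 2), δ * (p : ℂ) ^ (f / 2)]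
    (by
      intro i
      fin_cases i
      · exact h.le
      · refine val_le_one_of_integral B ?_
        have := isIntegral_algebraMap (R := ℤ) (A := ℂ) (x := δ * (p:ℤ) ^ (f / 2))
        simpa using this) r
  simp only [Fin.sum_univ_two, Matrix.cons_val_zero, Matrix.cons_val_one, sub_add_cancel] at h7
  rw [h5, hq] at h6
  change B.valuation (gaussSum χ e ^ l ^ r - _) < 1 at h6
  -- Fermat
  have hodd : Odd (l ^ r) := (hl.odd_of_ne_two hl2).pow
  have hδo : δ ^ l ^ r = δ := by
    rcases hδ with rfl | rfl
    · simp
    · rw [hodd.neg_one_pow]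
  have hf1 : (l : ℤ) ∣ ((p:ℤ) ^ (f/2)) ^ l ^ r - (p:ℤ) ^ (f / 2) := by
    rw [← ZMod.intCast_zmod_eq_zero_iff_dvd]
    push_cast
    rw [ZMod.pow_card_pow, sub_self]
  obtain ⟨c, hc⟩ := hf1
  have hcC : ((p:ℂ) ^ (f/2)) ^ l ^ r - (p:ℂ) ^ (f / 2) = l * c := by
    exact_mod_cast congrArg (Int.cast : ℤ → ℂ) hc
  have hint : ∀ m : ℤ, B.valuation (m : ℂ) ≤ 1 := fun m =>
    val_le_one_of_integral B (by simpa using isIntegral_algebraMap (R := ℤ) (A := ℂ) (x := m))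
  have h8 : B.valuation ((gaussSum χ e - δ * (p : ℂ) ^ (f / 2)) ^ l ^ r) < 1 := by
    rw [map_pow]
    exact pow_lt_one₀ zero_le h hlpos.ne'
  have h9 : B.valuation (δ * ((l:ℂ) * c)) < 1 := by
    rw [map_mul, map_mul]
    exact (mul_le_of_le_one_left' (hint δ)).trans_lt ((mul_le_of_le_one_right' (hint c)).trans_lt hB)
  have h10 : B.valuation (((δ - (-1) ^ ((p + 1) / 4) : ℤ) : ℂ) * (p : ℂ) ^ (f / 2)) < 1 := by
    have hδC : (δ : ℂ) ^ l ^ r = δ := by exact_mod_cast congrArg (Int.cast : ℤ → ℂ) hδo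
    have e1 : (((δ - (-1) ^ ((p + 1) / 4) : ℤ) : ℂ) * (p : ℂ) ^ (f / 2)) =
      (gaussSum χ e ^ l ^ r - (-1) ^ ((p + 1) / 4) * (p : ℂ) ^ (f / 2)) -
      (gaussSum χ e ^ l ^ r - ((gaussSum χ e - δ * (p : ℂ) ^ (f / 2)) ^ l ^ r + (δ * (p : ℂ) ^ (f / 2)) ^ l ^ r)) - (gaussSum χ e - δ * (p : ℂ) ^ (f / 2)) ^ l ^ r - δ * ((l:ℂ) * c) := by
      rw [← hcC, mul_pow (δ : ℂ), hδC]
      push_cast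
      ring
    rw [e1]
    refine Valuation.map_sub_lt _ (Valuation.map_sub_lt _ (Valuation.map_sub_lt _ h6 h7) h8) h9
  rw [map_mul, map_pow] at h10
  have hvp : B.valuation (p : ℂ) = 1 := by
    have := val_int_unit B l hB p (Nat.isCoprime_iff_coprime.mpr ((Nat.coprime_primes hpf.out hl).mpr hlp))
    simpa using this
  rw [hvp, one_pow, mul_one] at h10
  have hv2 : ∀ n : ℤ, n = 2 ∨ n = -2 → B.valuation (n : ℂ) = 1 := by
    intro n hn
    refine val_int_unit B l hB n ?_
    have : IsCoprime (2:ℤ) l := Nat.isCoprime_iff_coprime.mpr ((Nat.coprime_primes Nat.prime_two hl).mpr hl2.symm)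
    rcases hn with rfl | rfl
    · exact this
    · exact this.neg_left
  by_contra hne
  refine absurd (hv2 (δ - (-1) ^ ((p + 1) / 4)) ?_) h10.ne
  rcases neg_one_pow_eq_or ℤ ((p + 1) / 4) with h1 | h1 <;> rcases hδ with rfl | rfl <;> rw [h1] at hne ⊢ <;> simp at hne ⊢
end

section count
open Ideal
variable (S : Type*) [CommRing S] [IsDedekindDomain S] [Module.Free ℤ S] [Module.Finite ℤ S]
  [CharZero S]

/-- number of ideals of norm `n`. -/
noncomputable def idc (n : ℕ) : ℕ := Nat.card {I : Ideal S // absNorm I = n}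

theorem idc_finite (n : ℕ) : Finite {I : Ideal S // absNorm I = n} :=
  (Ideal.finite_setOfPred_absNorm_eq (S := S) n)

theorem idc_one : idc S 1 = 1 := by
  unfold idc
  simp only [absNorm_eq_one_iff]
  simp

theorem mem_of_absNorm {I : Ideal S} {n : ℕ} (h : absNorm I = n) : (n : S) ∈ I := by
  rw [← h]; exact absNorm_mem I

theorem sup_top_of_coprime {I J : Ideal S} {m n : ℕ} (hc : Nat.Coprime m n) (hm : (m : S) ∈ I) (hn : (n : S) ∈ J) :
    I ⊔ J = ⊤ := by
  rw [Ideal.eq_top_iff_one]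
  have h : IsCoprime (m : ℤ) (n : ℤ) := Nat.isCoprime_iff_coprime.mpr hc
  obtain ⟨a, b, hab⟩ := h
  have : (1 : S) = a * m + b * n := by exact_mod_cast (congrArg (Int.cast : ℤ → S) hab).symm
  rw [this]
  exact Submodule.add_mem_sup (I.mul_mem_left _ hm) (J.mul_mem_left _ hn)

theorem idc_mul {m n : ℕ} (hm : 0 < m) (hn : 0 < n) (hc : Nat.Coprime m n) : idc S (m * n) = idc S m * idc S n := by
  unfold idc
  rw [← Nat.card_prod]
  symm
  refine Nat.card_eq_of_bijective (fun x : {I : Ideal S // absNorm I = m} × {I : Ideal S // absNorm I = n} =>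
    (⟨x.1.1 * x.2.1, by rw [map_mul, x.1.2, x.2.2]⟩ : {I : Ideal S // absNorm I = m * n})) ⟨?_, ?_⟩
  · have key : ∀ I J : Ideal S, ∀ m n : ℕ, Nat.Coprime m n → absNorm I = m → absNorm J = n →
        I * J ⊔ span {(m : S)} = I := by
      intro I J m n hc hI hJ
      rw [Ideal.mul_sup_eq_of_coprime_right
        (sup_top_of_coprime S hc.symm (mem_of_absNorm S hJ) (mem_span_singleton_self _))]
      rw [sup_eq_left, span_singleton_le_iff_mem]
      exact mem_of_absNorm S hI
    rintro ⟨⟨I, hI⟩, ⟨J, hJ⟩⟩ ⟨⟨I', hI'⟩, ⟨J', hJ'⟩⟩ h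
    simp only [Subtype.mk.injEq] at h
    have e1 : I = I' := by
      rw [← key I J m n hc hI hJ, ← key I' J' m n hc hI' hJ', h]
    have e2 : J = J' := by
      rw [← key J I n m hc.symm hJ hI, ← key J' I' n m hc.symm hJ' hI', mul_comm J, mul_comm J', h]
    subst e1; subst e2; rfl
  · rintro ⟨K, hK⟩
    have hmn : K ⊔ span {(m : S)} ⊔ (K ⊔ span {(n : S)}) = ⊤ :=
      sup_top_of_coprime S hc (Ideal.mem_sup_right (mem_span_singleton_self _))
        (Ideal.mem_sup_right (mem_span_singleton_self _))
    have hprod : (K ⊔ span {(m : S)}) * (K ⊔ span {(n : S)}) = K := by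
      apply le_antisymm
      · rw [Ideal.sup_mul, Ideal.mul_sup, Ideal.mul_sup]
        refine sup_le (sup_le Ideal.mul_le_left Ideal.mul_le_left) (sup_le Ideal.mul_le_right ?_)
        rw [span_singleton_mul_span_singleton, span_singleton_le_iff_mem]
        exact_mod_cast mem_of_absNorm S hK
      · have h1 : K * ((K ⊔ span {(m : S)}) ⊔ (K ⊔ span {(n : S)})) = K := by rw [hmn, mul_top]
        conv_lhs => rw [← h1, Ideal.mul_sup]
        refine sup_le ?_ ?_
        · rw [mul_comm]; exact mul_mono_right le_sup_left
        · exact mul_mono_left le_sup_left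
    have hN : absNorm (K ⊔ span {(m : S)}) * absNorm (K ⊔ span {(n : S)}) = m * n := by
      rw [← map_mul, hprod, hK]
    have hd : ∀ k : ℕ, absNorm (K ⊔ span {(k : S)}) ∣ k ^ Module.finrank ℤ S := by
      intro k
      rw [← absNorm_span_natCast]
      exact absNorm_dvd_absNorm_of_le le_sup_right
    have h1 : absNorm (K ⊔ span {(m : S)}) ∣ m := by
      have hc' : Nat.Coprime (absNorm (K ⊔ span {(m : S)})) n :=
        Nat.Coprime.of_dvd_left (hd m) (hc.pow_left _)
      exact hc'.dvd_of_dvd_mul_right (Dvd.intro _ hN)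
    have h2 : absNorm (K ⊔ span {(n : S)}) ∣ n := by
      have hc' : Nat.Coprime (absNorm (K ⊔ span {(n : S)})) m :=
        Nat.Coprime.of_dvd_left (hd n) (hc.symm.pow_left _)
      exact hc'.dvd_of_dvd_mul_left (Dvd.intro_left _ hN)
    have h3 := Nat.le_of_dvd hm h1
    have h4 := Nat.le_of_dvd hn h2
    have h5 : absNorm (K ⊔ span {(m : S)}) = m := by
      by_contra hne
      have h6 : absNorm (K ⊔ span {(m : S)}) < m := lt_of_le_of_ne h3 hne
      have : absNorm (K ⊔ span {(m : S)}) * absNorm (K ⊔ span {(n : S)}) < m * n :=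
        lt_of_le_of_lt (Nat.mul_le_mul_left _ h4) (Nat.mul_lt_mul_of_pos_right h6 hn)
      omega
    have h6 : absNorm (K ⊔ span {(n : S)}) = n := by
      rw [h5] at hN
      exact Nat.eq_of_mul_eq_mul_left hm hN
    exact ⟨⟨⟨_, h5⟩, ⟨_, h6⟩⟩, Subtype.ext hprod⟩

variable (hfr : Module.finrank ℤ S = 2) (p : ℕ) (hp : p.Prime)
include hfr hp

theorem max_factor {I : Ideal S} {k : ℕ} (h : absNorm I = p ^ (k + 1)) :
    ∃ P : Ideal S, P ∣ I ∧ P.IsPrime ∧ P ∣ span {(p : S)} ∧ (absNorm P = p ∨ P = span {(p : S)}) := by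
  have hI : I ≠ ⊤ := by
    rintro rfl
    rw [absNorm_top] at h
    exact absurd h.symm (Nat.one_lt_pow (by omega) hp.one_lt).ne'
  obtain ⟨P, hP, hIP⟩ := Ideal.exists_le_maximal I hI
  have hpP : (p : S) ∈ P := by
    have h1 : ((p ^ (k+1) : ℕ) : S) ∈ P := hIP (mem_of_absNorm S h)
    push_cast at h1
    exact hP.isPrime.mem_of_pow_mem _ h1
  have hle : span {(p : S)} ≤ P := (span_singleton_le_iff_mem _).mpr hpP
  refine ⟨P, Ideal.dvd_iff_le.mpr hIP, hP.isPrime, Ideal.dvd_iff_le.mpr hle, ?_⟩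
  have h2 : absNorm P ∣ p ^ 2 := by
    rw [← hfr, ← absNorm_span_natCast]; exact absNorm_dvd_absNorm_of_le hle
  obtain ⟨j, hj, hj2⟩ := (Nat.dvd_prime_pow hp).mp h2
  interval_cases j
  · exact absurd (absNorm_eq_one_iff.mp (by simpa using hj2)) hP.ne_top
  · left; simpa using hj2
  · right
    obtain ⟨Q, hQ⟩ := Ideal.dvd_iff_le.mpr hle
    have h3 := congrArg absNorm hQ
    rw [map_mul, absNorm_span_natCast, hfr, hj2] at h3
    have h4 : absNorm Q = 1 := by
      have : 0 < p ^ 2 := pow_pos hp.pos 2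
      nlinarith
    rw [absNorm_eq_one_iff] at h4
    rw [hQ, h4, mul_top]

omit hfr in
theorem card_mul_left (P : Ideal S) {a b : ℕ} (hP : absNorm P = a) (ha : 0 < a) :
    Nat.card {I : Ideal S // absNorm I = a * b ∧ P ∣ I} = idc S b := by
  symm
  refine Nat.card_eq_of_bijective (fun x : {I : Ideal S // absNorm I = b} =>
    (⟨P * x.1, by rw [map_mul, hP, x.2], Dvd.intro _ rfl⟩ : {I : Ideal S // absNorm I = a * b ∧ P ∣ I})) ⟨?_, ?_⟩
  · rintro ⟨I, hI⟩ ⟨J, hJ⟩ h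
    simp only [Subtype.mk.injEq] at h ⊢
    refine mul_left_cancel₀ ?_ h
    rintro rfl
    simp at hP
    omega
  · rintro ⟨K, hK, J, rfl⟩
    rw [map_mul, hP] at hK
    exact ⟨⟨J, Nat.eq_of_mul_eq_mul_left ha hK⟩, rfl⟩

theorem idc_inert (h : idc S p = 0) (k : ℕ) : idc S (p ^ (k + 2)) = idc S (p ^ k) := by
  haveI := idc_finite S p
  have hno : ∀ P : Ideal S, absNorm P ≠ p := by
    intro P hP
    unfold idc at h
    rw [Finite.card_eq_zero_iff] at h
    exact h.false ⟨P, hP⟩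
  rw [← card_mul_left S p hp (span {(p : S)}) (a := p ^ 2) (b := p ^ k) (by rw [absNorm_span_natCast, hfr]) (pow_pos hp.pos 2)]
  unfold idc
  rw [show p ^ 2 * p ^ k = p ^ (k + 2) by ring]
  refine Nat.card_congr (Equiv.subtypeEquivRight fun I => ?_)
  refine ⟨fun hI => ⟨hI, ?_⟩, fun hI => hI.1⟩
  obtain ⟨P, h1, h2, h3, h4⟩ := max_factor S hfr p hp (k := k + 1) hI
  rcases h4 with h4 | h4
  · exact absurd h4 (hno P)
  · rwa [h4] at h1

theorem norm_p_prime {P : Ideal S} (h : absNorm P = p) : Prime P := by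
  rw [← irreducible_iff_prime]
  refine irreducible_of_irreducible_absNorm ?_
  rw [h]; exact hp

theorem norm_p_dvd {P : Ideal S} (h : absNorm P = p) : P ∣ span {(p : S)} := by
  rw [dvd_span_singleton]; exact mem_of_absNorm S h

theorem span_not_prime {P M : Ideal S} (h : absNorm P = p) (hM : M = span {(p : S)}) (hMp : M.IsPrime) : False := by
  have h1 := norm_p_dvd S hfr p hp h
  have hP := norm_p_prime S hfr p hp h
  have hM0 : M ≠ ⊥ := by
    rintro rfl
    have := congrArg absNorm hM
    rw [absNorm_span_natCast, absNorm_bot, hfr] at this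
    exact absurd this.symm (pow_pos hp.pos 2).ne'
  have hMpr : Prime M := (Ideal.prime_iff_isPrime hM0).mpr hMp
  rw [← hM] at h1
  have h2 := (hMpr.irreducible.dvd_iff.mp h1).resolve_left hP.not_isUnit
  have h3 : M = P := associated_iff_eq.mp h2
  have := congrArg absNorm hM
  rw [absNorm_span_natCast, hfr, h3, h] at this
  nlinarith [hp.two_le]

theorem idc_ram (h : idc S p = 1) (k : ℕ) : idc S (p ^ (k + 1)) = idc S (p ^ k) := by
  unfold idc at h
  obtain ⟨hs, ⟨⟨P, hP⟩⟩⟩ := Nat.card_eq_one_iff_unique.mp h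
  rw [← card_mul_left S p hp P (a := p) (b := p ^ k) hP hp.pos]
  unfold idc
  rw [show p * p ^ k = p ^ (k + 1) by ring]
  refine Nat.card_congr (Equiv.subtypeEquivRight fun I => ?_)
  refine ⟨fun hI => ⟨hI, ?_⟩, fun hI => hI.1⟩
  obtain ⟨M, h1, h2, h3, h4⟩ := max_factor S hfr p hp (k := k) hI
  rcases h4 with h4 | h4
  · have := congrArg Subtype.val (hs.elim ⟨P, hP⟩ ⟨M, h4⟩)
    simp only at this
    rwa [this]
  · exact (span_not_prime S hfr p hp hP h4 h2).elim

theorem idc_split (h : idc S p = 2) (k : ℕ) : idc S (p ^ k) = k + 1 := by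
  unfold idc at h
  obtain ⟨⟨P, hP⟩, ⟨Q, hQ⟩, hne, huniv⟩ := Nat.card_eq_two_iff.mp h
  have hne' : P ≠ Q := fun h => hne (Subtype.ext h)
  have hPp := norm_p_prime S hfr p hp hP
  have hQp := norm_p_prime S hfr p hp hQ
  have hall : ∀ M : Ideal S, absNorm M = p → M = P ∨ M = Q := by
    intro M hM
    have := huniv.ge (Set.mem_univ (⟨M, hM⟩ : {I : Ideal S // absNorm I = p}))
    simpa using this
  have hfac : ∀ k, ∀ I : Ideal S, absNorm I = p ^ (k + 1) → P ∣ I ∨ Q ∣ I := by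
    intro k I hI
    obtain ⟨M, h1, h2, h3, h4⟩ := max_factor S hfr p hp (k := k) hI
    rcases h4 with h4 | h4
    · rcases hall M h4 with rfl | rfl
      · exact Or.inl h1
      · exact Or.inr h1
    · exact (span_not_prime S hfr p hp hP h4 h2).elim
  have hPQ : ∀ k, ¬ P ∣ Q ^ k := by
    intro k hd
    have h1 := hPp.dvd_of_dvd_pow hd
    have h2 := (hQp.irreducible.dvd_iff.mp h1).resolve_left hPp.not_isUnit
    exact hne' (associated_iff_eq.mp h2).symm
  have hQonly : ∀ k, ∀ I : Ideal S, absNorm I = p ^ k → ¬ P ∣ I → I = Q ^ k := by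
    intro k
    induction k with
    | zero => intro I hI _; rw [pow_zero, absNorm_eq_one_iff] at hI; simpa using hI
    | succ k ih =>
      intro I hI hPI
      obtain ⟨J, rfl⟩ := (hfac k I hI).resolve_left hPI
      rw [map_mul, hQ, pow_succ'] at hI
      rw [ih J (Nat.eq_of_mul_eq_mul_left hp.pos hI) (fun hd => hPI (hd.mul_left Q)), pow_succ']
  induction k with
  | zero => simpa using idc_one S
  | succ k ih =>
    have ih2 := card_mul_left S p hp P (a := p) (b := p ^ k) hP hp.pos
    rw [show p * p ^ k = p ^ (k + 1) by ring, ih] at ih2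
    haveI : Finite {I : Ideal S // absNorm I = p ^ (k+1)} := idc_finite S _
    have hfin : {I : Ideal S | absNorm I = p ^ (k+1)}.Finite := this
    have e1 : {I : Ideal S | absNorm I = p ^ (k+1)} = insert (Q ^ (k+1)) {I : Ideal S | absNorm I = p ^ (k+1) ∧ P ∣ I} := by
      ext I
      simp only [Set.mem_ofPred_eq, Set.mem_insert_iff]
      constructor
      · intro hI
        by_cases hd : P ∣ I
        · exact Or.inr ⟨hI, hd⟩
        · exact Or.inl (hQonly _ I hI hd)
      · rintro (rfl | h)
        · rw [map_pow, hQ]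
        · exact h.1
    have e2 := congrArg Set.ncard e1
    rw [Set.ncard_insert_of_notMem (fun h => hPQ _ h.2) (hfin.subset fun I hI => hI.1)] at e2
    exact e2.trans (congrArg (· + 1) ih2)
omit hp p in
theorem idc_eq (χ : ℕ → ℤ) (h1 : χ 1 = 1) (hm : ∀ m n, χ (m * n) = χ m * χ n)
    (hχ : ∀ p : ℕ, p.Prime → (χ p = 0 ∨ χ p = 1 ∨ χ p = -1) ∧ (idc S p : ℤ) = 1 + χ p) (n : ℕ) (hn : n ≠ 0) :
    (idc S n : ℤ) = ∑ x ∈ n.divisorsAntidiagonal, 1 * χ x.2 := by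
  classical
  let F : ArithmeticFunction ℤ := ⟨fun n => if n = 0 then 0 else idc S n, by simp⟩
  let X : ArithmeticFunction ℤ := ⟨fun n => if n = 0 then 0 else χ n, by simp⟩
  have hF : F.IsMultiplicative := by
    rw [ArithmeticFunction.IsMultiplicative.iff_ne_zero]
    refine ⟨by simp [F, idc_one], ?_⟩
    intro m n hm hn hc
    have := idc_mul S (Nat.pos_of_ne_zero hm) (Nat.pos_of_ne_zero hn) hc
    simp [F, hm, hn, this]
  have hX : X.IsMultiplicative := by
    rw [ArithmeticFunction.IsMultiplicative.iff_ne_zero]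
    refine ⟨by simp [X, h1], ?_⟩
    intro m n hm' hn hc
    simp [X, hm', hn, hm]
  have hZ : (((ArithmeticFunction.zeta : ArithmeticFunction ℕ) : ArithmeticFunction ℤ) * X).IsMultiplicative :=
    (ArithmeticFunction.isMultiplicative_zeta.natCast).mul hX
  have hpow : ∀ p i : ℕ, χ (p ^ i) = χ p ^ i := by
    intro p i
    induction i with
    | zero => simpa using h1
    | succ i ih => rw [pow_succ, hm, ih, pow_succ]
  have key : F = ((ArithmeticFunction.zeta : ArithmeticFunction ℕ) : ArithmeticFunction ℤ) * X := by
    rw [ArithmeticFunction.IsMultiplicative.eq_iff_eq_on_prime_powers _ hF _ hZ]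
    intro p i hp
    have e1 : F (p ^ i) = idc S (p ^ i) := by
      change (if p ^ i = 0 then (0:ℤ) else _) = _
      rw [if_neg (pow_pos hp.pos i).ne']
    rw [e1, ArithmeticFunction.coe_zeta_mul_apply, Nat.sum_divisors_prime_pow hp]
    have e2 : ∀ x ∈ Finset.range (i + 1), X (p ^ x) = χ p ^ x := by
      intro x _
      change (if p ^ x = 0 then (0:ℤ) else _) = _
      rw [if_neg (pow_pos hp.pos x).ne', hpow]
    rw [Finset.sum_congr rfl e2]
    obtain ⟨hc, hi⟩ := hχ p hp
    rcases hc with hc | hc | hc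
    · have hi1 : idc S p = 1 := by rw [hc] at hi; omega
      rw [hc]
      have : idc S (p ^ i) = 1 := by
        induction i with
        | zero => simpa using idc_one S
        | succ i ih => rw [idc_ram S hfr p hp hi1]; exact ih (by
            change (if p ^ i = 0 then (0:ℤ) else _) = _
            rw [if_neg (pow_pos hp.pos i).ne']) (fun x hx => e2 x (by simp at hx ⊢; omega))
      rw [this, Finset.sum_range_succ', Finset.sum_eq_zero (fun x _ => by simp)]
      simp
    · have hi1 : idc S p = 2 := by rw [hc] at hi; omega
      rw [hc, idc_split S hfr p hp hi1]
      simp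
    · have hi1 : idc S p = 0 := by rw [hc] at hi; omega
      rw [hc]
      have : ∀ i, (idc S (p ^ i) : ℤ) = (∑ x ∈ Finset.range (i + 1), (-1) ^ x) ∧
          (idc S (p ^ (i + 1)) : ℤ) = (∑ x ∈ Finset.range (i + 2), (-1) ^ x) := by
        intro i
        induction i with
        | zero => simp [idc_one, hi1, Finset.sum_range_succ]
        | succ i ih =>
          refine ⟨ih.2, ?_⟩
          rw [show i + 1 + 1 = i + 2 by ring, idc_inert S hfr p hp hi1, ih.1, Finset.sum_range_succ _ (i + 2),
            Finset.sum_range_succ _ (i + 1)]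
          ring
      exact (this i).1
  have := congrArg (fun g : ArithmeticFunction ℤ => g n) key
  simp only [ArithmeticFunction.mul_apply] at this
  have e1 : F n = idc S n := by
    change (if n = 0 then (0:ℤ) else _) = _
    rw [if_neg hn]
  rw [e1] at this
  rw [this]
  refine Finset.sum_congr rfl fun x hx => ?_
  have hx' := Nat.mem_divisorsAntidiagonal.mp hx
  have hx1 : x.1 ≠ 0 := by rintro h; apply hx'.2; rw [← hx'.1, h, zero_mul]
  have hx2 : x.2 ≠ 0 := by rintro h; apply hx'.2; rw [← hx'.1, h, mul_zero]
  have e3 : X x.2 = χ x.2 := by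
    change (if x.2 = 0 then (0:ℤ) else _) = _
    rw [if_neg hx2]
  rw [e3]
  simp [hx1]
end count

section analytic
open Filter Topology

theorem abel_parts (g u : ℕ → ℝ) (n : ℕ) : ∑ i ∈ Finset.range n, g i * u i =
    u n * (∑ j ∈ Finset.range n, g j) + ∑ i ∈ Finset.range n, (u i - u (i + 1)) * (∑ j ∈ Finset.range (i + 1), g j) := by
  induction n with
  | zero => simp
  | succ n ih => 
    rw [Finset.sum_range_succ, ih, Finset.sum_range_succ (fun i => (u i - u (i + 1)) * (∑ j ∈ Finset.range (i + 1), g j)) n,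
      Finset.sum_range_succ g n]
    ring

theorem u_bound {s : ℝ} (h1 : 1 ≤ s) (h2 : s ≤ 2) (n : ℕ) :
    |1 / ((n : ℝ) + 1) ^ s - 1 / ((n : ℝ) + 1 + 1) ^ s| ≤ 2 / ((n : ℝ) + 1) ^ 2 := by
  set x : ℝ := (n : ℝ) + 1 with hx
  have hx1 : 1 ≤ x := by rw [hx]; linarith [n.cast_nonneg (α := ℝ)]
  have hx0 : 0 < x := by linarith
  have hxs : 0 < x ^ s := Real.rpow_pos_of_pos hx0 s
  set t := x / (x + 1) with ht
  have ht0 : 0 < t := by positivity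
  have ht1 : t ≤ 1 := by rw [ht, div_le_one (by linarith)]; linarith
  have e1 : 1 / (x + 1) ^ s = 1 / x ^ s * t ^ s := by
    rw [ht, Real.div_rpow hx0.le (by linarith)]
    field_simp
  have ht2 : t ^ 2 ≤ t ^ s := by
    rw [← Real.rpow_natCast]
    exact Real.rpow_le_rpow_of_exponent_ge ht0 ht1 (by simpa using h2)
  have ht3 : t ^ s ≤ 1 := Real.rpow_le_one ht0.le ht1 (by linarith)
  have hxx : x ≤ x ^ s := by
    conv_lhs => rw [← Real.rpow_one x]
    exact Real.rpow_le_rpow_of_exponent_le hx1 h1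
  have h1t : 1 - t = 1 / (x + 1) := by rw [ht]; field_simp; ring
  have h3 : 1 - t ≤ 1 / x := by rw [h1t]; exact one_div_le_one_div_of_le hx0 (by linarith)
  have h4 : 1 - t ^ s ≤ 2 / x := by
    have : 2 / x = 2 * (1 / x) := by ring
    rw [this]
    nlinarith
  rw [e1, show 1 / x ^ s - 1 / x ^ s * t ^ s = 1 / x ^ s * (1 - t ^ s) by ring, abs_mul, abs_of_pos (by positivity),
    abs_of_nonneg (by linarith)]
  calc 1 / x ^ s * (1 - t ^ s) ≤ 1 / x * (2 / x) :=
        mul_le_mul (one_div_le_one_div_of_le hx0 hxx) h4 (by linarith) (by positivity)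
    _ = 2 / x ^ 2 := by field_simp

theorem dirichlet_limit (c : ℕ → ℝ) (C : ℝ) (hA : ∀ n, |∑ k ∈ Finset.range n, c k| ≤ C) (hc : ∀ n, |c n| ≤ 1) :
    ∃ S : ℝ, Tendsto (fun n : ℕ => ∑ i ∈ Finset.range n, c i / i) atTop (𝓝 S) ∧
      Tendsto (fun s : ℝ => ∑' n : ℕ, c n / (n : ℝ) ^ s) (𝓝[>] 1) (𝓝 S) := by
  let u : ℝ → ℕ → ℝ := fun s n => 1 / ((n : ℝ) + 1) ^ s
  let G : ℕ → ℝ := fun n => ∑ j ∈ Finset.range n, c (j + 1)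
  have hG : ∀ n, |G n| ≤ C + 1 := by
    intro n
    have h1 := Finset.sum_range_succ' c n
    have h2 : G n = ∑ k ∈ Finset.range (n + 1), c k - c 0 := by rw [h1]; simp [G]
    rw [h2]
    exact (abs_sub _ _).trans (add_le_add (hA _) (hc 0))
  have hC : 0 ≤ C + 1 := (abs_nonneg _).trans (hG 0)
  let T : ℝ → ℕ → ℝ := fun s i => (u s i - u s (i + 1)) * G (i + 1)
  let bd : ℕ → ℝ := fun i => 2 / ((i : ℝ) + 1) ^ 2 * (C + 1)
  have hbd : Summable bd := by
    refine Summable.mul_right _ ?_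
    have := (summable_nat_add_iff 1).mpr (Real.summable_one_div_nat_pow.mpr (one_lt_two))
    refine (this.mul_left 2).congr fun n => ?_
    push_cast
    ring
  have hTb : ∀ s, 1 ≤ s → s ≤ 2 → ∀ i, ‖T s i‖ ≤ bd i := by
    intro s h1 h2 i
    rw [Real.norm_eq_abs, abs_mul]
    refine mul_le_mul ?_ (hG _) (abs_nonneg _) (by positivity)
    have := u_bound h1 h2 i
    simpa [u] using this
  have hpart : ∀ s : ℝ, 1 ≤ s → s ≤ 2 →
      Tendsto (fun n : ℕ => ∑ i ∈ Finset.range n, c i / (i : ℝ) ^ s) atTop (𝓝 (∑' i, T s i)) := by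
    intro s h1 h2
    have hsum : Summable (T s) := Summable.of_norm_bounded hbd (hTb s h1 h2)
    have ht := hsum.hasSum.tendsto_sum_nat
    have hu0 : Tendsto (fun n => u s n * G n) atTop (𝓝 0) := by
      have hu : Tendsto (fun n : ℕ => 1 / ((n : ℝ) + 1) * (C + 1)) atTop (𝓝 0) := by
        simpa using tendsto_one_div_add_atTop_nhds_zero_nat (𝕜 := ℝ) |>.mul_const (C + 1)
      refine squeeze_zero_norm (fun n => ?_) hu
      rw [Real.norm_eq_abs, abs_mul]
      refine mul_le_mul ?_ (hG _) (abs_nonneg _) (by positivity)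
      have hn : (1 : ℝ) ≤ (n : ℝ) + 1 := by linarith [n.cast_nonneg (α := ℝ)]
      rw [abs_of_nonneg (by positivity)]
      refine one_div_le_one_div_of_le (by linarith) ?_
      conv_lhs => rw [← Real.rpow_one ((n : ℝ) + 1)]
      exact Real.rpow_le_rpow_of_exponent_le hn h1
    have h3 := hu0.add ht
    rw [zero_add] at h3
    rw [← tendsto_add_atTop_iff_nat 1]
    refine h3.congr fun n => ?_
    rw [Finset.sum_range_succ']
    have := abel_parts (fun i => c (i + 1)) (u s) n
    simp only [T, G]
    rw [← this]
    have hs0 : s ≠ 0 := by linarith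
    simp [u, Real.zero_rpow hs0, div_eq_mul_inv]
  refine ⟨∑' i, T 1 i, ?_, ?_⟩
  · simpa using hpart 1 le_rfl one_le_two
  · have hev : ∀ᶠ s : ℝ in 𝓝[>] 1, 1 < s ∧ s ≤ 2 := by
      filter_upwards [Ioc_mem_nhdsGT (show (1:ℝ) < 2 by norm_num)] with s hs using hs
    have hlim : Tendsto (fun s => ∑' i, T s i) (𝓝[>] 1) (𝓝 (∑' i, T 1 i)) := by
      refine tendsto_tsum_of_dominated_convergence hbd ?_ ?_
      · intro i
        have : ContinuousAt (fun s => T s i) 1 := by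
          simp only [T, u]
          refine ContinuousAt.mul ?_ continuousAt_const
          refine ContinuousAt.sub ?_ ?_
          · refine ContinuousAt.div continuousAt_const
              (Real.continuousAt_const_rpow (by positivity)) (Real.rpow_pos_of_pos (by positivity) _).ne'
          · refine ContinuousAt.div continuousAt_const
              (Real.continuousAt_const_rpow (by positivity)) (Real.rpow_pos_of_pos (by positivity) _).ne'
        exact this.tendsto.mono_left nhdsWithin_le_nhds
      · filter_upwards [hev] with s hs i using hTb s hs.1.le hs.2 i
    refine hlim.congr' ?_
    filter_upwards [hev] with s hs
    have hsm : Summable (fun n : ℕ => c n / (n : ℝ) ^ s) := by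
      refine Summable.of_norm_bounded (Real.summable_one_div_nat_rpow.mpr hs.1) fun n => ?_
      rw [norm_div, Real.norm_eq_abs, Real.norm_of_nonneg (Real.rpow_nonneg n.cast_nonneg s)]
      exact div_le_div_of_nonneg_right (hc n) (Real.rpow_nonneg n.cast_nonneg s)
    exact tendsto_nhds_unique (hpart s hs.1.le hs.2) hsm.hasSum.tendsto_sum_nat

theorem arg_one_sub_exp {θ : ℝ} (h0 : 0 < θ) (h1 : θ < 2 * Real.pi) :
    Complex.arg (1 - Complex.exp (θ * I)) = (θ - Real.pi) / 2 := by
  have hs : 0 < Real.sin (θ / 2) := Real.sin_pos_of_pos_of_lt_pi (by linarith) (by linarith)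
  have e : 1 - Complex.exp (θ * I) = ((2 * Real.sin (θ / 2) : ℝ) : ℂ) *
      (Complex.cos (((θ - Real.pi) / 2 : ℝ) : ℂ) + Complex.sin (((θ - Real.pi) / 2 : ℝ) : ℂ) * I) := by
    rw [Complex.exp_mul_I]
    have h2 : (θ - Real.pi) / 2 = θ / 2 - Real.pi / 2 := by ring
    rw [h2, ← Complex.ofReal_cos, ← Complex.ofReal_sin, ← Complex.ofReal_cos, ← Complex.ofReal_sin,
      Real.cos_sub_pi_div_two, Real.sin_sub_pi_div_two]
    have h3 : Real.cos θ = 1 - 2 * Real.sin (θ / 2) ^ 2 := by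
      conv_lhs => rw [show θ = 2 * (θ / 2) by ring]
      rw [Real.cos_two_mul, Real.cos_sq']; ring
    have h4 : Real.sin θ = 2 * Real.sin (θ / 2) * Real.cos (θ / 2) := by
      conv_lhs => rw [show θ = 2 * (θ / 2) by ring]
      rw [Real.sin_two_mul]
    rw [h3, h4]
    push_cast
    ring
  rw [e, Complex.arg_mul_cos_add_sin_mul_I (by linarith) ⟨by linarith [Real.pi_pos], by linarith⟩]

variable (l : ℕ) [hlf : Fact l.Prime]

theorem trChar_self (a : ZMod l) : trChar l (ZMod l) a = Complex.exp (((2 * Real.pi * a.val / l : ℝ) : ℂ) * I) := by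
  rw [trChar_apply, Algebra.trace_self_apply, zetaP, ← Complex.exp_nat_mul]
  congr 1
  push_cast
  ring

theorem lam_bound (n : ℕ) : |(lam l n : ℝ)| ≤ 1 := by
  by_cases h : l ∣ n
  · simp [(lam_eq_zero l n).mpr h]
  · rcases lam_pm l h with h | h <;> simp [h]

theorem lam_partial (hl2 : l ≠ 2) (n : ℕ) : |∑ k ∈ Finset.range n, (lam l k : ℝ)| ≤ l := by
  have hl0 := hlf.out.pos
  have hblock : ∀ m : ℕ, ∑ k ∈ Finset.range (l * m), (lam l k : ℝ) = 0 := by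
    intro m
    induction m with
    | zero => simp
    | succ m ih =>
      rw [Nat.mul_succ, Finset.sum_range_add, ih, zero_add]
      have h := lam_sum l hl2
      have : ∀ x, lam l (l * m + x) = lam l x := fun x => by rw [add_comm, lam_add]
      simp only [this]
      exact_mod_cast h
  rw [← Nat.div_add_mod n l, Finset.sum_range_add, hblock, zero_add]
  refine (Finset.abs_sum_le_sum_abs _ _).trans ((Finset.sum_le_sum fun i _ => lam_bound l _).trans ?_)
  simp only [Finset.sum_const, Finset.card_range, nsmul_eq_mul, mul_one]
  exact_mod_cast (Nat.mod_lt n hl0).le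

/-- complex valued quadratic character -/
noncomputable def qc : MulChar (ZMod l) ℂ := (quadraticChar (ZMod l)).ringHomComp (Int.castRingHom ℂ)

theorem qc_nat (n : ℕ) : qc l (n : ZMod l) = (lam l n : ℂ) := rfl

theorem qc_zero : qc l 0 = 0 := MulChar.map_zero _

theorem qc_ne_one (hl2 : l ≠ 2) : qc l ≠ 1 := by
  intro h
  have h1 := quadraticChar_exists_neg_one (F := ZMod l) (by rwa [ZMod.ringChar_zmod_n])
  obtain ⟨a, ha⟩ := h1
  have h2 : qc l a = ((-1 : ℤ) : ℂ) := by rw [← ha]; rfl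
  have ha0 : a ≠ 0 := by rintro rfl; simp at ha
  rw [h, MulChar.one_apply (Ne.isUnit ha0)] at h2
  norm_num at h2

theorem qc_gauss (hl2 : l ≠ 2) (n : ℕ) : ∑ a : ZMod l, qc l a * trChar l (ZMod l) a ^ n =
    (lam l n : ℂ) * gaussSum (qc l) (trChar l (ZMod l)) := by
  have e : ∑ a : ZMod l, qc l a * trChar l (ZMod l) a ^ n = gaussSum (qc l) ((trChar l (ZMod l)).mulShift n) := by
    unfold gaussSum
    refine Finset.sum_congr rfl fun a _ => ?_
    rw [AddChar.mulShift_apply, ← nsmul_eq_mul, AddChar.map_nsmul_eq_pow]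
  rw [e]
  by_cases h : l ∣ n
  · rw [(lam_eq_zero l n).mpr h, (ZMod.natCast_eq_zero_iff n l).mpr h]
    unfold gaussSum
    simp [MulChar.sum_eq_zero_of_ne_one (qc_ne_one l hl2)]
  · have hn : (n : ZMod l) ≠ 0 := by rwa [Ne, ZMod.natCast_eq_zero_iff]
    have h1 := gaussSum_mulShift (qc l) (trChar l (ZMod l)) (Units.mk0 _ hn)
    rw [Units.val_mk0, qc_nat] at h1
    rw [← h1, ← mul_assoc]
    rcases lam_pm l h with h | h <;> simp [h]

theorem S_value (hl4 : l % 4 = 3) (S : ℝ)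
    (hS : Tendsto (fun n : ℕ => ∑ i ∈ Finset.range n, (lam l i : ℝ) / i) atTop (𝓝 S)) :
    gaussSum (qc l) (trChar l (ZMod l)) * S = -(I * (Real.pi / l * M1 l : ℝ)) := by
  have hl2 : l ≠ 2 := by omega
  have hl0 : (0 : ℝ) < l := by exact_mod_cast hlf.out.pos
  set τ := gaussSum (qc l) (trChar l (ZMod l))
  set e := trChar l (ZMod l) with he
  have hnorm : ∀ a : ZMod l, ‖e a‖ = 1 := by
    intro a; rw [he, trChar_self, Complex.norm_exp_ofReal_mul_I]
  have hne : ∀ a : ZMod l, a ≠ 0 → 1 - e a ∈ Complex.slitPlane := by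
    intro a ha
    left
    have h1 : e a ≠ 1 := by
      intro h1
      have := trChar_prim l (ZMod l) ha
      apply this
      ext x
      rw [AddChar.mulShift_apply, AddChar.one_apply]
      have h2 : a * x = (x.val : ℕ) • a := by rw [nsmul_eq_mul, ZMod.natCast_zmod_val, mul_comm]
      rw [h2, AddChar.map_nsmul_eq_pow, h1, one_pow]
    have h3 : (e a).re ≤ 1 := (hnorm a) ▸ Complex.re_le_norm (e a)
    have h4 : (e a).re ≠ 1 := by
      intro h4
      apply h1
      have := Complex.sq_norm (e a)
      rw [hnorm, Complex.normSq_apply, h4] at this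
      apply Complex.ext
      · simpa using h4
      · have : (e a).im * (e a).im = 0 := by linarith
        simpa using this
    simp only [Complex.sub_re, Complex.one_re]
    exact sub_pos.mpr (lt_of_le_of_ne h3 h4)
  -- Abel
  have hS' : Tendsto (fun n : ℕ => ∑ i ∈ Finset.range n, ((lam l i : ℂ) / i)) atTop (𝓝 (S : ℂ)) := by
    have := (Complex.continuous_ofReal.tendsto S).comp hS
    refine this.congr fun n => ?_
    simp
  have hab := Complex.tendsto_tsum_powerSeries_nhdsWithin_lt hS'
  rw [tendsto_map'_iff] at hab
  have hab2 : Tendsto (fun x : ℝ => τ * ∑' n : ℕ, ((lam l n : ℂ) / n) * (x : ℂ) ^ n) (𝓝[<] 1) (𝓝 (τ * S)) :=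
    Tendsto.const_mul τ hab
  have hlog : Tendsto (fun x : ℝ => ∑ a : ZMod l, qc l a * (-Complex.log (1 - e a * x))) (𝓝[<] 1)
      (𝓝 (∑ a : ZMod l, qc l a * (-Complex.log (1 - e a)))) := by
    refine tendsto_finsetSum _ fun a _ => ?_
    rcases eq_or_ne a 0 with rfl | ha
    · simp [qc_zero]
    · refine Tendsto.const_mul _ (Tendsto.neg ?_)
      have hc : ContinuousAt (fun x : ℝ => Complex.log (1 - e a * x)) 1 := by
        refine ContinuousAt.clog (by fun_prop) ?_
        simpa using hne a ha
      have := hc.tendsto.mono_left (nhdsWithin_le_nhds (s := Set.Iio 1))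
      simpa using this
  have heq : τ * S = ∑ a : ZMod l, qc l a * (-Complex.log (1 - e a)) := by
    refine tendsto_nhds_unique hab2 (hlog.congr' ?_)
    filter_upwards [Ioo_mem_nhdsLT (show (0:ℝ) < 1 by norm_num)] with x hx
    have h1 : ∀ a : ZMod l, HasSum (fun n : ℕ => qc l a * ((e a * x) ^ n / n)) (qc l a * (-Complex.log (1 - e a * x))) := by
      intro a
      refine HasSum.mul_left _ (Complex.hasSum_taylorSeries_neg_log ?_)
      rw [norm_mul, hnorm, one_mul, Complex.norm_real, Real.norm_of_nonneg hx.1.le]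
      exact hx.2
    have h2 := hasSum_sum (s := Finset.univ) (fun a _ => h1 a)
    rw [← tsum_mul_left, ← h2.tsum_eq]
    refine tsum_congr fun n => ?_
    have h3 := qc_gauss l hl2 n
    have h4 : ∑ a : ZMod l, qc l a * ((e a * x) ^ n / n) = (∑ a : ZMod l, qc l a * e a ^ n) * ((x : ℂ) ^ n / n) := by
      rw [Finset.sum_mul]
      refine Finset.sum_congr rfl fun a _ => ?_
      rw [mul_pow]; ring
    rw [h4, h3]
    ring
  rw [heq]
  have hodd : ∀ a : ZMod l, qc l (-a) = - qc l a := by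
    intro a
    have h := lam_neg l hl4 (n := l) (a := a.val) dvd_rfl (ZMod.val_lt a).le
    have h2 : ((l - a.val : ℕ) : ZMod l) = -a := by
      rw [Nat.cast_sub (ZMod.val_lt a).le]; simp
    have h3 := congrArg (Int.cast : ℤ → ℂ) h
    rw [Int.cast_neg, ← qc_nat, ← qc_nat, h2, ZMod.natCast_zmod_val] at h3
    exact h3
  have hre : ∑ a : ZMod l, qc l a * (Real.log ‖1 - e a‖ : ℂ) = 0 := by
    have h1 : ∑ a : ZMod l, qc l a * (Real.log ‖1 - e a‖ : ℂ) = ∑ a : ZMod l, qc l (-a) * (Real.log ‖1 - e (-a)‖ : ℂ) :=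
      (Fintype.sum_equiv (Equiv.neg (ZMod l)) _ _ fun a => rfl).symm
    have h2 : ∀ a, ‖1 - e (-a)‖ = ‖1 - e a‖ := by
      intro a
      rw [AddChar.map_neg_eq_inv, Complex.inv_eq_conj (hnorm a), ← Complex.norm_conj]
      simp
    simp only [h2, hodd, neg_mul, Finset.sum_neg_distrib] at h1
    exact self_eq_neg.mp h1
  have hsum0 : ∑ a : ZMod l, qc l a = 0 := MulChar.sum_eq_zero_of_ne_one (qc_ne_one l hl2)
  have harg : ∀ a : ZMod l, qc l a * ((Complex.arg (1 - e a) : ℝ) : ℂ) =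
      qc l a * (a.val : ℂ) * (Real.pi / l : ℝ) - qc l a * (Real.pi / 2 : ℝ) := by
    intro a
    rcases eq_or_ne a 0 with rfl | ha
    · simp [qc_zero]
    · have hv : 0 < a.val := Nat.pos_of_ne_zero (by rwa [Ne, ZMod.val_eq_zero])
      have hv2 : a.val < l := ZMod.val_lt a
      have hv' : (0 : ℝ) < a.val := by exact_mod_cast hv
      have hv2' : (a.val : ℝ) < l := by exact_mod_cast hv2
      rw [he, trChar_self, arg_one_sub_exp (by positivity) (by
        rw [div_lt_iff₀ hl0]; nlinarith [Real.pi_pos])]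
      push_cast
      ring
  have hM : ∑ a : ZMod l, qc l a * (a.val : ℂ) = (M1 l : ℂ) := by
    rw [M1]
    push_cast
    symm
    refine Finset.sum_bij' (fun n _ => (n : ZMod l)) (fun a _ => a.val) (by simp) (by intro a _; simpa using ZMod.val_lt a)
      (by intro n hn; simp at hn; exact ZMod.val_cast_of_lt hn) (by intro a _; simp) ?_
    intro n hn
    rw [ZMod.val_cast_of_lt (by simpa using hn), qc_nat]
  have hdec : ∀ a, qc l a * (-Complex.log (1 - e a)) = -(qc l a * (Real.log ‖1 - e a‖ : ℂ)) - I *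
      (qc l a * ((Complex.arg (1 - e a) : ℝ) : ℂ)) := by
    intro a
    rw [Complex.log]
    ring
  simp only [hdec, harg]
  rw [Finset.sum_sub_distrib, Finset.sum_neg_distrib, hre, ← Finset.mul_sum, Finset.sum_sub_distrib, ← Finset.sum_mul,
    ← Finset.sum_mul, hM, hsum0]
  push_cast
  ring

theorem M1_residue (hl4 : l % 4 = 3) (a : ℕ → ℕ)
    (ha : ∀ n ≠ 0, (a n : ℤ) = ∑ x ∈ n.divisorsAntidiagonal, 1 * lam l x.2) (ρ : ℝ)
    (h : Tendsto (fun s : ℝ => ((s : ℂ) - 1) * LSeries (fun n => (a n : ℂ)) s) (𝓝[>] 1) (𝓝 (ρ : ℂ))) :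
    ρ ^ 2 * l = (Real.pi / l * M1 l) ^ 2 := by
  have hl2 : l ≠ 2 := by omega
  obtain ⟨S, hS1, hS2⟩ := dirichlet_limit (fun n => (lam l n : ℝ)) l (lam_partial l hl2) (lam_bound l)
  have hval := S_value l hl4 S hS1
  have hnorm := gauss_norm l (qc l) (qc_ne_one l hl2)
  rw [ZMod.card] at hnorm
  have hSC : Tendsto (fun s : ℝ => LSeries (fun n => (lam l n : ℂ)) s) (𝓝[>] 1) (𝓝 (S : ℂ)) := by
    have := (Complex.continuous_ofReal.tendsto S).comp hS2
    refine this.congr' ?_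
    filter_upwards [self_mem_nhdsWithin] with s hs
    rw [Function.comp_apply, Complex.ofReal_tsum, LSeries]
    refine tsum_congr fun n => ?_
    rcases eq_or_ne n 0 with rfl | hn
    · simp [lam]
    · rw [LSeries.term_of_ne_zero hn]
      push_cast
      rw [Complex.ofReal_cpow n.cast_nonneg]
      simp
  have hsum : ∀ s : ℝ, 1 < s → LSeriesSummable (fun n => (lam l n : ℂ)) s := by
    intro s hs
    refine LSeriesSummable_of_bounded_of_one_lt_re (m := 1) (fun n _ => ?_) (by simpa using hs)
    have := lam_bound l n
    rw [Complex.norm_intCast]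
    exact this
  have hconv : ∀ s : ℝ, 1 < s → LSeries (fun n => (a n : ℂ)) s = riemannZeta s * LSeries (fun n => (lam l n : ℂ)) s := by
    intro s hs
    have hs' : 1 < (s : ℂ).re := by simpa using hs
    rw [← LSeries_one_eq_riemannZeta hs', ← LSeries_convolution' (LSeriesSummable_one_iff.mpr hs') (hsum s hs)]
    refine LSeries_congr (fun {n} hn => ?_) _
    rw [LSeries.convolution_def]
    have := congrArg (Int.cast : ℤ → ℂ) (ha n hn)
    push_cast at this
    simpa using this
  have hz : Tendsto (fun s : ℝ => ((s : ℂ) - 1) * riemannZeta s) (𝓝[>] 1) (𝓝 1) := by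
    have : Tendsto (fun s : ℝ ↦ (s : ℂ)) (𝓝[>] 1) (𝓝[≠] 1) := by
      refine tendsto_nhdsWithin_iff.mpr ⟨?_, ?_⟩
      · exact (Complex.continuous_ofReal.tendsto 1).mono_left nhdsWithin_le_nhds
      · filter_upwards [self_mem_nhdsWithin] with s hs
        have : s ≠ 1 := ne_of_gt hs
        simpa using this
    exact riemannZeta_residue_one.comp this
  have h1 := hz.mul hSC
  rw [one_mul] at h1
  have h2 : (ρ : ℂ) = S := by
    refine tendsto_nhds_unique (h.congr' ?_) h1
    filter_upwards [self_mem_nhdsWithin] with s hs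
    rw [hconv s hs]; ring
  have h3 : ρ = S := by exact_mod_cast h2
  rw [h3]
  have h4 := congrArg (fun z : ℂ => z * (starRingEnd ℂ) z) hval
  simp only [map_mul, map_neg, Complex.conj_ofReal, Complex.conj_I] at h4
  have h5 : ((S ^ 2 * l : ℝ) : ℂ) = (((Real.pi / l * M1 l) ^ 2 : ℝ) : ℂ) := by
    have : gaussSum (qc l) (trChar l (ZMod l)) * S * ((starRingEnd ℂ) (gaussSum (qc l) (trChar l (ZMod l))) * S) = l * S ^ 2 := by
      rw [← hnorm]; ring
    rw [this] at h4
    push_cast at h4 ⊢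
    rw [mul_comm, h4]
    linear_combination (-(Real.pi / l * M1 l : ℂ) ^ 2) * Complex.I_sq
  exact_mod_cast h5
end analytic

theorem sqrtNeg_conj (l : ℕ) : (starRingEnd ℂ) (sqrtNeg l) = - sqrtNeg l := by
  simp [sqrtNeg]

theorem sqrtNeg_isInt (l : ℕ) : IsIntegral ℤ (sqrtNeg l) := by
  refine ⟨X ^ 2 + C (l : ℤ), monic_X_pow_add_C _ (by norm_num), ?_⟩
  simp [sqrtNeg_sq]

/-- the generator `(1+√-l)/2`. -/
noncomputable def thet (l : ℕ) : ℂ := (1 + sqrtNeg l) / 2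

theorem thet_sq (l m : ℕ) (hm : l + 1 = 4 * m) : thet l ^ 2 = thet l - m := by
  have h := sqrtNeg_sq l
  have h2 : (l : ℂ) + 1 = 4 * m := by exact_mod_cast hm
  unfold thet
  linear_combination h / 4 - h2 / 4

theorem thet_isInt (l : ℕ) (hl4 : l % 4 = 3) : IsIntegral ℤ (thet l) := by
  obtain ⟨m, hm⟩ : ∃ m, l + 1 = 4 * m := ⟨(l + 1) / 4, by omega⟩
  refine ⟨X ^ 2 + (- X + C (m : ℤ)), ?_, ?_⟩
  · refine monic_X_pow_add ?_
    refine lt_of_le_of_lt (degree_add_le _ _) ?_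
    rw [degree_neg, degree_X]
    refine max_lt (by norm_num) (lt_of_le_of_lt degree_C_le (by norm_num))
  · simp [thet_sq l m hm]

theorem rat_int_of_integral {q : ℚ} (h : IsIntegral ℤ (q : ℂ)) : ∃ n : ℤ, q = n := by
  have h2 : IsIntegral ℤ q := by
    have : (q : ℂ) = algebraMap ℚ ℂ q := rfl
    rw [this] at h
    exact (isIntegral_algebraMap_iff (algebraMap ℚ ℂ).injective).mp h
  obtain ⟨n, hn⟩ := IsIntegrallyClosed.isIntegral_iff.mp h2
  exact ⟨n, by rw [← hn]; rfl⟩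

theorem OKform (l : ℕ) [hlf : Fact l.Prime] (hl4 : l % 4 = 3) (x : ℂ) (u v : ℚ)
    (hu : x = u + v * sqrtNeg l) (hx : IsIntegral ℤ x) : ∃ a b : ℤ, x = a + b * thet l := by
  have hsq := sqrtNeg_sq l
  have hbar : (starRingEnd ℂ) x = u - v * sqrtNeg l := by
    rw [hu]; simp [sqrtNeg_conj]; ring
  have hbi : IsIntegral ℤ ((starRingEnd ℂ) x) := hx.map ((starRingEnd ℂ).toIntAlgHom)
  obtain ⟨A, hA⟩ := rat_int_of_integral (q := 2 * u) (by
    have := hx.add hbi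
    rw [hbar, hu] at this
    exact (by push_cast; ring : ((2 * u : ℚ) : ℂ) = (u + v * sqrtNeg l) + (u - v * sqrtNeg l)) ▸ this)
  obtain ⟨n, hn⟩ := rat_int_of_integral (q := u ^ 2 + l * v ^ 2) (by
    have := hx.mul hbi
    rw [hbar, hu] at this
    exact (by push_cast; linear_combination (v ^ 2 : ℂ) * hsq : ((u ^ 2 + l * v ^ 2 : ℚ) : ℂ) = (u + v * sqrtNeg l) * (u - v * sqrtNeg l)) ▸ this)
  obtain ⟨C, hC⟩ := rat_int_of_integral (q := 2 * v * l) (by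
    have := ((hx.sub hbi).mul (sqrtNeg_isInt l)).neg
    rw [hbar, hu] at this
    exact (by push_cast; linear_combination (2 * v : ℂ) * hsq : ((2 * v * l : ℚ) : ℂ) = -((u + v * sqrtNeg l - (u - v * sqrtNeg l)) * sqrtNeg l)) ▸ this)
  have hl0 : (l : ℚ) ≠ 0 := by exact_mod_cast hlf.out.ne_zero
  have e1 : C ^ 2 = l * (4 * n - A ^ 2) := by
    have : (C : ℚ) ^ 2 = l * (4 * n - A ^ 2) := by rw [← hC, ← hn, ← hA]; ring
    exact_mod_cast this
  have hlC : (l : ℤ) ∣ C := Int.Prime.dvd_pow' hlf.out (k := 2) (by rw [e1]; exact Dvd.intro _ rfl)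
  obtain ⟨B, rfl⟩ := hlC
  have hB : 2 * v = B := by
    push_cast at hC
    have : (l : ℚ) * (2 * v) = l * B := by linarith
    exact mul_left_cancel₀ hl0 this
  have e2 : A ^ 2 + l * B ^ 2 = 4 * n := by
    have : (A : ℚ) ^ 2 + l * B ^ 2 = 4 * n := by rw [← hB, ← hn, ← hA]; ring
    exact_mod_cast this
  obtain ⟨a, ha⟩ : ∃ a, A - B = 2 * a := by
    have h0 : (A - B) % 2 = 0 := by
      obtain ⟨k, hk⟩ : ∃ k : ℤ, (l : ℤ) = 4 * k + 3 := ⟨l / 4, by omega⟩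
      rw [hk] at e2
      have h3 : A ^ 2 + 3 * B ^ 2 = 4 * (n - k * B ^ 2) := by linarith
      rcases Int.even_or_odd' A with ⟨s, rfl | rfl⟩ <;> rcases Int.even_or_odd' B with ⟨t, rfl | rfl⟩ <;> ring_nf at h3 ⊢ <;> omega
    exact ⟨(A - B) / 2, by omega⟩
  refine ⟨a, B, ?_⟩
  have hA' : (2 * u : ℂ) = A := by exact_mod_cast congrArg (Rat.cast : ℚ → ℂ) hA
  have hB' : (2 * v : ℂ) = B := by exact_mod_cast congrArg (Rat.cast : ℚ → ℂ) hB
  have ha' : (A - B : ℂ) = 2 * a := by exact_mod_cast congrArg (Int.cast : ℤ → ℂ) ha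
  rw [hu, thet]
  linear_combination hA' / 2 + sqrtNeg l * hB' / 2 + ha' / 2

theorem thet_inj (l : ℕ) (hl : l ≠ 0) (a b c d : ℝ) (h : (a : ℂ) + b * thet l = c + d * thet l) : a = c ∧ b = d := by
  have hs : 0 < Real.sqrt l := Real.sqrt_pos.mpr (by exact_mod_cast Nat.pos_of_ne_zero hl)
  have hi := congrArg Complex.im h
  have hr := congrArg Complex.re h
  simp [thet, sqrtNeg] at hi hr
  have hb : b = d := by
    rcases hi with h | h
    · exact h
    · subst h; simp at hs
  subst hb
  exact ⟨by linarith, rfl⟩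

theorem adj_form (l : ℕ) (x : ℂ) (hx : x ∈ ℚ⟮sqrtNeg l⟯) : ∃ u v : ℚ, x = u + v * sqrtNeg l := by
  replace hx : x ∈ Algebra.adjoin ℚ {sqrtNeg l} := by
    rw [← IntermediateField.adjoin_simple_toSubalgebra_of_isAlgebraic (isIntegral_sqrtNeg l).isAlgebraic]
    exact hx
  induction hx using Algebra.adjoin_induction with
  | mem x hx => exact ⟨0, 1, by simpa using hx⟩
  | algebraMap r => exact ⟨r, 0, by simp⟩
  | add x y _ _ h1 h2 =>
    obtain ⟨u, v, rfl⟩ := h1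
    obtain ⟨s, t, rfl⟩ := h2
    exact ⟨u + s, v + t, by push_cast; ring⟩
  | mul x y _ _ h1 h2 =>
    obtain ⟨u, v, rfl⟩ := h1
    obtain ⟨s, t, rfl⟩ := h2
    refine ⟨u * s - l * v * t, u * t + v * s, ?_⟩
    push_cast
    linear_combination (v * t : ℂ) * sqrtNeg_sq l

theorem numField (l : ℕ) : NumberField ℚ⟮sqrtNeg l⟯ :=
  haveI : FiniteDimensional ℚ ℚ⟮sqrtNeg l⟯ :=
    IntermediateField.adjoin.finiteDimensional (isIntegral_sqrtNeg l)
  haveI : CharZero ℚ⟮sqrtNeg l⟯ :=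
    charZero_of_injective_algebraMap (algebraMap ℚ ℚ⟮sqrtNeg l⟯).injective
  ⟨⟩

/-- Structure facts. -/
theorem field_facts (l : ℕ) [hlf : Fact l.Prime] (hl4 : l % 4 = 3) :
    (∀ x : NumberField.RingOfIntegers ℚ⟮sqrtNeg l⟯, ∃ a b : ℤ, ((x : ℚ⟮sqrtNeg l⟯) : ℂ) = a + b * thet l) ∧
    ∃ t : NumberField.RingOfIntegers ℚ⟮sqrtNeg l⟯, ((t : ℚ⟮sqrtNeg l⟯) : ℂ) = thet l := by
  constructor
  · intro x
    obtain ⟨u, v, huv⟩ := adj_form l _ (x : ℚ⟮sqrtNeg l⟯).2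
    refine OKform l hl4 _ u v huv ?_
    have := x.2
    exact (IsIntegral.map (ℚ⟮sqrtNeg l⟯.val.toRingHom.toIntAlgHom) this)
  · have hm : thet l ∈ ℚ⟮sqrtNeg l⟯ := by
      unfold thet
      refine div_mem (add_mem (one_mem _) (mem_adjoin_simple_self ℚ _)) ?_
      exact_mod_cast (ℚ⟮sqrtNeg l⟯).natCast_mem 2
    refine ⟨⟨⟨thet l, hm⟩, ?_⟩, rfl⟩
    have := thet_isInt l hl4
    have h2 : IsIntegral ℤ (⟨thet l, hm⟩ : ℚ⟮sqrtNeg l⟯) :=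
      (isIntegral_algHom_iff (ℚ⟮sqrtNeg l⟯.val.toRingHom.toIntAlgHom) (Subtype.val_injective)).mp this
    exact h2

theorem det_empty_aux {n : Type*} (h : IsEmpty n) {i1 : DecidableEq n} {i2 : Fintype n} (A : Matrix n n ℝ) :
    A.det = 1 := by
  have : i1 = fun a b => decidableEq_of_subsingleton a b := Subsingleton.elim _ _
  rw [Matrix.det_apply]
  simp

theorem thet_normSq (l : ℕ) (a b : ℤ) :
    4 * Complex.normSq (a + b * thet l) = ((2 * a + b) ^ 2 + l * b ^ 2 : ℤ) := by
  have h : (Complex.normSq (a + b * thet l) : ℂ) = (a + b * thet l) * (starRingEnd ℂ) (a + b * thet l) :=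
    (Complex.mul_conj _).symm
  have h2 : (4 * Complex.normSq (a + b * thet l) : ℂ) = (((2 * a + b) ^ 2 + l * b ^ 2 : ℤ) : ℂ) := by
    rw [h, thet]
    have hc2 : (starRingEnd ℂ) 2 = 2 := Complex.conj_ofNat 2
    simp [sqrtNeg_conj, hc2]
    linear_combination (- b ^ 2 : ℂ) * sqrtNeg_sq l
  exact_mod_cast h2

theorem thet_unit (l : ℕ) (hl : 7 ≤ l) (a b : ℤ) (h : Complex.normSq (a + b * thet l) = 1) :
    (a + b * thet l : ℂ) = 1 ∨ (a + b * thet l : ℂ) = -1 := by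
  have h1 := thet_normSq l a b
  rw [h] at h1
  have h2 : (2 * a + b) ^ 2 + l * b ^ 2 = 4 := by exact_mod_cast h1.symm
  have hl' : (7 : ℤ) ≤ l := by exact_mod_cast hl
  have hb : b = 0 := by
    by_contra hb
    have : 1 ≤ b ^ 2 := Int.add_one_le_iff.mpr (lt_of_le_of_ne (sq_nonneg b) (pow_ne_zero 2 hb).symm)
    nlinarith [sq_nonneg (2 * a + b)]
  subst hb
  have : (a - 1) * (a + 1) = 0 := by nlinarith
  rcases mul_eq_zero.mp this with h | h
  · left; rw [show a = 1 by omega]; simp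
  · right; rw [show a = -1 by omega]; simp

section
open NumberField Module
variable (K : Type*) [Field K] [NumberField K] (σ : K →+* ℂ) (l m : ℕ)

theorem t_sq (hm : l + 1 = 4 * m) (t : 𝓞 K) (ht : σ t = thet l) : t * t = t - (m : 𝓞 K) := by
  apply RingOfIntegers.coe_injective
  apply σ.injective
  have := thet_sq l m hm
  simp [ht]
  linear_combination this

theorem exists_basis (hl : l ≠ 0) (H1 : ∀ x : 𝓞 K, ∃ a b : ℤ, σ x = a + b * thet l)
    (t : 𝓞 K) (ht : σ t = thet l) : ∃ b : Basis (Fin 2) ℤ (𝓞 K), b 0 = 1 ∧ b 1 = t := by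
  have hli : LinearIndependent ℤ ![(1 : 𝓞 K), t] := by
    rw [LinearIndependent.pair_iff]
    intro a b hab
    have h2 : σ ((a • (1 : 𝓞 K) + b • t : 𝓞 K) : K) = 0 := by rw [hab]; simp
    simp [ht] at h2
    have := thet_inj l hl a b 0 0 (by simpa using h2)
    exact_mod_cast this
  have hsp : ⊤ ≤ Submodule.span ℤ (Set.range ![(1 : 𝓞 K), t]) := by
    intro x _
    obtain ⟨a, b, hab⟩ := H1 x
    have : x = a • (1 : 𝓞 K) + b • t := by
      apply RingOfIntegers.coe_injective
      apply σ.injective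
      simp [ht, hab]
    rw [this]
    refine Submodule.add_mem _ (Submodule.smul_mem _ _ (Submodule.subset_span ⟨0, rfl⟩))
      (Submodule.smul_mem _ _ (Submodule.subset_span ⟨1, rfl⟩))
  exact ⟨Basis.mk hli hsp, by simp, by simp⟩

theorem discr_val (hm : l + 1 = 4 * m) (t : 𝓞 K) (htt : t * t = t - (m : 𝓞 K))
    (b : Basis (Fin 2) ℤ (𝓞 K)) (h0 : b 0 = 1) (h1 : b 1 = t) : discr K = - (l : ℤ) := by
  have hfin : Module.finrank ℤ (𝓞 K) = 2 := by rw [Module.finrank_eq_card_basis b]; simp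
  have r0 : b.repr 1 = Finsupp.single 0 1 := by rw [← h0]; simp
  have r1 : b.repr t = Finsupp.single 1 1 := by rw [← h1]; simp
  have tr1 : Algebra.trace ℤ (𝓞 K) 1 = 2 := by
    have := Algebra.trace_algebraMap (R := ℤ) (S := 𝓞 K) 1
    rw [hfin, map_one] at this
    simpa using this
  have trt : Algebra.trace ℤ (𝓞 K) t = 1 := by
    rw [Algebra.trace_eq_matrix_trace b, Matrix.trace_fin_two, Algebra.leftMulMatrix_eq_repr_mul,
      Algebra.leftMulMatrix_eq_repr_mul, h0, h1, htt, mul_one, r1, map_sub, r1,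
      show (m : 𝓞 K) = (m : ℤ) • (1 : 𝓞 K) by simp, map_smul, r0]
    simp
  have trtt : Algebra.trace ℤ (𝓞 K) (t * t) = 1 - 2 * m := by
    rw [htt, map_sub, trt, show (m : 𝓞 K) = (m : ℤ) • (1 : 𝓞 K) by simp, map_smul, tr1]
    simp [mul_comm]
  rw [← discr_eq_discr K b, Algebra.discr_def, Matrix.det_fin_two]
  simp only [Algebra.traceMatrix_apply, Algebra.traceForm_apply, h0, h1, mul_one, one_mul, tr1, trt, trtt]
  have : (l : ℤ) + 1 = 4 * m := by exact_mod_cast hm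
  linarith

theorem places (t : 𝓞 K) (hm : 1 ≤ m) (htt : t * t = t - (m : 𝓞 K)) (hr : Module.finrank ℚ K = 2) :
    InfinitePlace.nrRealPlaces K = 0 ∧ InfinitePlace.nrComplexPlaces K = 1 ∧ Units.regulator K = 1 := by
  have h0 : InfinitePlace.nrRealPlaces K = 0 := by
    rw [nrRealPlaces_eq_zero_iff, isTotallyComplex_iff]
    intro w
    rw [← InfinitePlace.not_isReal_iff_isComplex, InfinitePlace.isReal_iff]
    intro h
    set φ := w.embedding
    have h1 : (starRingEnd ℂ) (φ t) = φ t := by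
      have := h
      rw [ComplexEmbedding.isReal_iff] at this
      exact RingHom.congr_fun this t
    obtain ⟨x, hx⟩ := Complex.conj_eq_iff_real.mp h1
    have h2 : φ ((t * t : 𝓞 K) : K) = φ ((t - (m : 𝓞 K) : 𝓞 K) : K) := by rw [htt]
    simp at h2
    rw [hx] at h2
    have h3 : x * x = x - m := by exact_mod_cast h2
    have : (1 : ℝ) ≤ m := by exact_mod_cast hm
    nlinarith [sq_nonneg (x - 1)]
  have h1 := InfinitePlace.card_add_two_mul_card_eq_rank K
  rw [h0, hr] at h1
  have h2 : InfinitePlace.nrComplexPlaces K = 1 := by omega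
  refine ⟨h0, h2, ?_⟩
  have hrank : Units.rank K = 0 := by
    rw [Units.rank, InfinitePlace.card_eq_nrRealPlaces_add_nrComplexPlaces, h0, h2]
  have : IsEmpty {w : InfinitePlace K // w ≠ Units.dirichletUnitTheorem.w₀} := by
    rw [← (Units.equivFinRank K).isEmpty_congr, hrank]
    infer_instance
  rw [Units.regulator_eq_det']
  rw [det_empty_aux this, abs_one]

theorem torsion_two (hl : 7 ≤ l) (H1 : ∀ x : 𝓞 K, ∃ a b : ℤ, σ x = a + b * thet l) :
    Units.torsionOrder K = 2 := by
  have hmap := Units.map_complexEmbedding_torsion K σ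
  set n := Units.torsionOrder K with hn
  have hn0 : n ≠ 0 := Units.torsionOrder_ne_zero K
  have hζ := Complex.isPrimitiveRoot_exp n hn0
  set ζ := Complex.exp (2 * Real.pi * I / n)
  have hmem : (hζ.isUnit hn0).unit ∈ rootsOfUnity n ℂ := by
    have : (hζ.isUnit hn0).unit ^ n = 1 := by
      ext
      simpa using hζ.pow_eq_one
    exact (_root_.mem_rootsOfUnity _ _).mpr this
  rw [← hmap] at hmem
  obtain ⟨u, _, hu⟩ := hmem
  have hu' : σ ((u : 𝓞 K) : K) = ζ := by
    have := congrArg Units.val hu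
    simpa using this
  obtain ⟨a, b, hab⟩ := H1 u
  have hnorm : Complex.normSq ζ = 1 := by
    rw [Complex.normSq_eq_norm_sq, hζ.norm'_eq_one hn0]; norm_num
  have hz2 : ζ ^ 2 = 1 := by
    rw [← hu', hab] at hnorm ⊢
    rcases thet_unit l hl a b hnorm with h | h <;> rw [h] <;> norm_num
  have hd := hζ.dvd_of_pow_eq_one 2 hz2
  obtain ⟨k, hk⟩ := (Units.even_torsionOrder K)
  have := Nat.le_of_dvd (by norm_num) hd
  omega

end

theorem lam_two (l : ℕ) [hlf : Fact l.Prime] (hl4 : l % 4 = 3) :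
    lam l 2 = if l % 8 = 7 then 1 else -1 := by
  have h : ringChar (ZMod l) ≠ 2 := by rw [ZMod.ringChar_zmod_n]; rintro rfl; omega
  have h2 := quadraticChar_two h
  rw [lam, Nat.cast_ofNat, h2, ZMod.card, ZMod.χ₈_nat_eq_if_mod_eight]
  have : l % 8 = 3 ∨ l % 8 = 7 := by omega
  rcases this with h | h <;> simp [h] <;> omega

theorem rt_1 : Nat.card {r : ZMod 2 // r * r = r - 1} = 0 := by
  rw [Nat.card_eq_fintype_card]; decide

theorem rt_0 : Nat.card {r : ZMod 2 // r * r = r - 0} = 2 := by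
  rw [Nat.card_eq_fintype_card]; decide

theorem root_count (l m : ℕ) [hlf : Fact l.Prime] (hl4 : l % 4 = 3) (hm : l + 1 = 4 * m) (q : ℕ)
    (hq : q.Prime) : (Nat.card {r : ZMod q // r * r = r - (m : ZMod q)} : ℤ) = 1 + lam l q := by
  have : Fact q.Prime := ⟨hq⟩
  by_cases h2 : q = 2
  · subst h2
    rw [lam_two l hl4]
    have h8 : l % 8 = 3 ∨ l % 8 = 7 := by omega
    rcases h8 with h | h
    · have hm2 : (m : ZMod 2) = 1 := by
        rw [show (1 : ZMod 2) = ((1 : ℕ) : ZMod 2) by simp, ZMod.natCast_eq_natCast_iff']; omega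
      rw [hm2, rt_1, h]
      norm_num
    · have hm2 : (m : ZMod 2) = 0 := by
        rw [show (0 : ZMod 2) = ((0 : ℕ) : ZMod 2) by simp, ZMod.natCast_eq_natCast_iff']; omega
      rw [hm2, rt_0, h]
      norm_num
  · have hc : ringChar (ZMod q) ≠ 2 := by rwa [ZMod.ringChar_zmod_n]
    have h20 : (2 : ZMod q) ≠ 0 := Ring.two_ne_zero hc
    have hlm : (l : ZMod q) + 1 = 4 * m := by exact_mod_cast congrArg (Nat.cast : ℕ → ZMod q) hm
    have e : {r : ZMod q // r * r = r - (m : ZMod q)} ≃ {x : ZMod q // x ^ 2 = -(l : ZMod q)} :=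
      { toFun := fun r => ⟨2 * r.1 - 1, by linear_combination 4 * r.2 + hlm⟩
        invFun := fun x => ⟨(x.1 + 1) / 2, by
          field_simp
          linear_combination x.2 - hlm⟩
        left_inv := fun r => by ext; simp; field_simp
        right_inv := fun r => by ext; simp; field_simp; ring }
    have h3 := quadraticChar_card_sqrts hc (-(l : ZMod q))
    have h4 : Nat.card {x : ZMod q // x ^ 2 = -(l : ZMod q)} = {x : ZMod q | x ^ 2 = -(l : ZMod q)}.toFinset.card := by
      rw [Set.toFinset_card, Nat.card_eq_fintype_card]
      rfl
    rw [Nat.card_congr e, h4, h3, add_comm]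
    congr 1
    by_cases hql : q = l
    · subst hql
      simp [lam]
    · have hl2 : ringChar (ZMod l) ≠ 2 := by rw [ZMod.ringChar_zmod_n]; rintro rfl; omega
      have := quadraticChar_odd_prime hl2 (p := q) h2 (by rw [ZMod.ringChar_zmod_n]; exact Ne.symm hql)
      rw [lam, this, ZMod.card, ZMod.χ₄_nat_three_mod_four hl4]
      simp

theorem idc_prime (S : Type*) [CommRing S] [IsDedekindDomain S] [Module.Free ℤ S] [Module.Finite ℤ S]
    [CharZero S] (m : ℕ) (t : S) (htt : t * t = t - (m : S))
    (b : Module.Basis (Fin 2) ℤ S) (h0 : b 0 = 1) (h1 : b 1 = t) (q : ℕ) (hq : q.Prime) :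
    idc S q = Nat.card {r : ZMod q // r * r = r - (m : ZMod q)} := by
  have : Fact q.Prime := ⟨hq⟩
  have hform : ∀ x : S, ∃ a c : ℤ, x = a + c * t := by
    intro x
    refine ⟨b.repr x 0, b.repr x 1, ?_⟩
    conv_lhs => rw [← b.sum_repr x]
    simp [h0, h1]
  have hex : ∀ r : ZMod q, r * r = r - (m : ZMod q) → ∃ φ : S →+* ZMod q, φ t = r := by
    intro r hr
    let L := b.constr ℤ ![(1 : ZMod q), r]
    have hL1 : L 1 = 1 := by rw [← h0, Module.Basis.constr_basis]; rfl
    have hLt : L t = r := by rw [← h1, Module.Basis.constr_basis]; rfl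
    have hL : ∀ a c : ℤ, L (a + c * t) = a + c * r := by
      intro a c
      have : (a + c * t : S) = a • (1 : S) + c • t := by simp
      rw [this, map_add, map_smul, map_smul, hL1, hLt]
      simp
    have hmul : ∀ x y, L (x * y) = L x * L y := by
      intro x y
      obtain ⟨a, c, rfl⟩ := hform x
      obtain ⟨a', c', rfl⟩ := hform y
      have : (a + c * t) * (a' + c' * t) = ((a * a' - m * c * c' : ℤ) : S) + ((a * c' + c * a' + c * c' : ℤ) : S) * t := by
        push_cast
        linear_combination (c * c' : S) * htt
      rw [this, hL, hL, hL]
      push_cast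
      linear_combination - (c * c' : ZMod q) * hr
    exact ⟨(AlgHom.ofLinearMap L hL1 hmul : S →ₐ[ℤ] ZMod q), hLt⟩
  choose φ hφ using hex
  have hker : ∀ ψ : S →+* ZMod q, Ideal.absNorm (RingHom.ker ψ) = q := by
    intro ψ
    rw [Ideal.absNorm_apply, Submodule.cardQuot_apply,
      Nat.card_congr (RingHom.quotientKerEquivOfSurjective (ZMod.ringHom_surjective ψ)).toEquiv]
    simp
  have hbij : Function.Bijective (fun r : {r : ZMod q // r * r = r - (m : ZMod q)} =>
      (⟨RingHom.ker (φ r.1 r.2), hker _⟩ : {I : Ideal S // Ideal.absNorm I = q})) := by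
    constructor
    · rintro ⟨r, hr⟩ ⟨s, hs⟩ h
      have h := congrArg Subtype.val h
      simp only at h
      have hm : (t - (r.val : S)) ∈ RingHom.ker (φ r hr) := by
        rw [RingHom.mem_ker, map_sub, hφ r hr, map_natCast]; simp
      rw [h, RingHom.mem_ker, map_sub, hφ s hs, map_natCast] at hm
      simp at hm
      ext
      simp only
      rw [sub_eq_zero.mp hm]
    · rintro ⟨I, hI⟩
      have hc : Nat.card (S ⧸ I) = q := by
        rw [← hI, Ideal.absNorm_apply, Submodule.cardQuot_apply]
      have : Finite (S ⧸ I) := Nat.finite_of_card_ne_zero (by rw [hc]; exact hq.ne_zero)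
      have : Fintype (S ⧸ I) := Fintype.ofFinite _
      let e := ZMod.ringEquivOfPrime (S ⧸ I) hq (by rw [← Nat.card_eq_fintype_card]; exact hc)
      let ψ : S →+* ZMod q := (e.symm : S ⧸ I →+* ZMod q).comp (Ideal.Quotient.mk I)
      have hr : ψ t * ψ t = ψ t - m := by
        rw [← map_mul, htt, map_sub, map_natCast]
      refine ⟨⟨ψ t, hr⟩, ?_⟩
      ext x
      simp only
      obtain ⟨a, c, rfl⟩ := hform x
      have h3 : ∀ x, ψ x = 0 ↔ x ∈ I := by
        intro x
        rw [← Ideal.Quotient.eq_zero_iff_mem]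
        simp [ψ]
      rw [RingHom.mem_ker, ← h3]
      simp [hφ _ hr]
  exact (Nat.card_eq_of_bijective _ hbij).symm

theorem M1_class (l : ℕ) [hlf : Fact l.Prime] (hl4 : l % 4 = 3) (hl3 : 3 < l) :
    (M1 l) ^ 2 = ((l : ℤ) * classNumSqrtNeg l) ^ 2 := by
  obtain ⟨m, hm⟩ : ∃ m, l + 1 = 4 * m := ⟨(l + 1) / 4, by omega⟩
  haveI := numField l
  obtain ⟨H1, t, ht⟩ := field_facts l hl4
  let K := ℚ⟮sqrtNeg l⟯
  let σ : K →+* ℂ := algebraMap K ℂ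
  have hl7 : 7 ≤ l := by omega
  obtain ⟨b, h0, h1⟩ := exists_basis K σ l (by omega) H1 t ht
  have htt := t_sq K σ l m hm t ht
  have hfin : Module.finrank ℤ (NumberField.RingOfIntegers K) = 2 := by
    rw [Module.finrank_eq_card_basis b]; simp
  have hd := discr_val K l m hm t htt b h0 h1
  obtain ⟨p1, p2, p3⟩ := places K m t (by omega) htt (by rw [← NumberField.RingOfIntegers.rank]; exact hfin)
  have htor := torsion_two K σ l hl7 H1
  have hidc := idc_eq (NumberField.RingOfIntegers K) hfin (lam l) (by simp [lam]) (lam_mul l) (by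
    intro q hq
    constructor
    · by_cases h : l ∣ q
      · left; exact (lam_eq_zero l q).mpr h
      · right; exact lam_pm l h
    · rw [idc_prime _ m t htt b h0 h1 q hq, root_count l m hl4 hm q hq])
  have hlim := NumberField.tendsto_sub_one_mul_dedekindZeta_nhdsGT K
  have hres := M1_residue l hl4 (idc (NumberField.RingOfIntegers K)) hidc _ hlim
  rw [NumberField.dedekindZeta_residue_def, p1, p2, p3, htor, hd] at hres
  have hcl : NumberField.classNumber K = classNumSqrtNeg l := rfl
  rw [hcl] at hres
  have hl0 : (0 : ℝ) < l := by positivity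
  have habs : |((-(l : ℤ) : ℤ) : ℝ)| = l := by push_cast; rw [abs_neg, abs_of_pos hl0]
  rw [habs, div_pow, mul_pow _ (Real.sqrt l), Real.sq_sqrt hl0.le] at hres
  have hpi := Real.pi_ne_zero
  have : ((M1 l : ℝ)) ^ 2 = ((l : ℝ) * classNumSqrtNeg l) ^ 2 := by
    field_simp at hres
    norm_num at hres
    nlinarith
  exact_mod_cast this

theorem rat_int_of_val (p : ℕ) (hp : p.Prime) (A : ValuationSubring ℂ) (hA : A.valuation (p : ℂ) < 1)
    (q : ℚ) (k : ℕ) (hq : ∃ n : ℤ, (p : ℚ) ^ k * q = n) (hv : A.valuation (q : ℂ) ≤ 1) : ∃ n : ℤ, q = n := by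
  obtain ⟨n, hn⟩ := hq
  have hden0 : (q.den : ℚ) ≠ 0 := by exact_mod_cast q.den_ne_zero
  have hqe : q * q.den = q.num := Rat.mul_den_eq_num q
  have hd : q.den ∣ p ^ k := by
    have e : (p : ℤ) ^ k * q.num = n * q.den := by
      have : (p : ℚ) ^ k * q.num = n * q.den := by rw [← hqe, ← hn]; ring
      exact_mod_cast this
    have h1 : (q.den : ℤ) ∣ (p : ℤ) ^ k * q.num := ⟨n, by rw [e]; ring⟩
    have hc : IsCoprime (q.den : ℤ) q.num := by
      rw [Int.isCoprime_iff_gcd_eq_one, Int.gcd_comm]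
      simpa [Int.gcd] using q.reduced
    have := hc.dvd_of_dvd_mul_right h1
    exact_mod_cast this
  obtain ⟨j, hj, hdj⟩ := (Nat.dvd_prime_pow hp).mp hd
  by_cases h0 : j = 0
  · subst h0
    refine ⟨q.num, ?_⟩
    rw [← hqe, hdj]; simp
  · exfalso
    have hcop : IsCoprime q.num p := by
      have h1 := q.reduced
      rw [hdj] at h1
      have h2 := Nat.Coprime.coprime_dvd_right (dvd_pow_self p h0) h1
      rw [Int.isCoprime_iff_gcd_eq_one]
      simpa [Int.gcd] using h2
    have h1 := val_int_unit A p hA q.num hcop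
    have h2 : A.valuation (q : ℂ) * A.valuation (p : ℂ) ^ j = 1 := by
      rw [← h1, ← map_pow, ← map_mul]
      congr 1
      have : (q : ℂ) * ((q.den : ℕ) : ℂ) = q.num := by exact_mod_cast congrArg (Rat.cast : ℚ → ℂ) hqe
      rw [hdj] at this
      exact_mod_cast this
    have h3 : A.valuation (q : ℂ) * A.valuation (p : ℂ) ^ j < 1 := by
      calc _ ≤ 1 * A.valuation (p : ℂ) ^ j := by gcongr
        _ = A.valuation (p : ℂ) ^ j := one_mul _
        _ < 1 := pow_lt_one₀ zero_le hA h0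
    exact h3.ne h2

theorem lemI (p l : ℕ) (hp : p.Prime) [hlf : Fact l.Prime] (hl4 : l % 4 = 3) (A : ValuationSubring ℂ)
    (hA : A.valuation (p : ℂ) < 1) (x : ℂ) (u v : ℚ) (hx : x = u + v * sqrtNeg l) (k : ℕ)
    (hk : IsIntegral ℤ ((p : ℂ) ^ k * x)) (h1 : A.valuation x ≤ 1) (h2 : A.valuation ((starRingEnd ℂ) x) ≤ 1) :
    ∃ a b : ℤ, x = a + b * thet l := by
  have hsq := sqrtNeg_sq l
  have hbar : (starRingEnd ℂ) x = u - v * sqrtNeg l := by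
    rw [hx]; simp [sqrtNeg_conj]; ring
  have hbi : IsIntegral ℤ ((p : ℂ) ^ k * (starRingEnd ℂ) x) := by
    have := hk.map ((starRingEnd ℂ).toIntAlgHom)
    simpa using this
  have e1 : ((2 * u : ℚ) : ℂ) = x + (starRingEnd ℂ) x := by rw [hbar, hx]; push_cast; ring
  have e2 : ((u ^ 2 + l * v ^ 2 : ℚ) : ℂ) = x * (starRingEnd ℂ) x := by
    rw [hbar, hx]; push_cast; linear_combination (v ^ 2 : ℂ) * hsq
  obtain ⟨s, hs⟩ := rat_int_of_val p hp A hA (2 * u) k (by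
    apply rat_int_of_integral
    have := hk.add hbi
    rw [Rat.cast_mul, e1, mul_add]
    exact_mod_cast this) (by rw [e1]; exact (A.valuation.map_add _ _).trans (max_le h1 h2))
  obtain ⟨n, hn⟩ := rat_int_of_val p hp A hA (u ^ 2 + l * v ^ 2) (k + k) (by
    apply rat_int_of_integral
    have := hk.mul hbi
    rw [Rat.cast_mul, e2]
    have e : ((p : ℚ) ^ (k + k) : ℚ) * (x * (starRingEnd ℂ) x) = (p : ℂ) ^ k * x * ((p : ℂ) ^ k * (starRingEnd ℂ) x) := by
      push_cast; ring
    rw [e]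
    exact this) (by rw [e2, map_mul]; exact mul_le_one' h1 h2)
  refine OKform l hl4 x u v hx ⟨X ^ 2 + (- C s * X + C n), ?_, ?_⟩
  · refine monic_X_pow_add ?_
    refine lt_of_le_of_lt (degree_add_le _ _) ?_
    refine max_lt (lt_of_le_of_lt (degree_mul_le _ _) ?_) (lt_of_le_of_lt degree_C_le (by norm_num))
    rw [degree_neg, degree_X]
    refine lt_of_le_of_lt (add_le_add degree_C_le le_rfl) (by norm_num)
  · rw [hs] at e1
    rw [hn] at e2
    simp only [Rat.cast_intCast] at e1 e2
    simp only [eval₂_add, eval₂_mul, eval₂_pow, eval₂_X, eval₂_neg, eval₂_C]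
    simp only [algebraMap_int_eq, eq_intCast]
    rw [e1, e2]; ring

section
open NumberField Module

theorem norm_val (K : Type*) [Field K] [NumberField K] (σ : K →+* ℂ) (l m : ℕ) (hm : l + 1 = 4 * m)
    (t : 𝓞 K) (ht : σ t = thet l) (htt : t * t = t - (m : 𝓞 K))
    (b : Basis (Fin 2) ℤ (𝓞 K)) (h0 : b 0 = 1) (h1 : b 1 = t) (x : 𝓞 K) :
    ((Algebra.norm ℤ x : ℤ) : ℝ) = Complex.normSq (σ x) := by
  have r0 : b.repr 1 = Finsupp.single 0 1 := by rw [← h0]; simp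
  have r1 : b.repr t = Finsupp.single 1 1 := by rw [← h1]; simp
  obtain ⟨a, c, rfl⟩ : ∃ a c : ℤ, x = a • (1 : 𝓞 K) + c • t := by
    refine ⟨b.repr x 0, b.repr x 1, ?_⟩
    conv_lhs => rw [← b.sum_repr x]
    simp [h0, h1]
  have e1 : (a • (1 : 𝓞 K) + c • t) * t = (- (c * m)) • (1 : 𝓞 K) + (a + c) • t := by
    simp only [zsmul_eq_mul]
    push_cast
    linear_combination (c : 𝓞 K) * htt
  have hn : Algebra.norm ℤ (a • (1 : 𝓞 K) + c • t) = a * (a + c) + c * c * m := by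
    rw [Algebra.norm_eq_matrix_det b, Matrix.det_fin_two]
    simp only [Algebra.leftMulMatrix_eq_repr_mul, h0, h1, mul_one, e1]
    simp only [map_add, map_smul, r0, r1]
    simp
    ring
  have h2 := thet_normSq l a c
  have hm' : (l : ℝ) + 1 = 4 * m := by exact_mod_cast hm
  have e2 : σ ((a • (1 : 𝓞 K) + c • t : 𝓞 K) : K) = a + c * thet l := by simp [ht]
  rw [hn, e2]
  push_cast at h2 ⊢
  linear_combination - h2 / 4 - c ^ 2 * hm' / 4

theorem lemJ (p l : ℕ) (hp : p.Prime) [hlf : Fact l.Prime] (hl4 : l % 4 = 3) (hl3 : 3 < l) (A : ValuationSubring ℂ)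
    (hA : A.valuation (p : ℂ) < 1) (w : ℂ) (a b : ℤ) (hw : w = a + b * thet l)
    (h : ℕ) (hh : h = classNumSqrtNeg l) (hv1 : A.valuation w < 1) (hv2 : A.valuation ((starRingEnd ℂ) w) = 1) :
    ∃ c d : ℤ, Complex.normSq (c + d * thet l) = (p : ℝ) ^ h ∧
      A.valuation ((starRingEnd ℂ) (c + d * thet l)) = 1 := by
  obtain ⟨m, hm⟩ : ∃ m, l + 1 = 4 * m := ⟨(l + 1) / 4, by omega⟩
  haveI := numField l
  obtain ⟨H1, t, ht⟩ := field_facts l hl4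
  let K := ℚ⟮sqrtNeg l⟯
  let σ : K →+* ℂ := algebraMap K ℂ
  obtain ⟨bb, h0, h1⟩ := exists_basis K σ l (by omega) H1 t ht
  have htt := t_sq K σ l m hm t ht
  have hnorm := norm_val K σ l m hm t ht htt bb h0 h1
  have hint : ∀ x : 𝓞 K, IsIntegral ℤ (σ x) := fun x => IsIntegral.map (σ.toIntAlgHom) x.2
  have hle : ∀ x : 𝓞 K, A.valuation (σ x) ≤ 1 := fun x => val_le_one_of_integral A (hint x)
  have hlec : ∀ x : 𝓞 K, A.valuation ((starRingEnd ℂ) (σ x)) ≤ 1 := fun x =>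
    val_le_one_of_integral A ((hint x).map ((starRingEnd ℂ).toIntAlgHom))
  let P : Ideal (𝓞 K) :=
    { carrier := {x | A.valuation (σ x) < 1}
      add_mem' := by
        intro x y hx hy
        simp only [Set.mem_ofPred_eq, map_add] at *
        exact lt_of_le_of_lt (A.valuation.map_add _ _) (max_lt hx hy)
      zero_mem' := by simp
      smul_mem' := by
        intro c x hx
        simp only [Set.mem_ofPred_eq, smul_eq_mul, map_mul] at *
        exact mul_lt_one_of_nonneg_of_lt_one_right (hle c) zero_le hx }
  have hPm : ∀ x : 𝓞 K, x ∈ P ↔ A.valuation (σ x) < 1 := fun x => Iff.rfl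
  have hpP : (p : 𝓞 K) ∈ P := by rw [hPm]; simpa using hA
  have hp0 : (p : 𝓞 K) ≠ 0 := by exact_mod_cast hp.ne_zero
  have hPtop : P ≠ ⊤ := by
    intro h
    have : (1 : 𝓞 K) ∈ P := by rw [h]; trivial
    rw [hPm] at this
    simp at this
  have hPbot : P ≠ ⊥ := by
    intro h
    rw [h] at hpP
    exact hp0 hpP
  -- the element
  obtain ⟨W, hW⟩ : ∃ W : 𝓞 K, σ W = w := ⟨(a : 𝓞 K) + (b : 𝓞 K) * t, by rw [hw]; simp [σ]; left; exact ht⟩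
  have hWP : W ∈ P := by rw [hPm, hW]; exact hv1
  -- norm of P
  have hnormp : Ideal.absNorm (Ideal.span {(p : 𝓞 K)}) = p ^ 2 := by
    rw [Ideal.absNorm_span_singleton]
    have := hnorm (p : 𝓞 K)
    simp at this
    have h3 : Algebra.norm ℤ (p : 𝓞 K) = (p ^ 2 : ℕ) := by
      have : ((Algebra.norm ℤ (p : 𝓞 K) : ℤ) : ℝ) = (p ^ 2 : ℕ) := by rw [this]; push_cast; ring
      exact_mod_cast this
    rw [h3]; simp
  have hNP : Ideal.absNorm P = p := by
    have hdvd : P ∣ Ideal.span {(p : 𝓞 K)} := by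
      rw [Ideal.dvd_span_singleton]; exact hpP
    obtain ⟨Q, hQ⟩ := hdvd
    have hmul := congrArg Ideal.absNorm hQ
    rw [hnormp, map_mul] at hmul
    obtain ⟨j, hj, hj2⟩ := (Nat.dvd_prime_pow hp).mp (Dvd.intro _ hmul.symm)
    have hj0 : j ≠ 0 := by
      rintro rfl
      rw [pow_zero, Ideal.absNorm_eq_one_iff] at hj2
      exact hPtop hj2
    have hj2' : j ≠ 2 := by
      rintro rfl
      rw [hj2] at hmul
      have hQ1 : Ideal.absNorm Q = 1 := by
        have : p ^ 2 * 1 = p ^ 2 * Ideal.absNorm Q := by rw [mul_one]; exact hmul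
        exact (mul_left_cancel₀ (pow_ne_zero 2 hp.ne_zero) this).symm
      rw [Ideal.absNorm_eq_one_iff] at hQ1
      rw [hQ1, Ideal.mul_top] at hQ
      rw [← hQ, Ideal.mem_span_singleton] at hWP
      obtain ⟨y, hy⟩ := hWP
      have : (starRingEnd ℂ) w = p * (starRingEnd ℂ) (σ y) := by rw [← hW, hy]; simp
      rw [this, map_mul] at hv2
      exact (mul_lt_one_of_nonneg_of_lt_one_left zero_le hA (hlec y)).ne hv2
    have : j = 1 := by omega
    rw [hj2, this, pow_one]
  -- principal
  have hprin : (P ^ h).IsPrincipal := by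
    have hP0 : P ∈ nonZeroDivisors (Ideal (𝓞 K)) := mem_nonZeroDivisors_of_ne_zero hPbot
    have hc : (ClassGroup.mk0 ⟨P, hP0⟩) ^ h = 1 := by
      have : h = Fintype.card (ClassGroup (𝓞 K)) := hh
      rw [this]
      exact pow_card_eq_one
    rw [← map_pow] at hc
    exact (ClassGroup.mk0_eq_one_iff _).mp hc
  obtain ⟨α, hα⟩ := hprin
  have hα' : P ^ h = Ideal.span {α} := hα
  obtain ⟨c, d, hcd⟩ := H1 α
  refine ⟨c, d, ?_, ?_⟩
  · rw [← hcd]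
    have h3 := hnorm α
    have h4 : Ideal.absNorm (P ^ h) = (Algebra.norm ℤ α).natAbs := by
      rw [hα', Ideal.absNorm_span_singleton]
    rw [map_pow, hNP] at h4
    have h5 : (0 : ℤ) ≤ Algebra.norm ℤ α := by
      have : (0 : ℝ) ≤ (Algebra.norm ℤ α : ℤ) := by rw [h3]; exact Complex.normSq_nonneg _
      exact_mod_cast this
    have h6 : ((p ^ h : ℕ) : ℤ) = Algebra.norm ℤ α := by rw [h4]; exact Int.natAbs_of_nonneg h5
    rw [← h6] at h3
    exact_mod_cast h3.symm
  · rw [← hcd]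
    have hmem : W ^ h ∈ Ideal.span {α} := by rw [← hα']; exact Ideal.pow_mem_pow hWP h
    obtain ⟨y, hy⟩ := Ideal.mem_span_singleton.mp hmem
    have e : (starRingEnd ℂ) w ^ h = (starRingEnd ℂ) (σ α) * (starRingEnd ℂ) (σ y) := by
      rw [← map_mul, ← map_mul, ← map_pow, ← hW, ← map_pow]
      congr 2
      exact_mod_cast congrArg (fun z : 𝓞 K => (z : K)) hy
    have e2 := congrArg A.valuation e
    rw [map_pow, hv2, one_pow, map_mul] at e2
    refine le_antisymm (hlec α) ?_
    rw [e2]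
    exact mul_le_of_le_one_right zero_le (hlec y)
end

theorem class_odd (l : ℕ) [hlf : Fact l.Prime] (hl4 : l % 4 = 3) (hl3 : 3 < l) : classNumSqrtNeg l % 2 = 1 := by
  have h1 : (M1 l : ZMod 2) = 1 := by
    have h : ∀ a ∈ Finset.range l, ((lam l a * a : ℤ) : ZMod 2) = (a : ZMod 2) := by
      intro a ha
      by_cases h : l ∣ a
      · have : a = 0 := Nat.eq_zero_of_dvd_of_lt h (Finset.mem_range.mp ha)
        subst this; simp
      · rcases lam_pm l h with h | h <;> rw [h] <;> push_cast
        · ring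
        · rw [neg_one_mul, ZMod.neg_eq_self_mod_two]
    rw [M1, Int.cast_sum, Finset.sum_congr rfl h, ← Nat.cast_sum]
    rw [show (1 : ZMod 2) = ((1 : ℕ) : ZMod 2) by simp, ZMod.natCast_eq_natCast_iff']
    have h2 := Finset.sum_range_id_mul_two l
    obtain ⟨k, hk⟩ : ∃ k, l = 4 * k + 3 := ⟨l / 4, by omega⟩
    rw [hk] at h2 ⊢
    rw [show 4 * k + 3 - 1 = 4 * k + 2 by omega] at h2
    have : (∑ i ∈ Finset.range (4 * k + 3), i) = 2 * (4 * k * k + 5 * k + 1) + 1 := by nlinarith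
    omega
  have h2 := congrArg (Int.cast : ℤ → ZMod 2) (M1_class l hl4 hl3)
  push_cast at h2
  rw [h1] at h2
  by_contra hne
  have h0 : ((classNumSqrtNeg l : ℕ) : ZMod 2) = 0 := by
    rw [ZMod.natCast_eq_zero_iff]; omega
  rw [h0] at h2
  simp at h2

/-- valuation strict monotonicity helper -/
theorem val_pow_cancel (A : ValuationSubring ℂ) (p : ℂ) (hp : p ≠ 0) (hA : A.valuation p < 1) (x : ℂ) (s f : ℕ)
    (hx : A.valuation x ≤ 1) (h : A.valuation x * A.valuation p ^ s = A.valuation p ^ f) :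
    s ≤ f ∧ A.valuation x = A.valuation p ^ (f - s) := by
  have hv0 : A.valuation p ≠ 0 := (Valuation.ne_zero_iff _).mpr hp
  have hsf : s ≤ f := by
    by_contra hlt
    have : A.valuation p ^ s < A.valuation p ^ f :=
      pow_lt_pow_right_of_lt_one₀ (zero_lt_iff.mpr hv0) hA (by omega)
    have h2 : A.valuation x * A.valuation p ^ s ≤ A.valuation p ^ s := mul_le_of_le_one_left zero_le hx
    rw [h] at h2
    exact absurd h2 (not_le.mpr this)
  refine ⟨hsf, ?_⟩
  apply mul_right_cancel₀ (pow_ne_zero s hv0)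
  rw [h, ← pow_add, Nat.sub_add_cancel hsf]

theorem OK_int (l : ℕ) (hl4 : l % 4 = 3) (a b : ℤ) : IsIntegral ℤ (a + b * thet l) := by
  have h : ∀ a : ℤ, IsIntegral ℤ (a : ℂ) := fun a => by
    simpa using isIntegral_algebraMap (R := ℤ) (A := ℂ) (x := a)
  exact (h a).add ((h b).mul (thet_isInt l hl4))

theorem conj_int {x : ℂ} (hx : IsIntegral ℤ x) : IsIntegral ℤ ((starRingEnd ℂ) x) :=
  hx.map ((starRingEnd ℂ).toIntAlgHom)

/-- rational form predicate -/
def QF (l : ℕ) (x : ℂ) : Prop := ∃ u v : ℚ, x = u + v * sqrtNeg l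

theorem QF_mul (l : ℕ) {x y : ℂ} (hx : QF l x) (hy : QF l y) : QF l (x * y) := by
  obtain ⟨u, v, rfl⟩ := hx
  obtain ⟨s, t, rfl⟩ := hy
  refine ⟨u * s - l * v * t, u * t + v * s, ?_⟩
  push_cast
  linear_combination (v * t : ℂ) * sqrtNeg_sq l

theorem QF_conj (l : ℕ) {x : ℂ} (hx : QF l x) : QF l ((starRingEnd ℂ) x) := by
  obtain ⟨u, v, rfl⟩ := hx
  exact ⟨u, -v, by simp [sqrtNeg_conj]⟩

theorem QF_rat (l : ℕ) (q : ℚ) : QF l (q : ℂ) := ⟨q, 0, by simp⟩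

theorem QF_OK (l : ℕ) (a b : ℤ) : QF l (a + b * thet l) :=
  ⟨a + b / 2, b / 2, by unfold thet; push_cast; ring⟩

theorem unit_div (p l : ℕ) (hp : p.Prime) [hlf : Fact l.Prime] (hl4 : l % 4 = 3) (hl3 : 3 < l) (A : ValuationSubring ℂ)
    (hA : A.valuation (p : ℂ) < 1) (x : ℂ) (hx : QF l x) (k : ℕ) (hk : IsIntegral ℤ ((p : ℂ) ^ k * x))
    (h1 : A.valuation x = 1) (hn : x * (starRingEnd ℂ) x = 1) : x = 1 ∨ x = -1 := by
  obtain ⟨u, v, huv⟩ := hx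
  have h2 : A.valuation ((starRingEnd ℂ) x) = 1 := by
    have := congrArg A.valuation hn
    rwa [map_mul, h1, one_mul, map_one] at this
  obtain ⟨a, b, hab⟩ := lemI p l hp hl4 A hA x u v huv k hk h1.le h2.le
  rw [hab]
  refine thet_unit l (by omega) a b ?_
  rw [← hab]
  rw [Complex.mul_conj] at hn
  exact_mod_cast hn

theorem core3 (p l : ℕ) (hp : p.Prime) [hlf : Fact l.Prime] (hl4 : l % 4 = 3) (hl3 : 3 < l) (A : ValuationSubring ℂ)
    (hA : A.valuation (p : ℂ) < 1) (z : ℂ) (hz : QF l z) (hzi : IsIntegral ℤ z) (e h : ℕ) (hh : h = classNumSqrtNeg l)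
    (hhe : h ≤ e)
    (hn : z * (starRingEnd ℂ) z = (p : ℂ) ^ (2 * e)) (hv : A.valuation z = A.valuation (p : ℂ) ^ (e + h)) :
    ∃ c d : ℤ, Complex.normSq (c + d * thet l) = (p : ℝ) ^ h ∧
      ∃ δ : ℤ, (δ = 1 ∨ δ = -1) ∧ z = δ * (p : ℂ) ^ (e - h) * (c + d * thet l) ^ 2 := by
  have hp0 : (p : ℂ) ≠ 0 := by exact_mod_cast hp.ne_zero
  have hv0 : A.valuation (p : ℂ) ≠ 0 := (Valuation.ne_zero_iff _).mpr hp0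
  have hpk : ∀ k, (p : ℂ) ^ k ≠ 0 := fun k => pow_ne_zero k hp0
  have hvk : ∀ k, A.valuation (p : ℂ) ^ k ≠ 0 := fun k => pow_ne_zero k hv0
  have hh1 : h ≠ 0 := by have := class_odd l hl4 hl3; omega
  -- conj
  have hvc : A.valuation ((starRingEnd ℂ) z) = A.valuation (p : ℂ) ^ (e - h) := by
    have := congrArg A.valuation hn
    rw [map_mul, hv, map_pow, mul_comm] at this
    have h2 := (val_pow_cancel A p hp0 hA _ _ _ (val_le_one_of_integral A (conj_int hzi)) this).2
    rw [h2]; congr 1; omega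
  set w := z / (p : ℂ) ^ (e - h) with hwd
  have hzw : z = (p : ℂ) ^ (e - h) * w := by rw [hwd]; field_simp
  have hwc : (starRingEnd ℂ) z = (p : ℂ) ^ (e - h) * (starRingEnd ℂ) w := by rw [hzw]; simp
  have hw1 : A.valuation w = A.valuation (p : ℂ) ^ (2 * h) := by
    apply mul_left_cancel₀ (hvk (e - h))
    rw [← map_pow, ← map_mul, ← hzw, hv, map_pow, ← pow_add]
    congr 1; omega
  have hw2 : A.valuation ((starRingEnd ℂ) w) = 1 := by
    apply mul_left_cancel₀ (hvk (e - h))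
    rw [← map_pow, ← map_mul, ← hwc, hvc, map_pow, mul_one]
  have hwlt : A.valuation w < 1 := by
    rw [hw1]; exact pow_lt_one₀ zero_le hA (by omega)
  have hwQ : QF l w := by
    have : w = z * (((p : ℚ) ^ (e - h))⁻¹ : ℚ) := by rw [hwd]; push_cast; rfl
    rw [this]
    exact QF_mul l hz (QF_rat l _)
  obtain ⟨a, b, hab⟩ : ∃ a b : ℤ, w = a + b * thet l := by
    obtain ⟨u, v, huv⟩ := hwQ
    exact lemI p l hp hl4 A hA w u v huv (e - h) (by rw [← hzw]; exact hzi) hwlt.le hw2.le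
  have hwn : w * (starRingEnd ℂ) w = (p : ℂ) ^ (2 * h) := by
    apply mul_left_cancel₀ (hpk (2 * (e - h)))
    rw [← pow_add, show 2 * (e - h) + 2 * h = 2 * e by omega, ← hn, hwc]
    conv_rhs => rw [hzw]
    ring
  have hwi : IsIntegral ℤ w := by rw [hab]; exact OK_int l hl4 a b
  obtain ⟨c, d, hcd, hcd2⟩ := lemJ p l hp hl4 hl3 A hA w a b hab h hh hwlt hw2
  refine ⟨c, d, hcd, ?_⟩
  set α : ℂ := c + d * thet l with hα
  have hαn : α * (starRingEnd ℂ) α = (p : ℂ) ^ h := by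
    rw [Complex.mul_conj, hcd]; push_cast; rfl
  have hα0 : α ≠ 0 := by
    intro h0; rw [h0, zero_mul] at hαn; exact hpk h hαn.symm
  have hαc0 : (starRingEnd ℂ) α ≠ 0 := by
    intro h0; rw [h0, mul_zero] at hαn; exact hpk h hαn.symm
  have hαv : A.valuation α = A.valuation (p : ℂ) ^ h := by
    have := congrArg A.valuation hαn
    rwa [map_mul, hcd2, mul_one, map_pow] at this
  have hαi : IsIntegral ℤ α := OK_int l hl4 c d
  have hu : (p : ℂ) ^ (2 * h) * (w / α ^ 2) = w * (starRingEnd ℂ) α ^ 2 := by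
    rw [mul_comm 2 h, pow_mul, ← hαn]; field_simp
  have hu1 : w / α ^ 2 = 1 ∨ w / α ^ 2 = -1 := by
    refine unit_div p l hp hl4 hl3 A hA _ ?_ (2 * h) ?_ ?_ ?_
    · have : w / α ^ 2 = w * ((starRingEnd ℂ) α * (starRingEnd ℂ) α) * (((p : ℚ) ^ (2 * h))⁻¹ : ℚ) := by
        rw [← sq, ← hu]; push_cast; field_simp
      rw [this]
      have hq := QF_conj l (QF_OK l c d)
      exact QF_mul l (QF_mul l hwQ (QF_mul l hq hq)) (QF_rat l _)
    · rw [hu]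
      exact hwi.mul ((conj_int hαi).pow 2)
    · rw [map_div₀, map_pow, hw1, hαv, ← pow_mul, mul_comm h 2]
      exact div_self (hvk _)
    · rw [map_div₀, map_pow, div_mul_div_comm, hwn, ← mul_pow, hαn, ← pow_mul, mul_comm h 2]
      exact div_self (hpk _)
  have hfin : ∀ δ : ℤ, w / α ^ 2 = δ → z = δ * (p : ℂ) ^ (e - h) * α ^ 2 := by
    intro δ hδ
    rw [hzw, ← hδ]; field_simp
  rcases hu1 with h | h
  · exact ⟨1, Or.inl rfl, hfin 1 (by rw [h]; simp)⟩
  · exact ⟨-1, Or.inr rfl, hfin (-1) (by rw [h]; simp)⟩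

theorem congr_pm (p l h : ℕ) [hlf : Fact l.Prime] (hl4 : l % 4 = 3) (hh : h % 2 = 1) (hlp : lam l p = 1) (a b : ℤ)
    (hab : 4 * (p : ℤ) ^ h = a ^ 2 + (l : ℤ) * b ^ 2) :
    a ≡ -2 * (p : ℤ) ^ ((l - 1 + 2 * h) / 4) [ZMOD (l : ℤ)] ∨ -a ≡ -2 * (p : ℤ) ^ ((l - 1 + 2 * h) / 4) [ZMOD (l : ℤ)] := by
  obtain ⟨e, he⟩ : ∃ e, l - 1 + 2 * h = 4 * e := ⟨(l - 1 + 2 * h) / 4, by omega⟩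
  have he' : (l - 1 + 2 * h) / 4 = e := by omega
  rw [he']
  have hl2 : ringChar (ZMod l) ≠ 2 := by rw [ZMod.ringChar_zmod_n]; rintro rfl; omega
  have hp1 : (p : ZMod l) ^ (l / 2) = 1 := by
    have := quadraticChar_eq_pow_of_char_ne_two' hl2 (p : ZMod l)
    rw [ZMod.card] at this
    rw [← this]
    have h2 : quadraticChar (ZMod l) (p : ZMod l) = 1 := hlp
    rw [h2]; simp
  have hp2 : (p : ZMod l) ^ h = ((p : ZMod l) ^ e) ^ 2 := by
    rw [← pow_mul, show e * 2 = l / 2 + h by omega, pow_add, hp1, one_mul]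
  have h1 := congrArg (Int.cast : ℤ → ZMod l) hab
  push_cast at h1
  rw [ZMod.natCast_self l, hp2, zero_mul, add_zero] at h1
  have h3 : ((a : ZMod l) - (-2 * (p : ZMod l) ^ e)) * (-(a : ZMod l) - (-2 * (p : ZMod l) ^ e)) = 0 := by
    linear_combination h1
  rw [← ZMod.intCast_eq_intCast_iff, ← ZMod.intCast_eq_intCast_iff]
  push_cast
  rcases mul_eq_zero.mp h3 with h | h
  · left; exact sub_eq_zero.mp h
  · right; exact sub_eq_zero.mp h

theorem sqrtNeg_val (l : ℕ) (B : ValuationSubring ℂ) (hB : B.valuation (l : ℂ) < 1) : B.valuation (sqrtNeg l) < 1 := by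
  by_contra hlt
  have h1 : 1 ≤ B.valuation (sqrtNeg l) := not_lt.mp hlt
  have h2 := congrArg B.valuation (sqrtNeg_sq l)
  rw [map_pow, Valuation.map_neg] at h2
  have := one_le_pow₀ h1 (n := 2)
  rw [h2] at this
  exact absurd hB (not_lt.mpr this)

theorem statement15 (p l r N f : ℕ) (hp : p.Prime) (hl : l.Prime) (hl4 : l % 4 = 3)
    (hl3 : 3 < l) (hr : 1 ≤ r) (hN : N = 4 * l ^ r) (hNp : Nat.gcd N p = 1)
    (hp4 : p % 4 = 3)
    (hord : orderOf (p : ZMod (l ^ r)) = Nat.totient (l ^ r) / 2)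
    (hf : orderOf (p : ZMod N) = f) (hind : f = Nat.totient N / 2)
    (F : Type) [Field F] [Fintype F] [Algebra (ZMod p) F]
    (hcard : Fintype.card F = p ^ f)
    (χ : MulChar F ℂ) (hχord : orderOf χ = N) :
    (l % 8 = 7 →
      gaussSumN p χ 1 = (-1 : ℂ) ^ ((p + 1) / 4) * (p : ℂ) ^ ((f : ℤ) / 2)) ∧
    (l % 8 = 3 →
      ∃ a b : ℤ,
        4 * (p : ℤ) ^ classNumSqrtNeg l = a ^ 2 + (l : ℤ) * b ^ 2 ∧
        a ≡ -2 * (p : ℤ) ^ ((l - 1 + 2 * classNumSqrtNeg l) / 4) [ZMOD (l : ℤ)] ∧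
        gaussSumN p χ 1 =
          (-1 : ℂ) ^ ((p + 1) / 4) *
            (p : ℂ) ^ ((f : ℤ) / 2 - (classNumSqrtNeg l : ℤ)) *
            (((a : ℂ) + (b : ℂ) * sqrtNeg l) / 2) ^ 2) := by
  haveI hpf : Fact p.Prime := ⟨hp⟩
  haveI hlf : Fact l.Prime := ⟨hl⟩
  subst hN
  obtain ⟨hlp, h2f, _, hf4, hdvd⟩ := arith_facts p l r hl4 hl3 hr hNp hp4 hord hf hind
  have hlr : 0 < l ^ r := pow_pos hl.pos r
  have hχN : χ ^ (4 * l ^ r) = 1 := by rw [← hχord]; exact pow_orderOf_eq_one χ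
  have htriv := chi_triv p hcard χ hχN hdvd
  have hχ1 : χ ≠ 1 := by
    intro h; rw [h, orderOf_one] at hχord; omega
  have hpN : Nat.Coprime p (4 * l ^ r) := Nat.Coprime.symm hNp
  have hlN : l ∣ 4 * l ^ r := Dvd.dvd.mul_left (dvd_pow_self l (by omega)) 4
  have hpl : ¬ p = l := by
    rintro rfl
    have := Nat.eq_one_of_dvd_coprimes hpN dvd_rfl hlN
    exact hp.one_lt.ne' this
  obtain ⟨a0, b0, hab0⟩ := gauss_in_OK p l hl4 (by omega) hlN hpN hlp hf h2f χ hχord hχ1 hcard htriv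
  have hgn := gauss_norm p χ hχ1
  have hzi : IsIntegral ℤ (gaussSum χ (trChar p F)) := gauss_integral χ
  have hGN : gaussSumN p χ 1 = gaussSum χ (trChar p F) := by rw [gaussSumN_eq, pow_one]
  obtain ⟨A, hA⟩ := exists_valSubring p hp
  obtain ⟨B, hB⟩ := exists_valSubring l hl
  obtain ⟨c, hc, hst⟩ := stickelberger hA hcard χ (4 * l ^ r) (by omega) hχord
  have hT := T_formula l hl4 r p f hr hpN hlp hf h2f c hc
  have hsign := sign_lemma p l r f hl (by omega) hpl B hB hp4 hf4 hcard χ hχord htriv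
  rw [hGN]
  set z := gaussSum χ (trChar p F) with hzdef
  have hzQ : QF l z := ⟨a0 / 2, b0 / 2, by rw [hab0]; push_cast; ring⟩
  obtain ⟨e, he⟩ : ∃ e, f = 2 * e := ⟨f / 2, by omega⟩
  have hfe : f / 2 = e := by omega
  have hfz : (f : ℤ) / 2 = (e : ℤ) := by omega
  rw [hfe] at hsign
  rw [hfz]
  have hp0 : (p : ℂ) ≠ 0 := by exact_mod_cast hp.ne_zero
  have hv0 : A.valuation (p : ℂ) ≠ 0 := (Valuation.ne_zero_iff _).mpr hp0
  have hzn : z * (starRingEnd ℂ) z = (p : ℂ) ^ (2 * e) := by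
    rw [hgn, hcard, he]; push_cast; rfl
  rw [lam_two l hl4] at hT
  have hNpos : (0 : ℤ) < ((4 * l ^ r : ℕ) : ℤ) := by exact_mod_cast (by omega : 0 < 4 * l ^ r)
  constructor
  · intro h7
    rw [if_pos h7] at hT
    have hs := hst e (by
      have : 2 * ((∑ i ∈ Finset.range f, p ^ i * c % (4 * l ^ r) : ℕ) : ℤ) = 2 * ((4 * l ^ r * e : ℕ) : ℤ) := by
        rw [hT, he]; push_cast; ring
      have h2 := mul_left_cancel₀ (two_ne_zero) this
      exact_mod_cast h2)
    have hu : z / (p : ℂ) ^ e = 1 ∨ z / (p : ℂ) ^ e = -1 := by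
      refine unit_div p l hp hl4 hl3 A hA _ ?_ e ?_ ?_ ?_
      · have : z / (p : ℂ) ^ e = z * (((p : ℚ) ^ e)⁻¹ : ℚ) := by push_cast; rfl
        rw [this]
        exact QF_mul l hzQ (QF_rat l _)
      · rw [mul_div_cancel₀ _ (pow_ne_zero e hp0)]; exact hzi
      · rw [map_div₀, hs, map_pow]; exact div_self (pow_ne_zero e hv0)
      · rw [map_div₀, map_pow, div_mul_div_comm, hzn, Complex.conj_natCast, ← pow_add, ← two_mul]
        exact div_self (pow_ne_zero _ hp0)
    obtain ⟨δ, hδ, hz⟩ : ∃ δ : ℤ, (δ = 1 ∨ δ = -1) ∧ z = δ * (p : ℂ) ^ e := by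
      have hpe := pow_ne_zero e hp0
      rcases hu with h | h
      · exact ⟨1, Or.inl rfl, by rw [div_eq_iff hpe] at h; rw [h]; simp⟩
      · exact ⟨-1, Or.inr rfl, by rw [div_eq_iff hpe] at h; rw [h]; simp⟩
    have hδ2 := hsign δ hδ (by rw [hz, sub_self, map_zero]; exact zero_lt_one)
    rw [hz, hδ2, zpow_natCast]
    push_cast
    rfl
  · intro h3
    rw [if_neg (by omega)] at hT
    set h := classNumSqrtNeg l with hh
    have hodd : h % 2 = 1 := class_odd l hl4 hl3
    have hM := M1_class l hl4 hl3
    rw [← hh] at hM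
    have hlc : ¬ l ∣ c := by
      intro h
      exact hl.one_lt.ne' (Nat.eq_one_of_dvd_coprimes hc h hlN)
    obtain ⟨ε, hε, hT2⟩ : ∃ ε : ℤ, (ε = 1 ∨ ε = -1) ∧
        ((∑ i ∈ Finset.range f, p ^ i * c % (4 * l ^ r) : ℕ) : ℤ) = ((4 * l ^ r : ℕ) : ℤ) * (e + ε * h) := by
      obtain ⟨ε, hε, hεe⟩ : ∃ ε : ℤ, (ε = 1 ∨ ε = -1) ∧ lam l c * M1 l = ε * (l * h) := by
        rcases lam_pm l hlc with h1 | h1 <;> rcases sq_eq_sq_iff_eq_or_eq_neg.mp hM with h2 | h2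
        · exact ⟨1, Or.inl rfl, by rw [h1, h2]⟩
        · exact ⟨-1, Or.inr rfl, by rw [h1, h2]; ring⟩
        · exact ⟨-1, Or.inr rfl, by rw [h1, h2]⟩
        · exact ⟨1, Or.inl rfl, by rw [h1, h2]; ring⟩
      refine ⟨ε, hε, ?_⟩
      obtain ⟨r', rfl⟩ : ∃ r', r = r' + 1 := ⟨r - 1, by omega⟩
      apply mul_left_cancel₀ (two_ne_zero (α := ℤ))
      rw [hT, he, Nat.add_sub_cancel]
      push_cast
      linear_combination (8 * (l : ℤ) ^ r') * hεe
    obtain ⟨c1, d1, hcd, δ, hδ, hz⟩ : ∃ c d : ℤ, Complex.normSq (c + d * thet l) = (p : ℝ) ^ h ∧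
      ∃ δ : ℤ, (δ = 1 ∨ δ = -1) ∧ z = δ * (p : ℂ) ^ (e - h) * (c + d * thet l) ^ 2 ∧ h ≤ e := by
      rcases hε with rfl | rfl
      · have hs := hst (e + h) (by
          have : ((∑ i ∈ Finset.range f, p ^ i * c % (4 * l ^ r) : ℕ) : ℤ) = ((4 * l ^ r * (e + h) : ℕ) : ℤ) := by
            rw [hT2]; push_cast; ring
          exact_mod_cast this)
        have hvn := congrArg A.valuation hzn
        rw [map_mul, hs, map_pow, mul_comm] at hvn
        have h5 := (val_pow_cancel A p hp0 hA _ _ _ (val_le_one_of_integral A (conj_int hzi)) hvn).1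
        obtain ⟨c1, d1, h6, δ, h7, h8⟩ := core3 p l hp hl4 hl3 A hA z hzQ hzi e h hh (by omega) hzn hs
        exact ⟨c1, d1, h6, δ, h7, h8, by omega⟩
      · have hhe : h ≤ e := by
          have h0 : (0 : ℤ) ≤ ((4 * l ^ r : ℕ) : ℤ) * (e + -1 * h) := by rw [← hT2]; positivity
          have := nonneg_of_mul_nonneg_right h0 hNpos
          omega
        have hs := hst (e - h) (by
          have : ((∑ i ∈ Finset.range f, p ^ i * c % (4 * l ^ r) : ℕ) : ℤ) = ((4 * l ^ r * (e - h) : ℕ) : ℤ) := by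
            rw [hT2]; push_cast [Nat.cast_sub hhe]; ring
          exact_mod_cast this)
        have hvn := congrArg A.valuation hzn
        rw [map_mul, hs, map_pow, mul_comm] at hvn
        have h5 := (val_pow_cancel A p hp0 hA _ _ _ (val_le_one_of_integral A (conj_int hzi)) hvn).2
        obtain ⟨c1, d1, h6, δ, h7, h8⟩ := core3 p l hp hl4 hl3 A hA ((starRingEnd ℂ) z) (QF_conj l hzQ) (conj_int hzi) e h hh
          hhe (by rw [Complex.conj_conj, mul_comm]; exact hzn) (by rw [h5]; congr 1; omega)
        have hconj : (starRingEnd ℂ) (c1 + d1 * thet l) = ((c1 + d1 : ℤ) : ℂ) + ((-d1 : ℤ) : ℂ) * thet l := by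
          have hc2 : (starRingEnd ℂ) 2 = 2 := Complex.conj_ofNat 2
          unfold thet
          simp [sqrtNeg_conj, hc2]
          ring
        refine ⟨c1 + d1, -d1, ?_, δ, h7, ?_, hhe⟩
        · rw [← hconj, Complex.normSq_conj]; exact h6
        · rw [← hconj, ← Complex.conj_conj z, h8]; simp
    obtain ⟨hz, hhe⟩ := hz
    have hform : (c1 + d1 * thet l : ℂ) = (((2 * c1 + d1 : ℤ) : ℂ) + (d1 : ℂ) * sqrtNeg l) / 2 := by
      unfold thet; push_cast; ring
    have hn4 : 4 * (p : ℤ) ^ h = (2 * c1 + d1) ^ 2 + (l : ℤ) * d1 ^ 2 := by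
      have := thet_normSq l c1 d1
      rw [hcd] at this
      exact_mod_cast this
    -- sign
    have hδ2 := hsign δ hδ (by
      set α : ℂ := c1 + d1 * thet l with hα
      have hαn : α * (starRingEnd ℂ) α = (p : ℂ) ^ h := by
        rw [Complex.mul_conj, hcd]; push_cast; rfl
      have hαs : α - (starRingEnd ℂ) α = d1 * sqrtNeg l := by
        rw [hform]
        have hc2 : (starRingEnd ℂ) 2 = 2 := Complex.conj_ofNat 2
        simp [sqrtNeg_conj, hc2]
        ring
      have e1 : z - δ * (p : ℂ) ^ e = (δ * (p : ℂ) ^ (e - h) * α * d1) * sqrtNeg l := by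
        have : (p : ℂ) ^ e = (p : ℂ) ^ (e - h) * (p : ℂ) ^ h := by rw [← pow_add]; congr 1; omega
        rw [this, ← hαn, hz]
        linear_combination (δ * (p : ℂ) ^ (e - h) * α) * hαs
      rw [e1, map_mul]
      have hint : ∀ a : ℤ, IsIntegral ℤ (a : ℂ) := fun a => by
        simpa using isIntegral_algebraMap (R := ℤ) (A := ℂ) (x := a)
      have hpi : IsIntegral ℤ (p : ℂ) := by exact_mod_cast hint p
      refine mul_lt_one_of_nonneg_of_lt_one_right ?_ zero_le (sqrtNeg_val l B hB)
      exact val_le_one_of_integral B ((((hint δ).mul (hpi.pow _)).mul (OK_int l hl4 c1 d1)).mul (hint d1)))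
    have hzp : (p : ℂ) ^ ((e : ℤ) - (h : ℤ)) = (p : ℂ) ^ (e - h) := by
      rw [← Nat.cast_sub hhe, zpow_natCast]
    have hδc : (δ : ℂ) = (-1) ^ ((p + 1) / 4) := by rw [hδ2]; push_cast; rfl
    rw [hzp, ← hδc]
    rw [hform] at hz
    rcases congr_pm p l h hl4 hodd hlp _ _ hn4 with h9 | h9
    · exact ⟨2 * c1 + d1, d1, hn4, h9, hz⟩
    · refine ⟨-(2 * c1 + d1), -d1, by rw [hn4]; ring, h9, ?_⟩
      rw [hz]; push_cast; ring
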